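/- Let B be a brace containing a conformal bisubdivision of K_{3,3}, and let C be a cycle of length four in B. Then there exists a perfect matching M of B such that C is M-conformal and there is an M-conformal bisubdivision L of K_{3,3} in B with V(C) ⊆ V(L). -/

import Mathlib

namespace Paper

open SimpleGraph

variable {V : Type*} {W : Type*}

/-- `M` is a perfect matching of the vertex set `S` in the graph `G`:
a set of pairwise disjoint edges of `G`, all within `S`, covering every vertex of `S`. -/
def IsPMOn (G : SimpleGraph V) (S : Set V) (M : Set (Sym2 V)) : Prop :=
  (∀ e ∈ M, e ∈ G.edgeSet) ∧ (∀ e ∈ M, ∀ v ∈ e, v ∈ S) ∧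
    ∀ v ∈ S, ∃! e, e ∈ M ∧ v ∈ e

/-- `M` is a perfect matching of `G`. -/
def IsPM (G : SimpleGraph V) (M : Set (Sym2 V)) : Prop :=
  IsPMOn G Set.univ M

/-- The edges in `F` are pairwise vertex-disjoint. -/
def PairwiseDisjointEdges (F : Set (Sym2 V)) : Prop :=
  ∀ e ∈ F, ∀ f ∈ F, e ≠ f → ∀ x : V, x ∈ e → x ∉ f

/-- All edges of `G` have both endpoints in `S`. -/
def EdgesWithin (G : SimpleGraph V) (S : Set V) : Prop :=
  ∀ ⦃x y : V⦄, G.Adj x y → x ∈ S ∧ y ∈ S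

def ConnectedOn (G : SimpleGraph V) (S : Set V) : Prop :=
  S.Nonempty ∧ ∀ x ∈ S, ∀ y ∈ S, G.Reachable x y

/-- The graph `G` with vertex set `S` is a brace: it is connected and every matching of
size at most two extends to a perfect matching. -/
def IsBraceOn (G : SimpleGraph V) (S : Set V) : Prop :=
  EdgesWithin G S ∧ ConnectedOn G S ∧
    ∀ F : Set (Sym2 V), F ⊆ G.edgeSet → PairwiseDisjointEdges F → F.ncard ≤ 2 →
      ∃ M, IsPMOn G S M ∧ F ⊆ M

def IsBrace (G : SimpleGraph V) : Prop :=
  IsBraceOn G Set.univ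

def IsBipartitionOf (G : SimpleGraph V) (V1 V2 : Set V) : Prop :=
  Disjoint V1 V2 ∧ V1 ∪ V2 = Set.univ ∧ ∀ ⦃x y : V⦄, G.Adj x y → (x ∈ V1 ↔ y ∈ V2)

def IsBipartite (G : SimpleGraph V) : Prop :=
  ∃ V1 V2 : Set V, IsBipartitionOf G V1 V2

def MatchingCoveredOn (G : SimpleGraph V) (S : Set V) : Prop :=
  EdgesWithin G S ∧ ConnectedOn G S ∧ ∀ e ∈ G.edgeSet, ∃ M, IsPMOn G S M ∧ e ∈ M

def MatchingCovered (G : SimpleGraph V) : Prop :=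
  MatchingCoveredOn G Set.univ

/-- Every vertex of `A` is covered exactly once by an edge of `M ∩ Es`;
i.e. `M ∩ Es` is a perfect matching of the subgraph with vertex set `A` and edge set `Es`. -/
def MatchesExactly (M Es : Set (Sym2 V)) (A : Set V) : Prop :=
  ∀ v ∈ A, ∃! e, e ∈ M ∧ e ∈ Es ∧ v ∈ e

/-- `M` restricted to the edges of `P` with both endpoints in `A` is a
perfect matching of `A`; i.e. `M ∩ E(P ∩ A)` is a perfect matching of `P ∩ A`. -/
def WalkMConfOn (G : SimpleGraph V) (M : Set (Sym2 V)) {u v : V} (P : G.Walk u v)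
    (A : Set V) : Prop :=
  ∀ x ∈ A, ∃! e : Sym2 V, e ∈ M ∧ e ∈ P.edges ∧ (∀ y ∈ e, y ∈ A) ∧ x ∈ e

/-- The path `P` is `M`-conformal: `M ∩ E(P)` is a perfect matching of `P`. -/
def MConformalWalk (G : SimpleGraph V) (M : Set (Sym2 V)) {u v : V} (P : G.Walk u v) : Prop :=
  WalkMConfOn G M P {x | x ∈ P.support}

/-- The path `P` is internally `M`-conformal: removing both endpoints leaves
an `M`-conformal path. -/
def InternallyMConformal (G : SimpleGraph V) (M : Set (Sym2 V)) {u v : V}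
    (P : G.Walk u v) : Prop :=
  WalkMConfOn G M P {x | x ∈ P.support ∧ x ≠ u ∧ x ≠ v}

/-- The path `P` is `M`-alternating: there is a set `S` of endpoints of `P`
such that `P − S` is `M`-conformal. -/
def MAlternating (G : SimpleGraph V) (M : Set (Sym2 V)) {u v : V} (P : G.Walk u v) : Prop :=
  ∃ S ⊆ ({u, v} : Set V), WalkMConfOn G M P {x | x ∈ P.support ∧ x ∉ S}

/-- The cycle `C` is `M`-conformal: `M ∩ E(C)` is a perfect matching of `C`. -/
def MConformalCycle (G : SimpleGraph V) (M : Set (Sym2 V)) {c : V} (C : G.Walk c c) : Prop :=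
  ∀ x ∈ C.support, ∃! e, e ∈ M ∧ e ∈ C.edges ∧ x ∈ e

/-- The cycle `C` is conformal in the graph `G` with vertex set `S`:
`G − V(C)` has a perfect matching. -/
def ConformalCycleOn (G : SimpleGraph V) (S : Set V) {c : V} (C : G.Walk c c) : Prop :=
  ∃ M, IsPMOn G (S \ {x | x ∈ C.support}) M

def ConformalCycle (G : SimpleGraph V) {c : V} (C : G.Walk c c) : Prop :=
  ConformalCycleOn G Set.univ C

/-- The four vertices appear on the cycle `C` in the listed cyclic order. -/
def InCyclicOrder (G : SimpleGraph V) {c : V} (C : G.Walk c c) (s1 s2 t1 t2 : V) : Prop :=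
  ∃ n : ℕ, List.Sublist [s1, s2, t1, t2] (C.support.tail.rotate n) ∨
    List.Sublist [s1, s2, t1, t2] (C.support.tail.reverse.rotate n)

/-- The paths `P1` (from `s1` to `t1`) and `P2` (from `s2` to `t2`) form a matching
cross over the cycle `C` with respect to the perfect matching `M` of `(G, S)`. -/
def IsMatchingCrossOn (G : SimpleGraph V) (S : Set V) {c s1 t1 s2 t2 : V}
    (C : G.Walk c c) (M : Set (Sym2 V)) (P1 : G.Walk s1 t1) (P2 : G.Walk s2 t2) : Prop :=
  IsPMOn G S M ∧ [s1, s2, t1, t2].Nodup ∧ InCyclicOrder G C s1 s2 t1 t2 ∧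
    P1.IsPath ∧ P2.IsPath ∧ MAlternating G M P1 ∧ MAlternating G M P2 ∧
    (∀ x : V, x ∈ P1.support → x ∉ P2.support) ∧
    (∀ x ∈ P1.support, x ≠ s1 → x ≠ t1 → x ∉ C.support) ∧
    (∀ x ∈ P2.support, x ≠ s2 → x ≠ t2 → x ∉ C.support)

def HasMatchingCrossOn (G : SimpleGraph V) (S : Set V) {c : V} (C : G.Walk c c) : Prop :=
  ∃ (M : Set (Sym2 V)) (s1 t1 s2 t2 : V) (P1 : G.Walk s1 t1) (P2 : G.Walk s2 t2),
    IsMatchingCrossOn G S C M P1 P2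

def HasMatchingCross (G : SimpleGraph V) {c : V} (C : G.Walk c c) : Prop :=
  HasMatchingCrossOn G Set.univ C

/-- `C + P1 + P2` is a conformal subgraph of `(G, S)`. -/
def CrossConformalOn (G : SimpleGraph V) (S : Set V) {c s1 t1 s2 t2 : V}
    (C : G.Walk c c) (P1 : G.Walk s1 t1) (P2 : G.Walk s2 t2) : Prop :=
  ∃ N, IsPMOn G S N ∧
    MatchesExactly N
      ({f | f ∈ C.edges} ∪ {f | f ∈ P1.edges} ∪ {f | f ∈ P2.edges})
      ({x | x ∈ C.support} ∪ {x | x ∈ P1.support} ∪ {x | x ∈ P2.support})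

/-- There is a conformal cross over the cycle `C` in `G`. -/
def HasConformalCross (G : SimpleGraph V) {c : V} (C : G.Walk c c) : Prop :=
  ∃ (M : Set (Sym2 V)) (s1 t1 s2 t2 : V) (P1 : G.Walk s1 t1) (P2 : G.Walk s2 t2),
    IsMatchingCrossOn G Set.univ C M P1 P2 ∧ CrossConformalOn G Set.univ C P1 P2

/-- A bisubdivision of the graph `H` inside the graph `G`: every edge of `H` is replaced
by a path of odd length (i.e., subdivided an even number of times), and those paths
pairwise meet only in branch vertices. -/
structure Bisubdivision (H : SimpleGraph W) (G : SimpleGraph V) where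
  bv : W → V
  bv_inj : Function.Injective bv
  link : ∀ ⦃x y : W⦄, H.Adj x y → G.Walk (bv x) (bv y)
  link_isPath : ∀ ⦃x y : W⦄ (h : H.Adj x y), (link h).IsPath
  link_odd : ∀ ⦃x y : W⦄ (h : H.Adj x y), Odd (link h).length
  link_symm : ∀ ⦃x y : W⦄ (h : H.Adj x y), link h.symm = (link h).reverse
  link_branch : ∀ ⦃x y : W⦄ (h : H.Adj x y) (z : W), bv z ∈ (link h).support → z = x ∨ z = y
  link_meet : ∀ ⦃x y x' y' : W⦄ (h : H.Adj x y) (h' : H.Adj x' y'), s(x, y) ≠ s(x', y') →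
    ∀ v : V, v ∈ (link h).support → v ∈ (link h').support →
      (v = bv x ∨ v = bv y) ∧ (v = bv x' ∨ v = bv y')

def Bisubdivision.verts {H : SimpleGraph W} {G : SimpleGraph V}
    (L : Bisubdivision H G) : Set V :=
  {v | ∃ (x y : W) (h : H.Adj x y), v ∈ (L.link h).support}

def Bisubdivision.edgeSet {H : SimpleGraph W} {G : SimpleGraph V}
    (L : Bisubdivision H G) : Set (Sym2 V) :=
  {e | ∃ (x y : W) (h : H.Adj x y), e ∈ (L.link h).edges}

/-- The bisubdivision `L` is an `M`-conformal subgraph of `G`. -/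
def Bisubdivision.MConformal {H : SimpleGraph W} {G : SimpleGraph V}
    (L : Bisubdivision H G) (M : Set (Sym2 V)) : Prop :=
  MatchesExactly M L.edgeSet L.verts

/-- The bisubdivision `L` is a conformal subgraph of `(G, S)`. -/
def Bisubdivision.ConformalOn {H : SimpleGraph W} {G : SimpleGraph V}
    (L : Bisubdivision H G) (S : Set V) : Prop :=
  ∃ M, IsPMOn G S M ∧ L.MConformal M

abbrev K33 : SimpleGraph (Fin 3 ⊕ Fin 3) := completeBipartiteGraph (Fin 3) (Fin 3)

/-- `G` contains a conformal bisubdivision of `K_{3,3}`. -/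
def ContainsK33 (G : SimpleGraph V) : Prop :=
  ∃ L : Bisubdivision K33 G, L.ConformalOn Set.univ

def K33Free (G : SimpleGraph V) : Prop :=
  ¬ ContainsK33 G

def C4verts (a1 b1 a2 b2 : V) : Set V := {a1, b1, a2, b2}

def C4edges (a1 b1 a2 b2 : V) : Set (Sym2 V) := {s(a1, b1), s(b1, a2), s(a2, b2), s(b2, a1)}

/-- `a1 b1 a2 b2` is a cycle of length four in `G`. -/
def IsC4In (G : SimpleGraph V) (a1 b1 a2 b2 : V) : Prop :=
  [a1, b1, a2, b2].Nodup ∧ G.Adj a1 b1 ∧ G.Adj b1 a2 ∧ G.Adj a2 b2 ∧ G.Adj b2 a1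

/-- `B` is a 4-cycle sum of the graphs `Bi i` (with vertex sets `Si i`)
at the common conformal 4-cycle `a1 b1 a2 b2`. -/
def IsFourCycleSum {ℓ : ℕ} (B : SimpleGraph V) (Bi : Fin ℓ → SimpleGraph V)
    (Si : Fin ℓ → Set V) (a1 b1 a2 b2 : V) : Prop :=
  (∀ i, EdgesWithin (Bi i) (Si i)) ∧
  (∀ i, IsC4In (Bi i) a1 b1 a2 b2) ∧
  (∀ i, ∃ M, IsPMOn (Bi i) (Si i \ C4verts a1 b1 a2 b2) M) ∧
  (∀ i j, i ≠ j → Si i ∩ Si j = C4verts a1 b1 a2 b2) ∧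
  (⋃ i, Si i) = Set.univ ∧
  ∃ D ⊆ C4edges a1 b1 a2 b2, B.edgeSet = (⋃ i, (Bi i).edgeSet) \ D

/-- `B` is a maximal 4-cycle sum of the braces `Bi i` at the 4-cycle `a1 b1 a2 b2`. -/
def IsMaxFourCycleSumOfBraces {ℓ : ℕ} (B : SimpleGraph V) (Bi : Fin ℓ → SimpleGraph V)
    (Si : Fin ℓ → Set V) (a1 b1 a2 b2 : V) : Prop :=
  IsFourCycleSum B Bi Si a1 b1 a2 b2 ∧ (∀ i, IsBraceOn (Bi i) (Si i)) ∧
    ¬ ∃ ℓ' : ℕ, ℓ < ℓ' ∧ ∃ (Hi : Fin ℓ' → SimpleGraph V) (Ti : Fin ℓ' → Set V),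
      IsFourCycleSum B Hi Ti a1 b1 a2 b2 ∧ ∀ i, IsBraceOn (Hi i) (Ti i)

/-- `∂(X)`: the set of edges of `G` with exactly one endpoint in `X`. -/
def edgeCut (G : SimpleGraph V) (X : Set V) : Set (Sym2 V) :=
  {e | e ∈ G.edgeSet ∧ ∃ x y : V, e = s(x, y) ∧ x ∈ X ∧ y ∉ X}

/-- `∂(X)` is a tight cut of the graph `G` with vertex set `S`. -/
def IsTightCutOn (G : SimpleGraph V) (S X : Set V) : Prop :=
  ∀ M, IsPMOn G S M → (edgeCut G X ∩ M).ncard = 1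

def IsTightCut (G : SimpleGraph V) (X : Set V) : Prop :=
  IsTightCutOn G Set.univ X

/-- The minority of `X` with respect to the colour classes `V1`, `V2`. -/
noncomputable def minority (V1 V2 X : Set V) : Set V :=
  if (X ∩ V1).ncard < (X ∩ V2).ncard then X ∩ V1 else X ∩ V2

/-- `P1` and `P2` are `M`-alternating paths of the same type. -/
def SameType (G : SimpleGraph V) (M : Set (Sym2 V)) {s1 t1 s2 t2 : V}
    (P1 : G.Walk s1 t1) (P2 : G.Walk s2 t2) : Prop :=
  (InternallyMConformal G M P1 ∧ InternallyMConformal G M P2) ∨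
  (MConformalWalk G M P1 ∧ MConformalWalk G M P2) ∨
  ((¬ InternallyMConformal G M P1 ∧ ¬ MConformalWalk G M P1) ∧
    (¬ InternallyMConformal G M P2 ∧ ¬ MConformalWalk G M P2))

/-- There is a strong matching cross over `C` in `(G, S)` w.r.t. colour classes `V1, V2`. -/
def HasStrongMatchingCrossOn (G : SimpleGraph V) (S V1 V2 : Set V) {c : V}
    (C : G.Walk c c) : Prop :=
  ∃ (M : Set (Sym2 V)) (s1 t1 s2 t2 : V) (P1 : G.Walk s1 t1) (P2 : G.Walk s2 t2),
    IsMatchingCrossOn G S C M P1 P2 ∧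
    (V1 ∩ {s1, s2, t1, t2}).ncard = (V2 ∩ {s1, s2, t1, t2}).ncard ∧
    SameType G M P1 P2

/-- `s1 s2 t1 t2` appear in this cyclic order on the 4-cycle `a1 b1 a2 b2`. -/
def CyclicOrderC4 (a1 b1 a2 b2 s1 s2 t1 t2 : V) : Prop :=
  ∃ n : ℕ, [s1, s2, t1, t2] = [a1, b1, a2, b2].rotate n ∨
    [s1, s2, t1, t2] = [b2, a2, b1, a1].rotate n

/-- `P1, P2` form a matching cross over the 4-cycle `a1 b1 a2 b2` w.r.t. `M`. -/
def IsCrossOverC4 (G : SimpleGraph V) (M : Set (Sym2 V)) (a1 b1 a2 b2 : V)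
    {s1 t1 s2 t2 : V} (P1 : G.Walk s1 t1) (P2 : G.Walk s2 t2) : Prop :=
  [s1, s2, t1, t2].Nodup ∧ CyclicOrderC4 a1 b1 a2 b2 s1 s2 t1 t2 ∧
    P1.IsPath ∧ P2.IsPath ∧ MAlternating G M P1 ∧ MAlternating G M P2 ∧
    (∀ z : V, z ∈ P1.support → z ∉ P2.support) ∧
    (∀ z ∈ P1.support, z ≠ s1 → z ≠ t1 → z ∉ C4verts a1 b1 a2 b2) ∧
    (∀ z ∈ P2.support, z ≠ s2 → z ≠ t2 → z ∉ C4verts a1 b1 a2 b2)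

/-- The Heawood graph on `ZMod 14`. -/
def heawood : SimpleGraph (ZMod 14) :=
  SimpleGraph.fromRel fun i j => j = i + 1 ∨ (Even i.val ∧ j = i + 5)

/-- The Rotunda: three cubes glued along a common 4-cycle whose edges are then deleted. -/
def rotunda : SimpleGraph (Fin 4 ⊕ Fin 3 × Fin 4) :=
  SimpleGraph.fromRel fun x y =>
    match x, y with
    | Sum.inl j, Sum.inr p => j = p.2
    | Sum.inr p, Sum.inr q => p.1 = q.1 ∧ q.2 = p.2 + 1
    | _, _ => False

/-- `F` is an `S`-cover in `G`. -/
def IsSCover (G : SimpleGraph V) (S : Set V) (F : Set (Sym2 V)) : Prop :=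
  F ⊆ G.edgeSet ∧ (∀ e ∈ F, ∃ v ∈ S, v ∈ e) ∧ ∀ v ∈ S, ∃ e ∈ F, v ∈ e

/-- `F` is contained in some perfect matching of `G`. -/
def Extendible (G : SimpleGraph V) (F : Set (Sym2 V)) : Prop :=
  ∃ M, IsPM G M ∧ F ⊆ M

/-- `(G, S)` is an `F`-instance of 2-MLP for `(a1, a2)` and `(b1, b2)`. -/
def TwoMLPInstanceOn (G : SimpleGraph V) (S : Set V) (a1 a2 b1 b2 : V)
    (F : Set (Sym2 V)) : Prop :=
  ∃ M, IsPMOn G S M ∧ F ⊆ M ∧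
    ∃ (P1 : G.Walk a1 b1) (P2 : G.Walk a2 b2), P1.IsPath ∧ P2.IsPath ∧
      InternallyMConformal G M P1 ∧ InternallyMConformal G M P2 ∧
      ∀ x : V, x ∈ P1.support → x ∉ P2.support

/-- `B − u − v + pq`: delete the vertices `u, v` and add the edge `pq`. -/
def deleteAdd (B : SimpleGraph V) (u v p q : V) : SimpleGraph V :=
  SimpleGraph.fromRel fun x y =>
    (B.Adj x y ∨ (x = p ∧ y = q)) ∧ x ≠ u ∧ x ≠ v ∧ y ≠ u ∧ y ≠ v

/-- `B` plus two new vertices `x = Sum.inr 0` and `y = Sum.inr 1` together with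
the edges `xy, x b1, x b2, y a1, y a2`. -/
def plusXY (B : SimpleGraph V) (a1 a2 b1 b2 : V) : SimpleGraph (V ⊕ Fin 2) :=
  SimpleGraph.fromRel fun p q =>
    (∃ a b : V, p = Sum.inl a ∧ q = Sum.inl b ∧ B.Adj a b) ∨
    (p = Sum.inr 0 ∧ q = Sum.inr 1) ∨
    (p = Sum.inr 0 ∧ (q = Sum.inl b1 ∨ q = Sum.inl b2)) ∨
    (p = Sum.inr 1 ∧ (q = Sum.inl a1 ∨ q = Sum.inl a2))

/-- The endpoints `q1, q2` (on the 4-cycle) belong to the same colour class. -/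
def PrecrossDaring (V1 V2 : Set V) (q1 q2 : V) : Prop :=
  (q1 ∈ V1 ∧ q2 ∈ V1) ∨ (q1 ∈ V2 ∧ q2 ∈ V2)

/-- `(P1, P2, Q, M)` is a diffuse `C'`-`M`-precross through the 4-cycle `a1 b1 a2 b2`
in the graph `G` with vertex set `S` and colour classes `V1, V2`. -/
def DiffusePrecross (G : SimpleGraph V) (S V1 V2 : Set V) (a1 b1 a2 b2 : V)
    {c p1 q1 p2 q2 x1 x2 : V} (C' : G.Walk c c) (M : Set (Sym2 V))
    (P1 : G.Walk p1 q1) (P2 : G.Walk p2 q2) (Q : G.Walk x1 x2) : Prop :=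
  IsPMOn G S M ∧ P1.IsPath ∧ P2.IsPath ∧ Q.IsPath ∧
  MAlternating G M P1 ∧ MAlternating G M P2 ∧ MAlternating G M Q ∧
  (∀ z : V, z ∈ P1.support → z ∉ P2.support) ∧
  (∀ z : V, z ∈ P1.support → z ∉ Q.support) ∧
  (∀ z : V, z ∈ P2.support → z ∉ Q.support) ∧
  (∀ z ∈ P1.support, z ≠ p1 → z ≠ q1 → z ∉ C'.support) ∧
  (∀ z ∈ P2.support, z ≠ p2 → z ≠ q2 → z ∉ C'.support) ∧
  (∀ z ∈ Q.support, z ≠ x1 → z ≠ x2 → z ∉ C'.support) ∧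
  x1 ∈ C'.support ∧ x2 ∈ C'.support ∧
  p1 ∈ C'.support ∧ q1 ∈ C4verts a1 b1 a2 b2 ∧
  p2 ∈ C'.support ∧ q2 ∈ C4verts a1 b1 a2 b2 ∧
  (∀ Wk : G.Walk p1 p2, (∀ e ∈ Wk.edges, e ∈ C'.edges) → ∃ z ∈ Wk.support, z ∈ Q.support) ∧
  (∀ U ∈ ({V1, V2} : Set (Set V)), (q1 ∈ U ∨ q2 ∈ U) →
    ∃ q : V, (q = q1 ∨ q = q2) ∧ q ∈ U ∧ ∃ e ∈ M, e ∈ C4edges a1 b1 a2 b2 ∧ q ∈ e)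

/-- A daring diffuse precross is successful. -/
def PrecrossSuccessful (G : SimpleGraph V) (V1 V2 : Set V) (M : Set (Sym2 V))
    {p1 q1 p2 q2 : V} (P1 : G.Walk p1 q1) (P2 : G.Walk p2 q2) : Prop :=
  PrecrossDaring V1 V2 q1 q2 ∧
  ((InternallyMConformal G M P1 ∧ MConformalWalk G M P2) ∨
   (InternallyMConformal G M P2 ∧ MConformalWalk G M P1) ∨
   (Even P1.length ∧ Even P2.length ∧
     ((∃ e ∈ M, e ∈ P1.edges ∧ p1 ∈ e) ↔ ¬ ∃ e ∈ M, e ∈ P2.edges ∧ p2 ∈ e)))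

section Lists
set_option linter.unusedSectionVars false
variable {V : Type*} [DecidableEq V]

def EvPos : List V → V → V → Prop
  | x :: y :: l, a, b => (a = x ∧ b = y) ∨ EvPos l a b
  | _, _, _ => False

def mate : List V → V → V
  | x :: y :: l, v => if v = x then y else if v = y then x else mate l v
  | _, v => v

def nm (m : V → V) : List V → ℕ
  | x :: y :: l => (if m x = y then 0 else 1) + nm m (y :: l)
  | _ => 0

def ne (m : V → V) : List V → ℕ
  | x :: y :: l => (if m x = y then 0 else 1) + ne m l
  | _ => 0

theorem evenRec {P : List V → Prop} (h0 : P []) (h2 : ∀ x y l, Even l.length → P l → P (x :: y :: l)) :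
    ∀ l : List V, Even l.length → P l
  | [], _ => h0
  | [x], h => by simp at h
  | x :: y :: l, h => by
    have h' : Even l.length := by simpa [Nat.even_add_one] using h
    exact h2 x y l h' (evenRec h0 h2 l h')

@[simp] theorem evPos_nil (a b : V) : EvPos [] a b ↔ False := Iff.rfl
@[simp] theorem evPos_one (x a b : V) : EvPos [x] a b ↔ False := Iff.rfl
@[simp] theorem evPos_cons (x y : V) (l) (a b : V) :
    EvPos (x :: y :: l) a b ↔ (a = x ∧ b = y) ∨ EvPos l a b := Iff.rfl

theorem evPos_append {l1 : List V} (h : Even l1.length) (l2 : List V) (a b : V) :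
    EvPos (l1 ++ l2) a b ↔ EvPos l1 a b ∨ EvPos l2 a b := by
  revert h; revert l1
  apply evenRec
  · simp
  · intro x y l _ ih; simp [ih, or_assoc]

theorem evPos_split : ∀ {l : List V} {a b : V}, EvPos l a b →
    ∃ l1 l2, Even l1.length ∧ l = l1 ++ a :: b :: l2
  | [], _, _, h => h.elim
  | [_], _, _, h => h.elim
  | x :: y :: l, a, b, h => by
    rcases h with ⟨rfl, rfl⟩ | h
    · exact ⟨[], l, by simp, rfl⟩
    · obtain ⟨l1, l2, h1, rfl⟩ := evPos_split h
      exact ⟨x :: y :: l1, l2, by simpa [Nat.even_add_one] using h1, rfl⟩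

theorem evPos_iff {l : List V} {a b : V} : EvPos l a b ↔
    ∃ l1 l2, Even l1.length ∧ l = l1 ++ a :: b :: l2 := by
  refine ⟨evPos_split, ?_⟩
  rintro ⟨l1, l2, h, rfl⟩
  rw [evPos_append h]; simp

theorem evPos_mid {l1 l2 : List V} {a b : V} (h : Even l1.length) : EvPos (l1 ++ a :: b :: l2) a b :=
  evPos_iff.2 ⟨l1, l2, h, rfl⟩

theorem evPos_reverse {l : List V} (h : Even l.length) {a b : V} :
    EvPos l.reverse a b ↔ EvPos l b a := by
  have key : ∀ (l : List V), Even l.length → ∀ a b, EvPos l b a → EvPos l.reverse a b := by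
    intro l h a b hh
    obtain ⟨l1, l2, h1, rfl⟩ := evPos_split hh
    have : (l1 ++ b :: a :: l2).reverse = l2.reverse ++ a :: b :: l1.reverse := by simp
    rw [this]
    apply evPos_mid
    simp only [List.length_append, List.length_cons] at h
    simp only [List.length_reverse]
    grind
  refine ⟨fun hh => ?_, key l h a b⟩
  have := key l.reverse (by simpa using h) b a hh
  simpa using this

theorem evPos_mem {l : List V} {a b : V} (h : EvPos l a b) : a ∈ l ∧ b ∈ l := by
  obtain ⟨l1, l2, _, rfl⟩ := evPos_split h
  simp

theorem evPos_infix {l : List V} {a b : V} (h : EvPos l a b) : [a, b] <:+: l := by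
  obtain ⟨l1, l2, _, rfl⟩ := evPos_split h
  exact ⟨l1, l2, by simp⟩

/-- symmetric version -/
def Pr (l : List V) (a b : V) : Prop := EvPos l a b ∨ EvPos l b a

theorem Pr.symm {l : List V} {a b : V} (h : Pr l a b) : Pr l b a := Or.symm h

theorem pr_append {l1 : List V} (h : Even l1.length) (l2 : List V) (a b : V) :
    Pr (l1 ++ l2) a b ↔ Pr l1 a b ∨ Pr l2 a b := by
  unfold Pr; rw [evPos_append h, evPos_append h]; tauto

theorem pr_reverse {l : List V} (h : Even l.length) {a b : V} :
    Pr l.reverse a b ↔ Pr l a b := by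
  unfold Pr; rw [evPos_reverse h, evPos_reverse h]; tauto

theorem pr_mem {l : List V} {a b : V} (h : Pr l a b) : a ∈ l ∧ b ∈ l := by
  rcases h with h | h
  · exact evPos_mem h
  · exact (evPos_mem h).symm

theorem mate_notMem : ∀ {l : List V} {v : V}, v ∉ l → mate l v = v
  | [], _, _ => rfl
  | [_], _, _ => rfl
  | x :: y :: l, v, h => by
    simp only [List.mem_cons, not_or] at h
    simp [mate, h.1, h.2.1, mate_notMem h.2.2]

theorem mate_evPos : ∀ {l : List V} (_ : l.Nodup) {a b : V}, EvPos l a b → mate l a = b ∧ mate l b = a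
  | [], _, _, _, h => h.elim
  | [_], _, _, _, h => h.elim
  | x :: y :: l, hn, a, b, h => by
    simp only [List.nodup_cons, List.mem_cons, not_or] at hn
    obtain ⟨⟨h1, h2⟩, h3, h4⟩ := hn
    rcases h with ⟨rfl, rfl⟩ | h
    · simp [mate, Ne.symm h1]
    · have hm := evPos_mem h
      have hax : a ≠ x := by rintro rfl; exact h2 hm.1
      have hay : a ≠ y := by rintro rfl; exact h3 hm.1
      have hbx : b ≠ x := by rintro rfl; exact h2 hm.2
      have hby : b ≠ y := by rintro rfl; exact h3 hm.2
      simp [mate, hax, hay, hbx, hby, mate_evPos h4 h]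

theorem mate_pr {l : List V} (hn : l.Nodup) {a b : V} (h : Pr l a b) : mate l a = b := by
  rcases h with h | h
  · exact (mate_evPos hn h).1
  · exact (mate_evPos hn h).2

theorem exists_pr {l : List V} (h : Even l.length) {v : V} (hv : v ∈ l) : ∃ w, Pr l v w := by
  revert h hv; revert l
  intro l h
  revert h; revert l
  apply evenRec
  · simp
  · intro x y l _ ih hv
    simp only [List.mem_cons] at hv
    rcases hv with rfl | rfl | hv
    · exact ⟨y, Or.inl (Or.inl ⟨rfl, rfl⟩)⟩
    · exact ⟨x, Or.inr (Or.inl ⟨rfl, rfl⟩)⟩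
    · obtain ⟨w, hw⟩ := ih hv
      exact ⟨w, hw.imp Or.inr Or.inr⟩

theorem pr_mate {l : List V} (hn : l.Nodup) (h : Even l.length) {v : V} (hv : v ∈ l) :
    Pr l v (mate l v) := by
  obtain ⟨w, hw⟩ := exists_pr h hv
  rw [mate_pr hn hw]; exact hw

theorem pr_adj {G : SimpleGraph V} {l : List V} (hc : l.IsChain G.Adj) {a b : V} (h : Pr l a b) :
    G.Adj a b := by
  have key : ∀ {a b : V}, EvPos l a b → G.Adj a b := by
    intro a b h
    obtain ⟨l1, l2, _, rfl⟩ := evPos_split h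
    rw [List.isChain_append_cons_cons] at hc
    exact hc.2.1
  rcases h with h | h
  · exact key h
  · exact (key h).symm

@[simp] theorem nm_nil (m : V → V) : nm m [] = 0 := rfl
@[simp] theorem nm_one (m : V → V) (x) : nm m [x] = 0 := rfl
theorem nm_cons (m : V → V) (x y l) : nm m (x :: y :: l) = (if m x = y then 0 else 1) + nm m (y :: l) := rfl
@[simp] theorem ne_nil (m : V → V) : ne m [] = 0 := rfl
@[simp] theorem ne_one (m : V → V) (x) : ne m [x] = 0 := rfl
theorem ne_cons (m : V → V) (x y l) : ne m (x :: y :: l) = (if m x = y then 0 else 1) + ne m l := rfl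

theorem nm_append (m : V → V) : ∀ (l1 : List V) (x : V) (l2 : List V),
    nm m (l1 ++ x :: l2) = nm m (l1 ++ [x]) + nm m (x :: l2)
  | [], x, l2 => by simp
  | [y], x, l2 => by simp [nm_cons]
  | y :: z :: l1, x, l2 => by
    have := nm_append m (z :: l1) x l2
    simp only [List.cons_append] at this ⊢
    rw [nm_cons, nm_cons, this]; ring

theorem nm_reverse {m : V → V} (hm : ∀ v, m (m v) = v) : ∀ l : List V, nm m l.reverse = nm m l
  | [] => rfl
  | [_] => rfl
  | x :: y :: l => by
    have ih := nm_reverse hm (y :: l)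
    have e : (x :: y :: l).reverse = l.reverse ++ y :: [x] := by simp
    have e2 : (y :: l).reverse = l.reverse ++ [y] := by simp
    rw [e, nm_append, ← e2, ih, nm_cons, nm_cons]
    have : m y = x ↔ m x = y := ⟨fun h => by rw [← h, hm], fun h => by rw [← h, hm]⟩
    simp [this, add_comm]

theorem ne_append (m : V → V) {l1 : List V} (h : Even l1.length) (l2 : List V) :
    ne m (l1 ++ l2) = ne m l1 + ne m l2 := by
  revert h; revert l1
  apply evenRec
  · simp
  · intro x y l _ ih; simp [ne_cons, ih, add_assoc]

theorem nm_eq_ne (m : V → V) {l : List V} (h : Even l.length) : ∀ (x y : V),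
    nm m (x :: (l ++ [y])) = ne m (x :: (l ++ [y])) + ne m l := by
  revert h; revert l
  apply evenRec
  · intro x y; simp [nm_cons, ne_cons]
  · intro x y l _ ih a b
    have := ih y b
    simp only [List.cons_append, nm_cons, ne_cons] at this ⊢
    rw [this]; ring

theorem ne_eq_zero (m : V → V) : ∀ {l : List V}, ne m l = 0 ↔ ∀ a b, EvPos l a b → m a = b
  | [] => by simp
  | [_] => by simp
  | x :: y :: l => by
    rw [ne_cons, Nat.add_eq_zero_iff, ne_eq_zero m]
    constructor
    · rintro ⟨h1, h2⟩ a b (⟨rfl, rfl⟩ | h)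
      · by_contra hh; simp [hh] at h1
      · exact h2 a b h
    · intro h
      exact ⟨by simp [h x y (Or.inl ⟨rfl, rfl⟩)], fun a b hh => h a b (Or.inr hh)⟩

theorem ne_reverse {m : V → V} (hm : ∀ v, m (m v) = v) {l : List V} (h : Even l.length) :
    ne m l.reverse = ne m l := by
  revert h; revert l
  apply evenRec
  · rfl
  · intro x y l hl ih
    have e : (x :: y :: l).reverse = l.reverse ++ [y, x] := by simp
    have : m y = x ↔ m x = y := ⟨fun h => by rw [← h, hm], fun h => by rw [← h, hm]⟩
    rw [e, ne_append m (by simpa using hl), ih, ne_cons, ne_cons]; simp [this, add_comm]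

theorem sum_ne [Fintype V] {m f : V → V} (hm : ∀ v, m (m v) = v) {l : List V} (h : Even l.length)
    (hf : ∀ a b, EvPos l a b → f a = b ∧ f b = a) :
    ∑ v : V, l.count v * (if f v = m v then 0 else 1) = 2 * ne m l := by
  revert hf; revert h; revert l
  apply evenRec
  · simp
  · intro x y l hl ih hf
    have ih := ih (fun a b hab => hf a b (Or.inr hab))
    obtain ⟨h1, h2⟩ := hf x y (Or.inl ⟨rfl, rfl⟩)
    simp only [List.count_cons, add_mul, Finset.sum_add_distrib, ih, ne_cons]
    have e : m y = x ↔ m x = y := ⟨fun h => by rw [← h, hm], fun h => by rw [← h, hm]⟩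
    simp only [beq_iff_eq, ite_mul, one_mul, zero_mul, Finset.sum_ite_eq, Finset.mem_univ, if_true, h1, h2]
    have e1 : (y = m x) ↔ m x = y := eq_comm
    have e2 : (x = m y) ↔ m x = y := by rw [eq_comm, e]
    simp only [e1, e2]
    split_ifs <;> omega
end Lists

section KDsec
set_option linter.unusedSectionVars false
variable {V : Type*} [DecidableEq V]

/-- Raw data of a bisubdivision of `K33`: branch vertices and interiors of the nine paths. -/
structure KD (V : Type*) where
  u : Fin 3 → V
  w : Fin 3 → V
  I : Fin 3 → Fin 3 → List V

namespace KD
def path (D : KD V) (i j : Fin 3) : List V := D.u i :: (D.I i j ++ [D.w j])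

def cnt (D : KD V) (x : V) : ℕ :=
  (∑ i, [D.u i].count x) + (∑ j, [D.w j].count x) + ∑ i, ∑ j, (D.I i j).count x

def swap (D : KD V) : KD V := ⟨D.w, D.u, fun i j => (D.I j i).reverse⟩

def perm (D : KD V) (σ τ : Equiv.Perm (Fin 3)) : KD V :=
  ⟨D.u ∘ σ, D.w ∘ τ, fun i j => D.I (σ i) (τ j)⟩

def slide (D : KD V) (Z1 : List V) (p : V) (Z2 Y1 : List V) (q : V) (Y2 R : List V) : KD V :=
  ⟨![p, D.u 1, D.u 2], ![q, D.w 1, D.w 2],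
    ![![R, Z2, Z1.reverse ++ D.I 0 2], ![Y1, D.I 1 1, D.I 1 2], ![D.I 2 0 ++ Y2.reverse, D.I 2 1, D.I 2 2]]⟩

@[simp] theorem path_swap (D : KD V) (i j) : D.swap.path i j = (D.path j i).reverse := by
  simp [path, swap]

@[simp] theorem path_perm (D : KD V) (σ τ i j) : (D.perm σ τ).path i j = D.path (σ i) (τ j) := rfl

@[simp] theorem cnt_swap (D : KD V) (x : V) : D.swap.cnt x = D.cnt x := by
  simp only [cnt, swap, List.count_reverse]
  rw [Finset.sum_comm (f := fun i j => List.count x (D.I j i))]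
  omega

@[simp] theorem cnt_perm (D : KD V) (σ τ) (x : V) : (D.perm σ τ).cnt x = D.cnt x := by
  simp only [cnt, perm, Function.comp]
  rw [Equiv.sum_comp σ (fun i => [D.u i].count x), Equiv.sum_comp τ (fun i => [D.w i].count x),
    Equiv.sum_comp σ (fun i => ∑ j, (D.I i (τ j)).count x)]
  simp_rw [fun i => Equiv.sum_comp τ (fun j => (D.I i j).count x)]

end KD

structure Ok (G : SimpleGraph V) (D : KD V) : Prop where
  chain : ∀ i j, (D.path i j).IsChain G.Adj
  even : ∀ i j, Even (D.I i j).length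
  le : ∀ x, D.cnt x ≤ 1

def OutPM (G : SimpleGraph V) (D : KD V) (n : V → V) : Prop :=
  ∀ v, D.cnt v = 0 → D.cnt (n v) = 0 ∧ n (n v) = v ∧ G.Adj v (n v)

def phi [Fintype V] (m : V → V) (D : KD V) (n : V → V) : ℕ :=
  2 * (∑ i, ∑ j, nm m (D.path i j)) + ∑ v, if D.cnt v = 0 then (if n v = m v then 0 else 1) else 0

variable {G : SimpleGraph V} {D : KD V} {n m : V → V}

theorem chain_reverse {l : List V} (h : l.IsChain G.Adj) : l.reverse.IsChain G.Adj := by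
  rw [List.isChain_reverse]
  exact h.imp (fun _ _ h => h.symm)

theorem Ok.swap (h : Ok G D) : Ok G D.swap where
  chain i j := by rw [KD.path_swap]; exact chain_reverse (h.chain j i)
  even i j := by simpa [KD.swap] using h.even j i
  le x := by rw [KD.cnt_swap]; exact h.le x

theorem Ok.perm (h : Ok G D) (σ τ) : Ok G (D.perm σ τ) where
  chain i j := h.chain _ _
  even i j := h.even _ _
  le x := by rw [KD.cnt_perm]; exact h.le x

theorem OutPM.swap (h : OutPM G D n) : OutPM G D.swap n := by
  intro v; simpa using h v
theorem OutPM.perm (h : OutPM G D n) (σ τ) : OutPM G (D.perm σ τ) n := by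
  intro v; simpa using h v

theorem phi_swap [Fintype V] (hm : ∀ v, m (m v) = v) : phi m D.swap n = phi m D n := by
  simp only [phi, KD.path_swap, KD.cnt_swap, nm_reverse hm]
  rw [Finset.sum_comm]

theorem phi_perm [Fintype V] (σ τ) : phi m (D.perm σ τ) n = phi m D n := by
  simp only [phi, KD.path_perm, KD.cnt_perm]
  rw [Equiv.sum_comp σ (fun i => ∑ j, nm m (D.path i (τ j)))]
  simp_rw [fun i => Equiv.sum_comp τ (fun j => nm m (D.path i j))]

theorem count_cons1 (a : V) (l : List V) (x : V) : (a :: l).count x = [a].count x + l.count x := by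
  rw [show a :: l = [a] ++ l from rfl, List.count_append]

theorem chain_glue {l1 l2 : List V} {x : V} (h1 : (l1 ++ [x]).IsChain G.Adj)
    (h2 : (x :: l2).IsChain G.Adj) : (l1 ++ x :: l2).IsChain G.Adj :=
  List.isChain_split.2 ⟨h1, h2⟩

theorem chain_turn {u p : V} {A Z1 Z2 T : List V} (h : u :: A = Z1 ++ p :: Z2)
    (hZ : (Z1 ++ [p]).IsChain G.Adj) (hT : (u :: T).IsChain G.Adj) :
    (p :: (Z1.reverse ++ T)).IsChain G.Adj := by
  cases Z1 with
  | nil => simp at h; simpa [← h.1] using hT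
  | cons z K =>
    simp at h
    obtain ⟨rfl, -⟩ := h
    have := chain_glue (l1 := (p :: K.reverse)) (x := u) (l2 := T) (by simpa using chain_reverse hZ) hT
    simpa using this

theorem nm_turn (hm : ∀ v, m (m v) = v) {u p : V} {A Z1 Z2 T : List V} (h : u :: A = Z1 ++ p :: Z2) :
    nm m (p :: (Z1.reverse ++ T)) = nm m (Z1 ++ [p]) + nm m (u :: T) := by
  cases Z1 with
  | nil => simp at h; simp [← h.1]
  | cons z K =>
    simp at h
    obtain ⟨rfl, -⟩ := h
    have := nm_append m (p :: K.reverse) u T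
    have e := nm_reverse hm (u :: (K ++ [p]))
    simp at this e ⊢
    rw [this, e]

def upd (n : V → V) (R : List V) (v : V) : V := if v ∈ R then mate R v else n v

section core
variable [Fintype V] {Z1 Z2 Y1 Y2 R Rm E : List V} {p q : V}

theorem slide_core (hD : Ok G D) (hn : OutPM G D n) (hm : ∀ v, m (m v) = v)
    (hz : D.u 0 :: D.I 0 1 = Z1 ++ p :: Z2) (hz1 : Even Z1.length)
    (hy : D.I 1 0 ++ [D.w 0] = Y1 ++ q :: Y2) (hy1 : Even Y1.length)
    (hRc : (p :: (R ++ [q])).IsChain G.Adj) (hRe : Even R.length)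
    (hRmc : Rm.IsChain G.Adj) (hRme : Even Rm.length)
    (hE : Even E.length) (hEn : ∀ a b, EvPos E a b → n a = b ∧ n b = a)
    (hEout : ∀ x, D.cnt x + E.count x ≤ 1)
    (hcount : ∀ x, R.count x + Rm.count x = (D.I 0 0).count x + E.count x) :
    Ok G (D.slide Z1 p Z2 Y1 q Y2 R) ∧ OutPM G (D.slide Z1 p Z2 Y1 q Y2 R) (upd n Rm) ∧
    (∀ x, (D.slide Z1 p Z2 Y1 q Y2 R).cnt x + Rm.count x = D.cnt x + E.count x) ∧
    phi m (D.slide Z1 p Z2 Y1 q Y2 R) (upd n Rm) + 2 * nm m (D.path 0 0) + 2 * ne m E =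
      phi m D n + 2 * nm m (p :: (R ++ [q])) + 2 * ne m Rm := by
  have hcnt : ∀ x, (D.slide Z1 p Z2 Y1 q Y2 R).cnt x + Rm.count x = D.cnt x + E.count x := by
    intro x
    have h1 := congrArg (List.count x) hz
    have h2 := congrArg (List.count x) hy
    have h3 := hcount x
    rw [count_cons1, List.count_append, count_cons1 p] at h1
    rw [List.count_append, List.count_append, count_cons1 q] at h2
    simp only [KD.cnt, KD.slide, Fin.sum_univ_three, Matrix.cons_val_zero, Matrix.cons_val_one,
      Matrix.cons_val, List.count_append, List.count_reverse]
    omega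
  have hRmle : ∀ x, Rm.count x ≤ 1 := fun x => by have := hcnt x; have := hEout x; omega
  have hRmn : Rm.Nodup := List.nodup_iff_count_le_one.2 hRmle
  have hI00 : ∀ x, (D.I 0 0).count x ≤ D.cnt x := by
    intro x; simp only [KD.cnt, Fin.sum_univ_three]; omega
  -- E closed under n
  have hEcl : ∀ v, v ∈ E → n v ∈ E ∧ n (n v) = v := by
    intro v hv
    obtain ⟨w, hw | hw⟩ := exists_pr hE hv
    · have := hEn _ _ hw; rw [this.1]; exact ⟨(evPos_mem hw).2, this.2⟩
    · have := hEn _ _ hw; rw [this.2]; exact ⟨(evPos_mem hw).1, this.1⟩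
  -- chains
  have c01 := hD.chain 0 1
  have c10 := hD.chain 1 0
  have e01 : D.path 0 1 = Z1 ++ p :: (Z2 ++ [D.w 1]) := by
    have : D.path 0 1 = (D.u 0 :: D.I 0 1) ++ [D.w 1] := rfl
    rw [this, hz]; simp
  have e10 : D.path 1 0 = (D.u 1 :: Y1) ++ q :: Y2 := by
    have : D.path 1 0 = D.u 1 :: (D.I 1 0 ++ [D.w 0]) := rfl
    rw [this, hy]; simp
  rw [e01, List.isChain_split] at c01
  rw [e10, List.isChain_split] at c10
  have c02 : (p :: (Z1.reverse ++ (D.I 0 2 ++ [D.w 2]))).IsChain G.Adj :=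
    chain_turn hz c01.1 (hD.chain 0 2)
  have hy' : D.w 0 :: (D.I 1 0).reverse = Y2.reverse ++ q :: Y1.reverse := by
    have := congrArg List.reverse hy; simpa using this
  have c20 : (q :: (Y2.reverse.reverse ++ ((D.I 2 0).reverse ++ [D.u 2]))).IsChain G.Adj := by
    refine chain_turn hy' ?_ ?_
    · have := chain_reverse c10.2; simpa using this
    · have := chain_reverse (hD.chain 2 0); simpa [KD.path] using this
  have p02 : (D.slide Z1 p Z2 Y1 q Y2 R).path 0 2 = p :: (Z1.reverse ++ (D.I 0 2 ++ [D.w 2])) := by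
    simp [KD.path, KD.slide]
  have p20 : (D.slide Z1 p Z2 Y1 q Y2 R).path 2 0 =
      (q :: (Y2.reverse.reverse ++ ((D.I 2 0).reverse ++ [D.u 2]))).reverse := by
    simp [KD.path, KD.slide]
  have p00 : (D.slide Z1 p Z2 Y1 q Y2 R).path 0 0 = p :: (R ++ [q]) := rfl
  have p01 : (D.slide Z1 p Z2 Y1 q Y2 R).path 0 1 = p :: (Z2 ++ [D.w 1]) := rfl
  have p10 : (D.slide Z1 p Z2 Y1 q Y2 R).path 1 0 = (D.u 1 :: Y1) ++ [q] := rfl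
  have p11 : (D.slide Z1 p Z2 Y1 q Y2 R).path 1 1 = D.path 1 1 := rfl
  have p12 : (D.slide Z1 p Z2 Y1 q Y2 R).path 1 2 = D.path 1 2 := rfl
  have p21 : (D.slide Z1 p Z2 Y1 q Y2 R).path 2 1 = D.path 2 1 := rfl
  have p22 : (D.slide Z1 p Z2 Y1 q Y2 R).path 2 2 = D.path 2 2 := rfl
  have hok : Ok G (D.slide Z1 p Z2 Y1 q Y2 R) := by
    refine ⟨?_, ?_, ?_⟩
    · intro i j
      fin_cases i <;> fin_cases j
      · exact hRc
      · exact c01.2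
      · show ((D.slide Z1 p Z2 Y1 q Y2 R).path 0 2).IsChain _
        rw [p02]; exact c02
      · exact c10.1
      · exact hD.chain 1 1
      · exact hD.chain 1 2
      · show ((D.slide Z1 p Z2 Y1 q Y2 R).path 2 0).IsChain _
        rw [p20]; exact chain_reverse c20
      · exact hD.chain 2 1
      · exact hD.chain 2 2
    · have l1 := congrArg List.length hz
      have l2 := congrArg List.length hy
      simp only [List.length_cons, List.length_append, List.length_nil] at l1 l2
      have := hD.even
      have i01 := hD.even 0 1
      have i10 := hD.even 1 0
      intro i j
      fin_cases i <;> fin_cases j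
      · exact hRe
      · show Even Z2.length
        grind
      · show Even (Z1.reverse ++ D.I 0 2).length
        have i02 := hD.even 0 2
        simp only [List.length_append, List.length_reverse]; exact hz1.add i02
      · exact hy1
      · exact hD.even 1 1
      · exact hD.even 1 2
      · show Even (D.I 2 0 ++ Y2.reverse).length
        have i02 := hD.even 2 0
        simp only [List.length_append, List.length_reverse]
        refine i02.add ?_
        grind
      · exact hD.even 2 1
      · exact hD.even 2 2
    · intro x; have := hcnt x; have := hEout x; omega
  refine ⟨hok, ?_, hcnt, ?_⟩
  · intro v hv
    by_cases hvR : v ∈ Rm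
    · have hp := pr_mate hRmn hRme hvR
      have hmem := (pr_mem hp).2
      have e1 : upd n Rm v = mate Rm v := by simp [upd, hvR]
      have e2 : upd n Rm (mate Rm v) = v := by
        simp only [upd, hmem, if_true]; exact mate_pr hRmn hp.symm
      rw [e1]
      refine ⟨?_, e2, pr_adj hRmc hp⟩
      have a1 := hcnt (mate Rm v)
      have a2 := hEout (mate Rm v)
      have a3 := List.count_pos_iff.2 hmem
      omega
    · have e1 : upd n Rm v = n v := by simp [upd, hvR]
      have a0 := List.count_eq_zero.2 hvR
      have a1 := hcnt v
      have a2 : D.cnt v = 0 := by omega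
      have a3 : v ∉ E := List.count_eq_zero.1 (by omega)
      obtain ⟨h1, h2, h3⟩ := hn v a2
      have a4 : n v ∉ E := by
        intro hh
        have := (hEcl _ hh).1
        rw [h2] at this; exact a3 this
      have a5 := List.count_eq_zero.2 a4
      have a6 := hI00 (n v)
      have a7 := hcount (n v)
      have a8 := hcnt (n v)
      have a9 : n v ∉ Rm := List.count_eq_zero.1 (by omega)
      rw [e1]
      refine ⟨by omega, ?_, h3⟩
      simp [upd, a9, h2]
  · have key : ∀ v, (if (D.slide Z1 p Z2 Y1 q Y2 R).cnt v = 0 then (if upd n Rm v = m v then 0 else 1) else 0)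
        + E.count v * (if n v = m v then 0 else 1) =
        (if D.cnt v = 0 then (if n v = m v then 0 else 1) else 0) +
        Rm.count v * (if mate Rm v = m v then 0 else 1) := by
      intro v
      have a1 := hcnt v
      have a2 := hEout v
      have a3 := hRmle v
      have a4 := hcount v
      have a5 := hI00 v
      by_cases hvR : v ∈ Rm
      · have hc : Rm.count v = 1 := le_antisymm a3 (List.count_pos_iff.2 hvR)
        have c1 : (D.slide Z1 p Z2 Y1 q Y2 R).cnt v = 0 := by omega
        have e1 : upd n Rm v = mate Rm v := by simp [upd, hvR]
        rw [c1, e1, hc]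
        by_cases hvE : E.count v = 0
        · have : D.cnt v ≠ 0 := by omega
          simp [hvE, this]
        · have h1 : E.count v = 1 := by omega
          have : D.cnt v = 0 := by omega
          simp [h1, this, add_comm]
      · have hc := List.count_eq_zero.2 hvR
        have e1 : upd n Rm v = n v := by simp [upd, hvR]
        rw [hc, e1]
        by_cases hvE : E.count v = 0
        · have : (D.slide Z1 p Z2 Y1 q Y2 R).cnt v = D.cnt v := by omega
          simp [hvE, this]
        · have h1 : E.count v = 1 := by omega
          have : D.cnt v = 0 := by omega
          have : (D.slide Z1 p Z2 Y1 q Y2 R).cnt v ≠ 0 := by omega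
          simp [*]
    have hsum := Finset.sum_congr (rfl : (Finset.univ : Finset V) = Finset.univ) (fun v _ => key v)
    rw [Finset.sum_add_distrib, Finset.sum_add_distrib, sum_ne hm hE hEn,
      sum_ne hm hRme (fun a b h => mate_evPos hRmn h)] at hsum
    have t1 := nm_turn (T := D.I 0 2 ++ [D.w 2]) hm hz
    have t2 := nm_turn (T := (D.I 2 0).reverse ++ [D.u 2]) hm hy'
    have t3 := nm_append m Z1 p (Z2 ++ [D.w 1])
    have t4 := nm_append m (D.u 1 :: Y1) q Y2
    have t5 : nm m (D.w 0 :: ((D.I 2 0).reverse ++ [D.u 2])) = nm m (D.path 2 0) := by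
      rw [← nm_reverse hm (D.path 2 0)]; simp [KD.path]
    have t6 : nm m (Y2.reverse ++ [q]) = nm m (q :: Y2) := by
      rw [← nm_reverse hm (q :: Y2)]; simp
    have t7 : nm m (D.u 0 :: (D.I 0 2 ++ [D.w 2])) = nm m (D.path 0 2) := rfl
    simp only [phi, Fin.sum_univ_three]
    rw [p00, p01, p02, p10, p11, p12, p20, p21, p22, nm_reverse hm, t1, t2, t5, t6, t7, e01, e10, t3, t4]
    omega
end core
end KDsec

section Segsec
set_option linter.unusedSectionVars false
variable {V : Type*} [DecidableEq V]
variable {G : SimpleGraph V} {D : KD V} {n m : V → V}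

theorem path_count (D : KD V) (i j : Fin 3) (x : V) :
    (D.path i j).count x = [D.u i].count x + (D.I i j).count x + [D.w j].count x := by
  unfold KD.path; rw [count_cons1, List.count_append]; omega

theorem path_count_le (D : KD V) (i j : Fin 3) (x : V) : (D.path i j).count x ≤ D.cnt x := by
  rw [path_count]
  simp only [KD.cnt, Fin.sum_univ_three]
  fin_cases i <;> fin_cases j <;> simp only [Fin.zero_eta, Fin.mk_one, Fin.reduceFinMk] <;> omega

theorem cnt_of_mem {i j : Fin 3} {x : V} (h : x ∈ D.path i j) : D.cnt x ≠ 0 := by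
  have := path_count_le D i j x
  have := List.count_pos_iff.2 h
  omega

theorem mem_of_cnt {x : V} (h : D.cnt x ≠ 0) : ∃ i j, x ∈ D.path i j := by
  by_contra hh
  push Not at hh
  apply h
  have key : ∀ i j, (D.path i j).count x = 0 := fun i j => List.count_eq_zero.2 (hh i j)
  simp only [path_count] at key
  simp only [KD.cnt, Fin.sum_univ_three]
  have := key 0 0; have := key 0 1; have := key 0 2
  have := key 1 0; have := key 1 1; have := key 1 2
  have := key 2 0; have := key 2 1; have := key 2 2
  omega

theorem Ok.nodup (h : Ok G D) (i j) : (D.path i j).Nodup :=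
  List.nodup_iff_count_le_one.2 fun x => (path_count_le D i j x).trans (h.le x)

theorem chain_of_evPos {R : V → V → Prop} : ∀ {l : List V}, (∀ a b, EvPos l a b → R a b) →
    (∀ a b, EvPos l.tail a b → R a b) → l.IsChain R
  | [], _, _ => by simp
  | [x], _, _ => by simp
  | x :: y :: l, h1, h2 => by
    rw [List.isChain_cons_cons]
    exact ⟨h1 x y (Or.inl ⟨rfl, rfl⟩), chain_of_evPos h2 (fun a b h => h1 a b (Or.inr h))⟩

structure IsSeg (G : SimpleGraph V) (D : KD V) (n m : V → V) (p : V) (E : List V) (q : V) : Prop where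
  hp : D.cnt p ≠ 0
  hq : D.cnt q ≠ 0
  even : Even E.length
  out : ∀ x, D.cnt x + E.count x ≤ 1
  npair : ∀ a b, EvPos E a b → n a = b ∧ n b = a
  mpair : ∀ a b, EvPos (p :: (E ++ [q])) a b → m a = b
  chain : (p :: (E ++ [q])).IsChain G.Adj

theorem IsSeg.reverse {p q : V} {E : List V} (hm : ∀ v, m (m v) = v) (h : IsSeg G D n m p E q) :
    IsSeg G D n m q E.reverse p where
  hp := h.hq
  hq := h.hp
  even := by simpa using h.even
  out x := by simpa using h.out x
  npair a b hab := by
    rw [evPos_reverse h.even] at hab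
    exact (h.npair _ _ hab).symm
  mpair a b hab := by
    have e : q :: (E.reverse ++ [p]) = (p :: (E ++ [q])).reverse := by simp
    rw [e, evPos_reverse (by have := h.even; simp; grind)] at hab
    rw [← h.mpair _ _ hab, hm]
  chain := by
    have := chain_reverse h.chain
    simpa using this

theorem seg_exists [Fintype V] (hn : OutPM G D n) (hle : ∀ x, D.cnt x ≤ 1)
    (hm : ∀ v, m (m v) = v) (hma : ∀ v, G.Adj v (m v)) {p : V} (hp : D.cnt p ≠ 0) :
    ∃ E q, IsSeg G D n m p E q := by
  have key : ∀ (k : ℕ) (E F : List V) (z : V), Fintype.card V < k + E.length → Even E.length →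
      (∀ x, D.cnt x + E.count x ≤ 1) → (∀ a b, EvPos E a b → n a = b ∧ n b = a) →
      p :: E = F ++ [z] → (∀ a b, EvPos F a b → m a = b) → ∃ E q, IsSeg G D n m p E q := by
    intro k
    induction k with
    | zero =>
      intro E F z hk _ hout _ _ _
      exfalso
      have : E.Nodup := List.nodup_iff_count_le_one.2 fun x => by have := hout x; omega
      have := this.length_le_card
      omega
    | succ k ih =>
      intro E F z hk he hout hnp hF hmp
      have hFe : Even F.length := by
        have := congrArg List.length hF
        simp at this
        rwa [← this]
      by_cases hy : D.cnt (m z) = 0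
      · have hz : z ∈ p :: E := by rw [hF]; simp
        have hyE : m z ∉ E := by
          intro hh
          have : m z ∈ F ++ [z] := by rw [← hF]; exact List.mem_cons_of_mem _ hh
          simp only [List.mem_append, List.mem_singleton] at this
          rcases this with hmF | hmz
          · obtain ⟨w, hw⟩ := exists_pr hFe hmF
            have hwz : w = z := by
              rcases hw with hw | hw
              · rw [← hmp _ _ hw, hm]
              · have := hmp _ _ hw
                have := congrArg m this
                rwa [hm, hm] at this
            have hzF : z ∈ F := hwz ▸ (pr_mem hw).2
            have c1 := congrArg (List.count z) hF
            rw [count_cons1, List.count_append] at c1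
            have c2 := List.count_pos_iff.2 hzF
            have c3 := hout z
            have c4 : [z].count z = 1 := by simp
            by_cases hpz : p = z
            · subst hpz
              have : D.cnt p ≥ 1 := by omega
              omega
            · have : [p].count z = 0 := by simp [List.count_eq_zero, Ne.symm hpz]
              omega
          · exact (hma z).ne hmz.symm
        obtain ⟨h1, h2, h3⟩ := hn _ hy
        have hy'E : n (m z) ∉ E := by
          intro hh
          obtain ⟨w, hw⟩ := exists_pr he hh
          have : n (n (m z)) = w := by
            rcases hw with hw | hw
            · exact (hnp _ _ hw).1
            · exact (hnp _ _ hw).2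
          rw [h2] at this
          exact hyE (this ▸ (pr_mem hw).2)
        refine ih (E ++ [m z, n (m z)]) (F ++ [z, m z]) (n (m z)) ?_ ?_ ?_ ?_ ?_ ?_
        · simp; omega
        · simp only [List.length_append, List.length_cons, List.length_nil]; grind
        · intro x
          have c0 := hout x
          rw [List.count_append, count_cons1]
          by_cases hx1 : x = m z
          · subst hx1
            have := List.count_eq_zero.2 hyE
            have : [n (m z)].count (m z) = 0 := by simp [List.count_eq_zero, h3.ne]
            have : [m z].count (m z) = 1 := by simp
            omega
          · have : [m z].count x = 0 := by simp [List.count_eq_zero, hx1]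
            by_cases hx2 : x = n (m z)
            · subst hx2
              have := List.count_eq_zero.2 hy'E
              have : [n (m z)].count (n (m z)) = 1 := by simp
              omega
            · have : [n (m z)].count x = 0 := by simp [List.count_eq_zero, hx2]
              omega
        · intro a b hab
          rw [evPos_append he] at hab
          rcases hab with hab | hab
          · exact hnp _ _ hab
          · simp at hab; obtain ⟨rfl, rfl⟩ := hab; exact ⟨rfl, h2⟩
        · rw [← List.cons_append, hF]; simp
        · intro a b hab
          rw [evPos_append hFe] at hab
          rcases hab with hab | hab
          · exact hmp _ _ hab
          · simp at hab; rw [hab.1, hab.2]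
      · have hmpair : ∀ a b, EvPos (p :: (E ++ [m z])) a b → m a = b := by
          intro a b hab
          have : p :: (E ++ [m z]) = F ++ [z, m z] := by rw [← List.cons_append, hF]; simp
          rw [this, evPos_append hFe] at hab
          rcases hab with hab | hab
          · exact hmp _ _ hab
          · simp at hab; rw [hab.1, hab.2]
        refine ⟨E, m z, hp, hy, he, hout, hnp, hmpair, ?_⟩
        apply chain_of_evPos
        · intro a b hab; rw [← hmpair a b hab]; exact hma a
        · intro a b hab
          simp only [List.tail_cons] at hab
          rw [evPos_append he] at hab
          rcases hab with hab | hab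
          · have hh := hout a
            have := List.count_pos_iff.2 (evPos_mem hab).1
            have := (hn a (by omega)).2.2
            rwa [(hnp _ _ hab).1] at this
          · simp at hab
  refine key (Fintype.card V + 1) [] [] p (by simp) (by simp) (by simpa using hle) (by simp) rfl (by simp)

theorem IsSeg.closed {p q : V} {E : List V} (h : IsSeg G D n m p E q) {T : V → Prop}
    (hTm : ∀ v, T v ↔ T (m v)) (hTn : ∀ v, D.cnt v = 0 → (T v ↔ T (n v))) {x : V}
    (hx : x ∈ p :: (E ++ [q])) : T x ↔ T p := by
  have hc : (p :: (E ++ [q])).IsChain (fun a b => T a ↔ T b) := by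
    apply chain_of_evPos
    · intro a b hab; rw [← h.mpair a b hab]; exact hTm a
    · intro a b hab
      simp only [List.tail_cons] at hab
      rw [evPos_append h.even] at hab
      rcases hab with hab | hab
      · have hh := h.out a
        have := List.count_pos_iff.2 (evPos_mem hab).1
        have := hTn a (by omega)
        rwa [(h.npair _ _ hab).1] at this
      · simp at hab
  have key : ∀ (l : List V) (p : V), (p :: l).IsChain (fun a b => T a ↔ T b) → ∀ x ∈ p :: l, T x ↔ T p := by
    intro l
    induction l with
    | nil => intro p _ x hx; simp at hx; rw [hx]
    | cons a l ih =>
      intro p hc x hx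
      rw [List.isChain_cons_cons] at hc
      rcases List.mem_cons.1 hx with rfl | hx
      · rfl
      · rw [ih a hc.2 x hx, hc.1]
  exact key _ _ hc x hx

def Out (D : KD V) (m : V → V) (p : V) : Prop :=
  ∀ i j, ¬ [p, m p] <:+: D.path i j ∧ ¬ [m p, p] <:+: D.path i j

theorem infix_mem {l k : List V} (h : l <:+: k) {x : V} (hx : x ∈ l) : x ∈ k := h.subset hx

theorem IsSeg.out_right {p q : V} {E : List V} (hm : ∀ v, m (m v) = v) (h : IsSeg G D n m p E q)
    (ho : Out D m p) : Out D m q := by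
  rcases List.eq_nil_or_concat' E with rfl | ⟨L, z, rfl⟩
  · have hpq : m p = q := h.mpair p q (by simp)
    have hqp : m q = p := by rw [← hpq, hm]
    intro i j
    have := ho i j
    rw [hpq] at this
    rw [hqp]
    exact this.symm
  · have he := h.even
    have hmz : m z = q := by
      apply h.mpair
      have : p :: (L ++ [z] ++ [q]) = (p :: L) ++ z :: q :: [] := by simp
      rw [this]
      apply evPos_mid
      simp at he ⊢; grind
    have hz : D.cnt z = 0 := by have := h.out z; rw [List.count_append] at this; simp at this; omega
    have hqz : m q = z := by rw [← hmz, hm]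
    intro i j
    rw [hqz]
    constructor <;> intro hh <;> exact cnt_of_mem (infix_mem hh (x := z) (by simp)) hz

theorem IsSeg.out_of_ne {p q : V} {E : List V} (h : IsSeg G D n m p E q) (hE : E ≠ []) : Out D m p := by
  cases E with
  | nil => exact absurd rfl hE
  | cons z L =>
    have hmz : m p = z := h.mpair p z (by simp)
    have hz : D.cnt z = 0 := by have := h.out z; rw [count_cons1] at this; simp at this; omega
    intro i j
    rw [hmz]
    constructor <;> intro hh <;> exact cnt_of_mem (infix_mem hh (x := z) (by simp)) hz

end Segsec

section Abs
set_option linter.unusedSectionVars false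
variable {V : Type*} [DecidableEq V]
variable {G : SimpleGraph V} {D : KD V} {n m : V → V}

def UAt (D : KD V) (i k : Fin 3) (Z1 : List V) (x : V) (Z2 : List V) : Prop :=
  D.u i :: D.I i k = Z1 ++ x :: Z2 ∧ Even Z1.length

def WAt (D : KD V) (l j : Fin 3) (Y1 : List V) (x : V) (Y2 : List V) : Prop :=
  D.I l j ++ [D.w j] = Y1 ++ x :: Y2 ∧ Even Y1.length

theorem UAt.swap (hD : Ok G D) {i k Z1 x Z2} (h : UAt D i k Z1 x Z2) :
    WAt D.swap k i Z2.reverse x Z1.reverse := by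
  refine ⟨?_, ?_⟩
  · have := congrArg List.reverse h.1
    simpa [KD.swap] using this
  · have h1 := congrArg List.length h.1
    have := hD.even i k
    have := h.2
    simp at h1 ⊢
    grind

theorem WAt.swap (hD : Ok G D) {i k Z1 x Z2} (h : WAt D i k Z1 x Z2) :
    UAt D.swap k i Z2.reverse x Z1.reverse := by
  refine ⟨?_, ?_⟩
  · have := congrArg List.reverse h.1
    simpa [KD.swap] using this
  · have h1 := congrArg List.length h.1
    have := hD.even i k
    have := h.2
    simp at h1 ⊢
    grind

theorem loc (hD : Ok G D) {x : V} (hx : D.cnt x ≠ 0) :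
    (∃ i k Z1 Z2, UAt D i k Z1 x Z2) ∨ (∃ l j Y1 Y2, WAt D l j Y1 x Y2) := by
  obtain ⟨i, j, h⟩ := mem_of_cnt hx
  simp only [KD.path, List.mem_cons, List.mem_append, List.not_mem_nil, or_false] at h
  rcases h with rfl | h | rfl
  · exact Or.inl ⟨i, j, [], D.I i j, rfl, by simp⟩
  · obtain ⟨A, B, hAB⟩ := List.append_of_mem h
    rcases Nat.even_or_odd A.length with he | ho
    · exact Or.inr ⟨i, j, A, B ++ [D.w j], by simp [hAB], he⟩
    · exact Or.inl ⟨i, j, D.u i :: A, B, by simp [hAB], by simpa using ho.add_one⟩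
  · exact Or.inr ⟨i, j, D.I i j, [], rfl, hD.even i j⟩

theorem col_chain {col : V → Bool} (hcol : ∀ x y, G.Adj x y → col y = !col x) :
    ∀ {l : List V} {x y : V}, (x :: (l ++ [y])).IsChain G.Adj → (col y = col x ↔ Odd l.length)
  | [], x, y, h => by
    simp at h; simp [hcol _ _ h]
  | z :: l, x, y, h => by
    simp only [List.cons_append, List.isChain_cons_cons] at h
    have := col_chain hcol h.2
    have h1 := hcol _ _ h.1
    simp only [List.length_cons, Nat.odd_add_one, ← this, h1]
    cases col y <;> cases col x <;> simp

theorem col_u {col : V → Bool} (hcol : ∀ x y, G.Adj x y → col y = !col x) (hD : Ok G D) (i j) :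
    col (D.w j) = !col (D.u i) := by
  have := col_chain hcol (hD.chain i j)
  have h2 := hD.even i j
  rw [← Nat.not_odd_iff_even, ← this] at h2
  cases h : col (D.w j) <;> cases h' : col (D.u i) <;> simp_all

theorem col_UAt {col : V → Bool} (hcol : ∀ x y, G.Adj x y → col y = !col x) (hD : Ok G D)
    {i k Z1 x Z2} (h : UAt D i k Z1 x Z2) : col x = col (D.u 0) := by
  have e : col x = col (D.u i) := by
    obtain ⟨h1, h2⟩ := h
    cases Z1 with
    | nil => simp at h1; rw [h1.1]
    | cons z K =>
      simp at h1
      have hc := hD.chain i k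
      unfold KD.path at hc
      rw [h1.2] at hc
      have : D.u i :: (K ++ x :: Z2 ++ [D.w k]) = (D.u i :: K) ++ x :: (Z2 ++ [D.w k]) := by simp
      rw [this, List.isChain_split] at hc
      rw [col_chain hcol hc.1]
      simp at h2; grind
  have h1 := col_u hcol hD i 0
  have h2 := col_u hcol hD 0 0
  rw [e]
  rw [h1] at h2
  cases h : col (D.u i) <;> cases h' : col (D.u 0) <;> simp_all

theorem col_WAt {col : V → Bool} (hcol : ∀ x y, G.Adj x y → col y = !col x) (hD : Ok G D)
    {i k Z1 x Z2} (h : WAt D i k Z1 x Z2) : col x = !col (D.u 0) := by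
  have := col_UAt hcol hD.swap (h.swap hD)
  rw [this]
  exact col_u hcol hD 0 0

theorem IsSeg.col {col : V → Bool} (hcol : ∀ x y, G.Adj x y → col y = !col x) {p q : V} {E : List V}
    (h : IsSeg G D n m p E q) : col q = !col p := by
  have := col_chain hcol h.chain
  have h2 := h.even
  rw [← Nat.not_odd_iff_even, ← this] at h2
  cases h : col q <;> cases h' : col p <;> simp_all

theorem IsSeg.wloc {col : V → Bool} (hcol : ∀ x y, G.Adj x y → col y = !col x) (hD : Ok G D)
    {p q : V} {E : List V} (h : IsSeg G D n m p E q) {i k Z1 Z2} (hp : UAt D i k Z1 p Z2) :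
    ∃ l j Y1 Y2, WAt D l j Y1 q Y2 := by
  rcases loc hD h.hq with ⟨l, j, Y1, Y2, hq⟩ | hq
  · exfalso
    have h1 := col_UAt hcol hD hq
    have h2 := col_UAt hcol hD hp
    have h3 := h.col hcol
    rw [h1, h2] at h3
    exact (Bool.eq_not_self _).1 h3
  · exact hq

theorem tail_last {A Y1 Y2 : List V} {w q : V} (h : A ++ [w] = Y1 ++ q :: Y2) :
    ∃ K, q :: Y2 = K ++ [w] ∧ A = Y1 ++ K := by
  rcases List.eq_nil_or_concat' Y2 with rfl | ⟨L, b, rfl⟩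
  · have := List.append_inj' h rfl
    refine ⟨[], ?_, ?_⟩
    · simpa using this.2.symm
    · simpa using this.1
  · have h' : A ++ [w] = (Y1 ++ q :: L) ++ [b] := by simpa using h
    have := List.append_inj' h' rfl
    refine ⟨q :: L, ?_, this.1⟩
    have := this.2
    simp at this; simp [this]

theorem head_first {A Z1 Z2 : List V} {u p : V} (h : u :: A = Z1 ++ p :: Z2) :
    ∃ K, Z1 ++ [p] = u :: K ∧ A = K ++ Z2 := by
  cases Z1 with
  | nil => simp at h; exact ⟨[], by simp [h.1], by simp [h.2]⟩
  | cons z L => simp at h; exact ⟨L ++ [p], by simp [h.1], by simp [h.2]⟩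

/-- Result of absorbing the segment `p E q`. -/
structure Res (G : SimpleGraph V) (D : KD V) (n : V → V) (p : V) (E : List V) (q : V)
    (D' : KD V) (n' : V → V) : Prop where
  ok : Ok G D'
  pm : OutPM G D' n'
  le : ∀ x, D'.cnt x ≤ D.cnt x + E.count x
  eq : ∀ v, D.cnt v = 0 → v ∉ E → n' v = n v
  inf : ∃ i j, p :: (E ++ [q]) <:+: D'.path i j ∨ (p :: (E ++ [q])).reverse <:+: D'.path i j

theorem Res.perm {p q : V} {E : List V} {D' n'} {σ τ} (h : Res G (D.perm σ τ) n p E q D' n') :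
    Res G D n p E q D' n' :=
  ⟨h.ok, h.pm, by simpa using h.le, by simpa using h.eq, h.inf⟩

theorem Res.swap {p q : V} {E : List V} {D' n'} (h : Res G D.swap n p E q D' n') :
    Res G D n p E q D' n' :=
  ⟨h.ok, h.pm, by simpa using h.le, by simpa using h.eq, h.inf⟩

theorem Res.reverse {p q : V} {E : List V} {D' n'} (h : Res G D n q E.reverse p D' n') :
    Res G D n p E q D' n' := by
  refine ⟨h.ok, h.pm, by simpa using h.le, by simpa using h.eq, ?_⟩
  obtain ⟨i, j, h⟩ := h.inf
  refine ⟨i, j, ?_⟩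
  simp at h ⊢
  tauto

theorem IsSeg.perm {p q : V} {E : List V} (h : IsSeg G D n m p E q) (σ τ) :
    IsSeg G (D.perm σ τ) n m p E q :=
  ⟨by simpa using h.hp, by simpa using h.hq, h.even, by simpa using h.out, h.npair, h.mpair, h.chain⟩

theorem IsSeg.swap {p q : V} {E : List V} (h : IsSeg G D n m p E q) :
    IsSeg G D.swap n m p E q :=
  ⟨by simpa using h.hp, by simpa using h.hq, h.even, by simpa using h.out, h.npair, h.mpair, h.chain⟩

theorem Out.perm {p : V} (h : Out D m p) (σ τ) : Out (D.perm σ τ) m p := fun _ _ => h _ _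

theorem infix_rev2 {a b : V} {l : List V} : [a, b] <:+: l.reverse ↔ [b, a] <:+: l := by
  have : [a, b] = [b, a].reverse := by simp
  rw [this, List.reverse_infix]

theorem Out.swap {p : V} (h : Out D m p) : Out D.swap m p := by
  intro i j
  rw [KD.path_swap, infix_rev2, infix_rev2]
  exact (h j i).symm

theorem ne_pos_right (hm : ∀ v, m (m v) = v) {u q : V} {Y l : List V} (hY : Even Y.length)
    (hl : u :: (Y ++ [q]) <:+: l) (h : ¬ [m q, q] <:+: l) : 0 < ne m (u :: (Y ++ [q])) := by
  rw [Nat.pos_iff_ne_zero]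
  intro h0
  rw [ne_eq_zero] at h0
  apply h
  refine List.IsInfix.trans ?_ hl
  rcases List.eq_nil_or_concat' Y with rfl | ⟨L, z, rfl⟩
  · have := h0 u q (by simp)
    rw [← this, hm]; exact ⟨[], [], by simp⟩
  · have hh := h0 z q (by
      have e : u :: (L ++ [z] ++ [q]) = (u :: L) ++ z :: q :: [] := by simp
      rw [e]; apply evPos_mid; simp at hY ⊢; grind)
    have : m q = z := by rw [← hh, hm]
    rw [this]
    exact ⟨u :: L, [], by simp⟩

theorem ne_pos_left {p w : V} {Y l : List V}
    (hl : p :: (Y ++ [w]) <:+: l) (h : ¬ [p, m p] <:+: l) : 0 < ne m (p :: (Y ++ [w])) := by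
  rw [Nat.pos_iff_ne_zero]
  intro h0
  rw [ne_eq_zero] at h0
  apply h
  refine List.IsInfix.trans ?_ hl
  cases Y with
  | nil =>
    have := h0 p w (by simp)
    rw [this]; exact ⟨[], [], by simp⟩
  | cons z L =>
    have := h0 p z (by simp)
    rw [this]; exact ⟨[], L ++ [w], by simp⟩

section absorb
variable [Fintype V] {Z1 Z2 Y1 Y2 R Rm E : List V} {p q : V}

theorem slide_res {p' q' : V} (hD : Ok G D) (hn : OutPM G D n) (hm : ∀ v, m (m v) = v)
    (hs : IsSeg G D n m p E q)
    (hz : D.u 0 :: D.I 0 1 = Z1 ++ p' :: Z2) (hz1 : Even Z1.length)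
    (hy : D.I 1 0 ++ [D.w 0] = Y1 ++ q' :: Y2) (hy1 : Even Y1.length)
    (hRc : (p' :: (R ++ [q'])).IsChain G.Adj) (hRe : Even R.length)
    (hRmc : Rm.IsChain G.Adj) (hRme : Even Rm.length)
    (hcount : ∀ x, R.count x + Rm.count x = (D.I 0 0).count x + E.count x)
    (hinf : p :: (E ++ [q]) <:+: p' :: (R ++ [q']) ∨ (p :: (E ++ [q])).reverse <:+: p' :: (R ++ [q'])) :
    Res G D n p E q (D.slide Z1 p' Z2 Y1 q' Y2 R) (upd n Rm) ∧
    phi m (D.slide Z1 p' Z2 Y1 q' Y2 R) (upd n Rm) + 2 * nm m (D.path 0 0) + 2 * ne m E =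
      phi m D n + 2 * nm m (p' :: (R ++ [q'])) + 2 * ne m Rm := by
  obtain ⟨h1, h2, h3, h4⟩ := slide_core hD hn hm hz hz1 hy hy1 hRc hRe hRmc hRme hs.even hs.npair hs.out hcount
  refine ⟨⟨h1, h2, fun x => by have := h3 x; omega, ?_, 0, 0, hinf⟩, h4⟩
  intro v hv hvE
  have a1 := List.count_eq_zero.2 hvE
  have a2 := h3 v
  have : v ∉ Rm := List.count_eq_zero.1 (by omega)
  simp [upd, this]

theorem IsSeg.nm_eq (hs : IsSeg G D n m p E q) : nm m (p :: (E ++ [q])) = ne m E := by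
  rw [nm_eq_ne m hs.even, (ne_eq_zero m).2 hs.mpair, zero_add]

/-- both located on different rows and columns -/
theorem absorb3 (hD : Ok G D) (hn : OutPM G D n) (hm : ∀ v, m (m v) = v)
    (hs : IsSeg G D n m p E q) (hp : UAt D 0 1 Z1 p Z2) (hq : WAt D 1 0 Y1 q Y2) :
    Res G D n p E q (D.slide Z1 p Z2 Y1 q Y2 E) (upd n (D.I 0 0)) ∧
    phi m (D.slide Z1 p Z2 Y1 q Y2 E) (upd n (D.I 0 0)) + 2 * ne m (D.path 0 0) = phi m D n := by
  have hc : (D.I 0 0).IsChain G.Adj := by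
    refine (hD.chain 0 0).infix ⟨[D.u 0], [D.w 0], ?_⟩
    simp [KD.path]
  obtain ⟨h1, h2⟩ := slide_res (R := E) (Rm := D.I 0 0) hD hn hm hs hp.1 hp.2 hq.1 hq.2 hs.chain hs.even
    hc (hD.even 0 0) (fun x => by omega) (Or.inl (List.infix_refl _))
  refine ⟨h1, ?_⟩
  have := nm_eq_ne m (hD.even 0 0) (D.u 0) (D.w 0)
  rw [hs.nm_eq] at h2
  unfold KD.path at h2 ⊢
  omega

theorem absorb1 (hD : Ok G D) (hn : OutPM G D n) (hm : ∀ v, m (m v) = v)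
    (hs : IsSeg G D n m p E q) (ho : Out D m p) (hp : UAt D 0 1 Z1 p Z2) (hq : WAt D 0 0 Y1 q Y2) :
    ∃ D' n', Res G D n p E q D' n' ∧ phi m D' n' < phi m D n := by
  obtain ⟨K, hK1, hK2⟩ := tail_last hq.1
  have e00 : D.path 0 0 = (D.u 0 :: Y1) ++ q :: Y2 := by
    rw [KD.path, hq.1]; simp
  have c00 := hD.chain 0 0
  rw [e00, List.isChain_split] at c00
  have eR : p :: (E ++ K ++ [D.w 0]) = (p :: E) ++ q :: Y2 := by rw [hK1]; simp
  have hl := congrArg List.length hK2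
  simp at hl
  have i00 := hD.even 0 0
  obtain ⟨h1, h2⟩ := slide_res (R := E ++ K) (Rm := Y1) (Y1 := D.I 1 0) (q' := D.w 0) (Y2 := []) hD hn hm hs
    hp.1 hp.2 (by simp) (hD.even 1 0)
    (by rw [eR]; exact chain_glue hs.chain c00.2)
    (by have := hs.even; have := hq.2; simp; grind)
    (c00.1.infix ⟨[D.u 0], [q], by simp⟩) hq.2
    (fun x => by rw [hK2, List.count_append, List.count_append]; omega)
    (Or.inl (by rw [eR]; exact ⟨[], Y2, by simp⟩))
  refine ⟨_, _, h1, ?_⟩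
  have e1 := nm_append m (p :: E) q Y2
  have e2 := nm_append m (D.u 0 :: Y1) q Y2
  have e3 := nm_eq_ne m hq.2 (D.u 0) q
  have e4 := hs.nm_eq
  have e5 : 0 < ne m (D.u 0 :: (Y1 ++ [q])) :=
    ne_pos_right hm (l := D.path 0 0) hq.2 ⟨[], Y2, by rw [e00]; simp⟩ ((hs.out_right hm ho) 0 0).2
  rw [eR, e00] at h2
  simp only [List.cons_append] at *
  omega

theorem absorb2 (hD : Ok G D) (hn : OutPM G D n) (hm : ∀ v, m (m v) = v)
    (hs : IsSeg G D n m p E q) (ho : Out D m p) (hp : UAt D 0 0 Z1 p Z2) (hq : WAt D 1 0 Y1 q Y2) :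
    ∃ D' n', Res G D n p E q D' n' ∧ phi m D' n' < phi m D n := by
  obtain ⟨K, hK1, hK2⟩ := head_first hp.1
  have e00 : D.path 0 0 = Z1 ++ p :: (Z2 ++ [D.w 0]) := by
    have : D.path 0 0 = (D.u 0 :: D.I 0 0) ++ [D.w 0] := rfl
    rw [this, hp.1]; simp
  have c00 := hD.chain 0 0
  rw [e00, List.isChain_split] at c00
  have eR : D.u 0 :: (K ++ E ++ [q]) = Z1 ++ p :: (E ++ [q]) := by
    have : D.u 0 :: (K ++ E ++ [q]) = (D.u 0 :: K) ++ (E ++ [q]) := by simp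
    rw [this, ← hK1]; simp
  have hl := congrArg List.length hK2
  have hl2 := congrArg List.length hK1
  simp at hl hl2
  have i00 := hD.even 0 0
  have hZ2 : Even Z2.length := by have := hp.2; grind
  obtain ⟨h1, h2⟩ := slide_res (R := K ++ E) (Rm := Z2) (Z1 := []) (p' := D.u 0) (Z2 := D.I 0 1) hD hn hm hs
    (by simp) (by simp) hq.1 hq.2
    (by rw [eR]; exact chain_glue c00.1 hs.chain)
    (by have := hs.even; have := hp.2; simp; grind)
    (c00.2.infix ⟨[p], [D.w 0], by simp⟩) hZ2
    (fun x => by rw [hK2, List.count_append, List.count_append]; omega)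
    (Or.inl (by rw [eR]; exact ⟨Z1, [], by simp⟩))
  refine ⟨_, _, h1, ?_⟩
  have e1 := nm_append m Z1 p (E ++ [q])
  have e2 := nm_append m Z1 p (Z2 ++ [D.w 0])
  have e3 := nm_eq_ne m hZ2 p (D.w 0)
  have e4 := hs.nm_eq
  have e5 : 0 < ne m (p :: (Z2 ++ [D.w 0])) :=
    ne_pos_left (l := D.path 0 0) ⟨Z1, [], by rw [e00]; simp⟩ (ho 0 0).1
  rw [eR, e00] at h2
  omega

theorem absorb0 (hD : Ok G D) (hn : OutPM G D n) (hm : ∀ v, m (m v) = v)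
    (hs : IsSeg G D n m p E q) (hpq : p ≠ q) (ho : Out D m p) (hp : UAt D 0 0 Z1 p Z2) (hq : WAt D 0 0 Y1 q Y2) :
    ∃ D' n', Res G D n p E q D' n' ∧ phi m D' n' < phi m D n := by
  have eA : D.path 0 0 = Z1 ++ p :: (Z2 ++ [D.w 0]) := by
    have : D.path 0 0 = (D.u 0 :: D.I 0 0) ++ [D.w 0] := rfl
    rw [this, hp.1]; simp
  have eB : D.path 0 0 = (D.u 0 :: Y1) ++ q :: Y2 := by
    rw [KD.path, hq.1]; simp
  have hEq : Z1 ++ p :: (Z2 ++ [D.w 0]) = (D.u 0 :: Y1) ++ q :: Y2 := by rw [← eA, eB]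
  have c00 := hD.chain 0 0
  have i00 := hD.even 0 0
  have hz1 := hp.2
  have hy1 := hq.2
  have hE := hs.even
  rw [List.append_eq_append_iff] at hEq
  have main : (∃ Y, D.u 0 :: Y1 = Z1 ++ p :: Y ∧ Z2 ++ [D.w 0] = Y ++ q :: Y2) ∨
      (∃ Y, Z1 = D.u 0 :: Y1 ++ q :: Y ∧ Y2 = Y ++ p :: (Z2 ++ [D.w 0])) := by
    rcases hEq with ⟨A, h1, h2⟩ | ⟨A, h1, h2⟩
    · cases A with
      | nil => simp at h2; exact absurd h2.1 hpq
      | cons a A => simp at h2; left; exact ⟨A, by rw [h1, h2.1], h2.2⟩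
    · cases A with
      | nil => simp at h2; exact absurd h2.1.symm hpq
      | cons a A => simp at h2; right; exact ⟨A, by rw [h1, h2.1], h2.2⟩
  rcases main with ⟨Y, h1, h2⟩ | ⟨Y, h1, h2⟩
  · obtain ⟨K, hK1, hK2⟩ := head_first hp.1
    obtain ⟨K', hK1', hK2'⟩ := tail_last h2
    have eR : D.u 0 :: (K ++ E ++ K' ++ [D.w 0]) = Z1 ++ p :: (E ++ q :: Y2) := by
      have : D.u 0 :: (K ++ E ++ K' ++ [D.w 0]) = (D.u 0 :: K) ++ (E ++ (K' ++ [D.w 0])) := by simp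
      rw [this, ← hK1, ← hK1']; simp
    have l1 := congrArg List.length h1
    have l2 := congrArg List.length hK1
    have l3 := congrArg List.length hK2
    have l4 := congrArg List.length hK2'
    simp at l1 l2 l3 l4
    have hY : Even Y.length := by grind
    have e00 : D.path 0 0 = Z1 ++ p :: (Y ++ q :: Y2) := by rw [eA, h2]
    rw [e00, List.isChain_split] at c00
    have c3 : ((p :: Y) ++ q :: Y2).IsChain G.Adj := c00.2
    rw [List.isChain_split] at c3
    obtain ⟨r1, r2⟩ := slide_res (R := K ++ E ++ K') (Rm := Y) (Z1 := []) (p' := D.u 0) (Z2 := D.I 0 1)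
      (Y1 := D.I 1 0) (q' := D.w 0) (Y2 := []) hD hn hm hs
      (by simp) (by simp) (by simp) (hD.even 1 0)
      (by rw [eR]; exact chain_glue c00.1 (chain_glue (l1 := p :: E) hs.chain c3.2))
      (by simp; grind)
      (c3.1.infix ⟨[p], [q], by simp⟩) hY
      (fun x => by rw [hK2, hK2']; simp only [List.count_append]; omega)
      (Or.inl (by rw [eR]; exact ⟨Z1, Y2, by simp⟩))
    refine ⟨_, _, r1, ?_⟩
    have e1 := nm_append m Z1 p (E ++ q :: Y2)
    have e2 := nm_append m Z1 p (Y ++ q :: Y2)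
    have e1' := nm_append m (p :: E) q Y2
    have e2' := nm_append m (p :: Y) q Y2
    have e3 := nm_eq_ne m hY p q
    have e4 := hs.nm_eq
    have e5 : 0 < ne m (p :: (Y ++ [q])) :=
      ne_pos_left (l := D.path 0 0) ⟨Z1, Y2, by rw [e00]; simp⟩ (ho 0 0).1
    rw [eR, e00] at r2
    simp only [List.cons_append] at *
    omega
  · have eI : D.I 0 0 = Y1 ++ q :: (Y ++ p :: Z2) := by
      have := hp.1
      rw [h1] at this
      simpa using this
    have l1 := congrArg List.length h1
    simp at l1
    have hY : Even Y.length := by grind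
    have l2 := congrArg List.length eI
    simp at l2
    have e00 : D.path 0 0 = (D.u 0 :: Y1) ++ q :: (Y ++ p :: (Z2 ++ [D.w 0])) := by rw [eB, h2]
    rw [e00, List.isChain_split] at c00
    have c3 : ((q :: Y) ++ p :: (Z2 ++ [D.w 0])).IsChain G.Adj := c00.2
    rw [List.isChain_split] at c3
    have hs' := hs.reverse hm
    have eR : D.u 0 :: (Y1 ++ q :: (E.reverse ++ p :: Z2) ++ [D.w 0]) =
        (D.u 0 :: Y1) ++ q :: (E.reverse ++ p :: (Z2 ++ [D.w 0])) := by simp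
    obtain ⟨r1, r2⟩ := slide_res (R := Y1 ++ q :: (E.reverse ++ p :: Z2)) (Rm := Y) (Z1 := []) (p' := D.u 0)
      (Z2 := D.I 0 1) (Y1 := D.I 1 0) (q' := D.w 0) (Y2 := []) hD hn hm hs
      (by simp) (by simp) (by simp) (hD.even 1 0)
      (by rw [eR]; exact chain_glue c00.1 (chain_glue (l1 := q :: E.reverse) hs'.chain c3.2))
      (by simp; grind)
      (c3.1.infix ⟨[q], [p], by simp⟩) hY
      (fun x => by
        rw [eI]; simp only [List.count_append, List.count_cons, List.count_reverse]; omega)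
      (Or.inr (by rw [eR]; exact ⟨D.u 0 :: Y1, Z2 ++ [D.w 0], by simp⟩))
    refine ⟨_, _, r1, ?_⟩
    have e1 := nm_append m (D.u 0 :: Y1) q (E.reverse ++ p :: (Z2 ++ [D.w 0]))
    have e2 := nm_append m (D.u 0 :: Y1) q (Y ++ p :: (Z2 ++ [D.w 0]))
    have e1' := nm_append m (q :: E.reverse) p (Z2 ++ [D.w 0])
    have e2' := nm_append m (q :: Y) p (Z2 ++ [D.w 0])
    have e3 := nm_eq_ne m hY q p
    have e4 := hs'.nm_eq
    have e6 := ne_reverse hm hs.even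
    have e5 : 0 < ne m (q :: (Y ++ [p])) :=
      ne_pos_left (l := D.path 0 0) ⟨D.u 0 :: Y1, Z2 ++ [D.w 0], by rw [e00]; simp⟩
        ((hs.out_right hm ho) 0 0).1
    rw [eR, e00] at r2
    simp only [List.cons_append] at r2 e1 e2 e1' e2' e3 e4 e5
    omega

theorem exists_perm {i l : Fin 3} (h : i ≠ l) : ∃ σ : Equiv.Perm (Fin 3), σ 0 = i ∧ σ 1 = l := by
  revert h; revert i l; decide

theorem exists_perm1 (i : Fin 3) : ∃ σ : Equiv.Perm (Fin 3), σ 0 = i := by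
  revert i; decide

theorem UAt.perm {i k : Fin 3} {σ τ : Equiv.Perm (Fin 3)} {a b} (hi : σ a = i) (hk : τ b = k)
    (h : UAt D i k Z1 p Z2) : UAt (D.perm σ τ) a b Z1 p Z2 := by
  subst hi hk; exact h

theorem WAt.perm {i k : Fin 3} {σ τ : Equiv.Perm (Fin 3)} {a b} (hi : σ a = i) (hk : τ b = k)
    (h : WAt D i k Z1 p Z2) : WAt (D.perm σ τ) a b Z1 p Z2 := by
  subst hi hk; exact h

/-- Cases 0, 1, 2: potential decreases. -/
theorem absorb012 (hD : Ok G D) (hn : OutPM G D n) (hm : ∀ v, m (m v) = v)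
    (hs : IsSeg G D n m p E q) (hpq : p ≠ q) (ho : Out D m p) {i k l j} (hp : UAt D i k Z1 p Z2)
    (hq : WAt D l j Y1 q Y2) (h : ¬ (i ≠ l ∧ k ≠ j)) :
    ∃ D' n', Res G D n p E q D' n' ∧ phi m D' n' < phi m D n := by
  by_cases h1 : i = l
  · subst h1
    obtain ⟨σ, hσ⟩ := exists_perm1 i
    by_cases h2 : k = j
    · subst h2
      obtain ⟨τ, hτ⟩ := exists_perm1 k
      obtain ⟨D', n', r1, r2⟩ := absorb0 (hD.perm σ τ) (hn.perm σ τ) hm (hs.perm σ τ) hpq (ho.perm σ τ)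
        (hp.perm hσ hτ) (hq.perm hσ hτ)
      exact ⟨D', n', r1.perm, by rwa [phi_perm] at r2⟩
    · obtain ⟨τ, hτ0, hτ1⟩ := exists_perm (Ne.symm h2)
      obtain ⟨D', n', r1, r2⟩ := absorb1 (hD.perm σ τ) (hn.perm σ τ) hm (hs.perm σ τ) (ho.perm σ τ)
        (hp.perm hσ hτ1) (hq.perm hσ hτ0)
      exact ⟨D', n', r1.perm, by rwa [phi_perm] at r2⟩
  · have h2 : k = j := by tauto
    subst h2
    obtain ⟨σ, hσ0, hσ1⟩ := exists_perm h1
    obtain ⟨τ, hτ⟩ := exists_perm1 k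
    obtain ⟨D', n', r1, r2⟩ := absorb2 (hD.perm σ τ) (hn.perm σ τ) hm (hs.perm σ τ) (ho.perm σ τ)
        (hp.perm hσ0 hτ) (hq.perm hσ1 hτ)
    exact ⟨D', n', r1.perm, by rwa [phi_perm] at r2⟩

theorem absorb {col : V → Bool} (hcol : ∀ x y, G.Adj x y → col y = !col x)
    (hD : Ok G D) (hn : OutPM G D n) (hm : ∀ v, m (m v) = v)
    (hs : IsSeg G D n m p E q) (ho : Out D m p) :
    ∃ D' n', Res G D n p E q D' n' ∧ phi m D' n' ≤ phi m D n := by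
  have key : ∀ {p q : V} {E : List V} {i k Z1 Z2}, IsSeg G D n m p E q → Out D m p →
      UAt D i k Z1 p Z2 → ∃ D' n', Res G D n p E q D' n' ∧ phi m D' n' ≤ phi m D n := by
    intro p q E i k Z1 Z2 hs ho hp
    obtain ⟨l, j, Y1, Y2, hq⟩ := hs.wloc hcol hD hp
    have hpq : p ≠ q := by
      intro h
      have := hs.col hcol
      rw [h] at this
      exact (Bool.eq_not_self _).1 this
    by_cases h : i ≠ l ∧ k ≠ j
    · obtain ⟨σ, hσ0, hσ1⟩ := exists_perm h.1
      obtain ⟨τ, hτ0, hτ1⟩ := exists_perm (Ne.symm h.2)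
      obtain ⟨r1, r2⟩ := absorb3 (hD.perm σ τ) (hn.perm σ τ) hm (hs.perm σ τ)
        (hp.perm hσ0 hτ1) (hq.perm hσ1 hτ0)
      rw [phi_perm] at r2
      exact ⟨_, _, r1.perm, by omega⟩
    · obtain ⟨D', n', r1, r2⟩ := absorb012 hD hn hm hs hpq ho hp hq h
      exact ⟨D', n', r1, r2.le⟩
  rcases loc hD hs.hp with ⟨i, k, Z1, Z2, hp⟩ | ⟨i, k, Z1, Z2, hp⟩
  · exact key hs ho hp
  · rcases loc hD hs.hq with ⟨l, j, Y1, Y2, hq⟩ | ⟨l, j, Y1, Y2, hq⟩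
    · obtain ⟨D', n', r1, r2⟩ := key (hs.reverse hm) (hs.out_right hm ho) hq
      exact ⟨D', n', r1.reverse, r2⟩
    · exfalso
      have h1 := col_WAt hcol hD hq
      have h2 := col_WAt hcol hD hp
      have h3 := hs.col hcol
      rw [h1, h2] at h3
      exact (Bool.eq_not_self _).1 h3

end absorb
end Abs

section CaseA
set_option linter.unusedSectionVars false
variable {V : Type*} [DecidableEq V]
variable {G : SimpleGraph V} {D : KD V} {n m : V → V}

def Typ (D : KD V) (i j : Fin 3) (t : Bool) (a b : V) : Prop :=
  Pr (cond t (D.path i j) (D.I i j)) a b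

def Mt (D : KD V) (n : V → V) (π : Equiv.Perm (Fin 3)) (a b : V) : Prop :=
  (D.cnt a = 0 ∧ n a = b) ∨ ∃ i j, Typ D i j (decide (π i = j)) a b

def Good (G : SimpleGraph V) (a b a' b' : V) : Prop :=
  ∃ D n π, Ok G D ∧ OutPM G D n ∧ Mt D n π a b ∧ Mt D n π a' b'

def EdgeD (D : KD V) (a b : V) : Prop := ∃ i j t, Typ D i j t a b

theorem Typ.symm {i j t} {a b : V} (h : Typ D i j t a b) : Typ D i j t b a := Pr.symm h

theorem EdgeD.symm {a b : V} (h : EdgeD D a b) : EdgeD D b a := by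
  obtain ⟨i, j, t, h⟩ := h; exact ⟨i, j, t, h.symm⟩

theorem Mt.symm {π} {a b : V} (hn : OutPM G D n) (h : Mt D n π a b) : Mt D n π b a := by
  rcases h with ⟨h1, h2⟩ | ⟨i, j, h⟩
  · left; obtain ⟨k1, k2, -⟩ := hn a h1
    rw [h2] at k1 k2; exact ⟨k1, k2⟩
  · right; exact ⟨i, j, h.symm⟩

theorem Good.symm1 {a b a' b' : V} (h : Good G a b a' b') : Good G b a a' b' := by
  obtain ⟨D, n, π, h1, h2, h3, h4⟩ := h
  exact ⟨D, n, π, h1, h2, h3.symm h2, h4⟩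

theorem Good.comm {a b a' b' : V} (h : Good G a b a' b') : Good G a' b' a b := by
  obtain ⟨D, n, π, h1, h2, h3, h4⟩ := h
  exact ⟨D, n, π, h1, h2, h4, h3⟩

theorem Typ.swap (hD : Ok G D) {i j t} {a b : V} (h : Typ D i j t a b) : Typ D.swap j i t a b := by
  cases t
  · show Pr (D.I i j).reverse a b
    rw [pr_reverse (hD.even i j)]; exact h
  · show Pr (D.swap.path j i) a b
    rw [KD.path_swap, pr_reverse]
    · exact h
    · have := hD.even i j; simp [KD.path]; grind

theorem EdgeD.swap (hD : Ok G D) {a b : V} (h : EdgeD D a b) : EdgeD D.swap a b := by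
  obtain ⟨i, j, t, h⟩ := h; exact ⟨j, i, t, h.swap hD⟩

theorem Typ.perm {σ τ : Equiv.Perm (Fin 3)} {i j t} {a b : V} (h : Typ D i j t a b) :
    Typ (D.perm σ τ) (σ.symm i) (τ.symm j) t a b := by
  unfold Typ KD.path at *; simpa [KD.perm] using h

theorem path_even (hD : Ok G D) (i j) : Even (D.path i j).length := by
  have := hD.even i j; simp [KD.path]; grind

theorem infix_edge (hD : Ok G D) {i j} {a b : V} (h : [a, b] <:+: D.path i j) : ∃ t, Typ D i j t a b := by
  obtain ⟨X, Y, h⟩ := h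
  have h' : D.path i j = X ++ a :: b :: Y := by rw [← h]; simp
  rcases Nat.even_or_odd X.length with hX | hX
  · refine ⟨true, Or.inl ?_⟩
    show EvPos (D.path i j) a b
    rw [h']; exact evPos_mid hX
  · refine ⟨false, Or.inl ?_⟩
    show EvPos (D.I i j) a b
    have hl := path_even hD i j
    cases X with
    | nil => simp at hX
    | cons x X =>
      unfold KD.path at h'
      simp only [List.cons_append, List.cons.injEq] at h'
      have h2 := h'.2
      have : D.I i j ++ [D.w j] = (X ++ [a]) ++ b :: Y := by rw [h2]; simp
      have hX' : Even X.length := by simp at hX; grind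
      rcases List.eq_nil_or_concat' Y with rfl | ⟨L, z, rfl⟩
      · exfalso
        have := congrArg List.length this
        have := hD.even i j
        simp at *; grind
      · have : D.I i j ++ [D.w j] = (X ++ a :: b :: L) ++ [z] := by rw [h2]; simp
        rw [(List.append_inj' this rfl).1]
        exact evPos_mid hX'

theorem infix_edgeD (hD : Ok G D) {i j} {a b : V} (h : [a, b] <:+: D.path i j ∨ [b, a] <:+: D.path i j) :
    EdgeD D a b := by
  rcases h with h | h
  · obtain ⟨t, h⟩ := infix_edge hD h; exact ⟨i, j, t, h⟩
  · obtain ⟨t, h⟩ := infix_edge hD h; exact ⟨i, j, t, h.symm⟩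

theorem I_infix (D : KD V) (i j) : D.I i j <:+: D.path i j := ⟨[D.u i], [D.w j], by simp [KD.path]⟩

theorem Typ.infix {i j t} {a b : V} (h : Typ D i j t a b) :
    [a, b] <:+: D.path i j ∨ [b, a] <:+: D.path i j := by
  cases t
  · exact h.imp (fun h => (evPos_infix h).trans (I_infix D i j)) (fun h => (evPos_infix h).trans (I_infix D i j))
  · exact h.imp evPos_infix evPos_infix

theorem not_out_of_edgeD {a : V} (h : Out D m a) : ¬ EdgeD D a (m a) := by
  rintro ⟨i, j, t, hh⟩
  have := h i j
  have := hh.infix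
  tauto

theorem out_of_not_edgeD (hD : Ok G D) {a : V} (h : ¬ EdgeD D a (m a)) : Out D m a := by
  intro i j
  constructor <;> intro hh <;> exact h (infix_edgeD hD (by tauto))

section fint
variable [Fintype V]

structure IsMin (G : SimpleGraph V) (m : V → V) (D : KD V) (n : V → V) : Prop where
  ok : Ok G D
  pm : OutPM G D n
  min : ∀ D' n', Ok G D' → OutPM G D' n' → phi m D n ≤ phi m D' n'

theorem IsMin.swap (hm : ∀ v, m (m v) = v) (h : IsMin G m D n) : IsMin G m D.swap n :=
  ⟨h.ok.swap, h.pm.swap, fun D' n' h1 h2 => by rw [phi_swap hm]; exact h.min D' n' h1 h2⟩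

theorem IsMin.perm (h : IsMin G m D n) (σ τ) : IsMin G m (D.perm σ τ) n :=
  ⟨h.ok.perm σ τ, h.pm.perm σ τ, fun D' n' h1 h2 => by rw [phi_perm]; exact h.min D' n' h1 h2⟩

/-- everything we know when absorbing a segment in a minimal state, after relabelling -/
structure Abs3 (G : SimpleGraph V) (m : V → V) (D1 : KD V) (n : V → V) (Z1 : List V) (p : V)
    (Z2 E Y1 : List V) (q : V) (Y2 : List V) : Prop where
  seg : IsSeg G D1 n m p E q
  out : Out D1 m p
  uat : UAt D1 0 1 Z1 p Z2
  wat : WAt D1 1 0 Y1 q Y2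
  min1 : IsMin G m D1 n
  res : Res G D1 n p E q (D1.slide Z1 p Z2 Y1 q Y2 E) (upd n (D1.I 0 0))
  min' : IsMin G m (D1.slide Z1 p Z2 Y1 q Y2 E) (upd n (D1.I 0 0))
  zero : ne m (D1.path 0 0) = 0

variable {Z1 Z2 Y1 Y2 R Rm E : List V} {p q : V}

theorem min_struct {col : V → Bool} (hcol : ∀ x y, G.Adj x y → col y = !col x)
    (hm : ∀ v, m (m v) = v) (hD : IsMin G m D n)
    (hs : IsSeg G D n m p E q) (ho : Out D m p) {i k : Fin 3} (hp : UAt D i k Z1 p Z2) :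
    ∃ (σ τ : Equiv.Perm (Fin 3)) (Y1 Y2 : List V), σ 0 = i ∧ τ 1 = k ∧
      Abs3 G m (D.perm σ τ) n Z1 p Z2 E Y1 q Y2 := by
  obtain ⟨l, j, Y1, Y2, hq⟩ := hs.wloc hcol hD.ok hp
  have hpq : p ≠ q := by
    intro h
    have := hs.col hcol
    rw [h] at this
    exact (Bool.eq_not_self _).1 this
  by_cases h : i ≠ l ∧ k ≠ j
  · obtain ⟨σ, hσ0, hσ1⟩ := exists_perm h.1
    obtain ⟨τ, hτ0, hτ1⟩ := exists_perm (Ne.symm h.2)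
    have hp' := hp.perm hσ0 hτ1
    have hq' := hq.perm hσ1 hτ0
    have hM := hD.perm σ τ
    obtain ⟨r1, r2⟩ := absorb3 hM.ok hM.pm hm (hs.perm σ τ) hp' hq'
    have h0 := hM.min _ _ r1.ok r1.pm
    refine ⟨σ, τ, Y1, Y2, hσ0, hτ1, hs.perm σ τ, ho.perm σ τ, hp', hq', hM, r1,
      ⟨r1.ok, r1.pm, fun D' n' h1 h2 => ?_⟩, by omega⟩
    have := hM.min D' n' h1 h2
    omega
  · exfalso
    obtain ⟨D', n', r1, r2⟩ := absorb012 hD.ok hD.pm hm hs hpq ho hp hq h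
    have := hD.min _ _ r1.ok r1.pm
    omega

end fint

theorem nodup_next {A B : List V} {c y z : V} (h : (A ++ c :: y :: B).Nodup)
    (hi : [c, z] <:+: A ++ c :: y :: B) : z = y := by
  obtain ⟨s, t, e⟩ := hi
  have e' : s ++ c :: z :: t = A ++ c :: y :: B := by rw [← e]; simp
  have hA : c ∉ A := by
    intro hh; rw [List.nodup_append] at h; exact h.2.2 c hh c (by simp) rfl
  have hs : c ∉ s := by
    intro hh; rw [← e', List.nodup_append] at h; exact h.2.2 c hh c (by simp) rfl
  rw [List.append_eq_append_iff] at e'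
  rcases e' with ⟨L, f1, f2⟩ | ⟨L, f1, f2⟩
  · cases L with
    | nil => simp at f2; exact f2.1
    | cons l L =>
      simp at f2
      exact absurd (by rw [f1, f2.1]; simp) hA
  · cases L with
    | nil => simp at f2; exact f2.1.symm
    | cons l L =>
      simp at f2
      exact absurd (by rw [f1, f2.1]; simp) hs

theorem nodup_prev {A B : List V} {c x z : V} (h : (A ++ x :: c :: B).Nodup)
    (hi : [z, c] <:+: A ++ x :: c :: B) : z = x := by
  have h' := List.nodup_reverse.2 h
  have e : (A ++ x :: c :: B).reverse = B.reverse ++ c :: x :: A.reverse := by simp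
  rw [e] at h'
  rw [← infix_rev2, e] at hi
  exact nodup_next h' hi

theorem walkout (hm : ∀ v, m (m v) = v) : ∀ (K A B : List V) (x y : V),
    (A ++ x :: (K ++ y :: B)).Nodup → Odd K.length → K.head? ≠ some (m x) → K.getLast? ≠ some (m y) →
    ∃ K1 c K2, K = K1 ++ c :: K2 ∧ Even K1.length ∧
      ¬ [c, m c] <:+: A ++ x :: (K ++ y :: B) ∧ ¬ [m c, c] <:+: A ++ x :: (K ++ y :: B)
  | [], _, _, _, _, _, h, _, _ => by simp at h
  | [c], A, B, x, y, hn, _, h1, h2 => by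
    refine ⟨[], c, [], rfl, by simp, ?_, ?_⟩
    · intro hh
      have := nodup_next (A := A ++ [x]) (c := c) (y := y) (B := B) (by simpa using hn) (by simpa using hh)
      rw [← this, hm] at h2; simp at h2
    · intro hh
      have := nodup_prev (A := A) (c := c) (x := x) (B := y :: B) (by simpa using hn) (by simpa using hh)
      rw [← this, hm] at h1; simp at h1
  | c :: d :: K, A, B, x, y, hn, ho, h1, h2 => by
    by_cases hcd : m c = d
    · have hK : K ≠ [] := by rintro rfl; simp [Nat.odd_add_one] at ho
      have hdc : m d = c := by rw [← hcd, hm]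
      obtain ⟨K1, z, K2, e1, e2, e3, e4⟩ := walkout hm K (A ++ [x, c]) B d y (by simpa using hn)
        (by simp at ho; grind) (by
          rw [hdc]
          intro hh
          cases K with
          | nil => exact hK rfl
          | cons k K =>
            simp at hh
            subst hh
            rw [List.nodup_append] at hn
            simp at hn) (by
          intro hh; apply h2
          cases K with
          | nil => exact absurd rfl hK
          | cons k K => simpa using hh)
      refine ⟨c :: d :: K1, z, K2, by simp [e1], by simp; grind, ?_, ?_⟩
      · simpa using e3
      · simpa using e4
    · refine ⟨[], c, d :: K, rfl, by simp, ?_, ?_⟩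
      · intro hh
        have := nodup_next (A := A ++ [x]) (c := c) (y := d) (B := K ++ y :: B) (by simpa using hn) (by simpa using hh)
        exact hcd this
      · intro hh
        have := nodup_prev (A := A) (c := c) (x := x) (B := d :: (K ++ y :: B)) (by simpa using hn) (by simpa using hh)
        rw [← this, hm] at h1; simp at h1

theorem I_path_count (D : KD V) {i j i' j' : Fin 3} (h : ¬ (i = i' ∧ j = j')) (x : V) :
    (D.I i j).count x + (D.path i' j').count x ≤ D.cnt x := by
  rw [path_count]
  simp only [KD.cnt, Fin.sum_univ_three]
  fin_cases i <;> fin_cases j <;> fin_cases i' <;> fin_cases j' <;>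
    first
    | (exact absurd ⟨rfl, rfl⟩ h)
    | (simp only [Fin.zero_eta, Fin.mk_one, Fin.reduceFinMk]; omega)

theorem mid_mem_I {i j} {A K B : List V} {x y : V} (h : D.path i j = A ++ x :: (K ++ y :: B)) :
    ∃ L R, D.I i j = L ++ K ++ R ∧ A ++ [x] = D.u i :: L ∧ y :: B = R ++ [D.w j] := by
  obtain ⟨K0, h1, h2⟩ := head_first h
  have h3 : D.I i j ++ [D.w j] = (K0 ++ K) ++ y :: B := by rw [h2]; simp
  obtain ⟨K', h4, h5⟩ := tail_last h3
  exact ⟨K0, K', h5, h1, h4⟩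

/-- interior walkout gives an Out vertex -/
theorem walkout_out (hm : ∀ v, m (m v) = v) (hD : Ok G D) {i j} {A K B : List V} {x y : V}
    (h : D.path i j = A ++ x :: (K ++ y :: B)) (hK : Odd K.length) (h1 : K.head? ≠ some (m x))
    (h2 : K.getLast? ≠ some (m y)) :
    ∃ K1 c K2, K = K1 ++ c :: K2 ∧ Even K1.length ∧ Even K2.length ∧ Out D m c := by
  have hn := hD.nodup i j
  rw [h] at hn
  obtain ⟨K1, c, K2, e1, e2, e3, e4⟩ := walkout hm K A B x y hn hK h1 h2
  refine ⟨K1, c, K2, e1, e2, by rw [e1] at hK; simp at hK; grind, ?_⟩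
  obtain ⟨L, R, hI, -, -⟩ := mid_mem_I h
  have hc : c ∈ D.I i j := by rw [hI, e1]; simp
  have hc1 := List.count_pos_iff.2 hc
  intro i' j'
  by_cases hij : i = i' ∧ j = j'
  · obtain ⟨rfl, rfl⟩ := hij
    rw [h]; exact ⟨e3, e4⟩
  · have h1 := I_path_count D hij c
    have h2 := hD.le c
    have h3 : c ∉ D.path i' j' := List.count_eq_zero.1 (by omega)
    exact ⟨fun hh => h3 (infix_mem hh (by simp)), fun hh => h3 (infix_mem hh (by simp))⟩

section caseA
variable [Fintype V] {col : V → Bool}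

theorem caseA1core (hcol : ∀ x y, G.Adj x y → col y = !col x)
    (hm : ∀ v, m (m v) = v) (hma : ∀ v, G.Adj v (m v)) (hD : IsMin G m D n) {i j} {X K Y : List V}
    {a b a' b' : V} (h : D.path i j = X ++ a :: b :: (K ++ a' :: b' :: Y)) (hX : Even X.length)
    (hK : Odd K.length) (hab : m a = b) (hab' : m a' = b') : Good G a b a' b' := by
  have hn := hD.ok.nodup i j
  have hba : m b = a := by rw [← hab, hm]
  have h' : D.path i j = (X ++ [a]) ++ b :: (K ++ a' :: (b' :: Y)) := by rw [h]; simp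
  obtain ⟨K1, c, K2, e1, e2, e3, ho⟩ := walkout_out hm hD.ok h' hK
    (by
      rw [hba]; intro hh
      have : a ∈ K := List.mem_of_head? hh
      rw [h] at hn
      simp [List.nodup_append, this] at hn)
    (by
      rw [hab']; intro hh
      have : b' ∈ K := List.mem_of_getLast? hh
      rw [h] at hn
      simp [List.nodup_append] at hn
      grind)
  -- location
  obtain ⟨R, hR1, hR2⟩ := tail_last (A := D.u i :: D.I i j) (w := D.w j) (Y1 := X ++ a :: b :: K)
    (q := a') (Y2 := b' :: Y) (by
      have : D.path i j = D.u i :: D.I i j ++ [D.w j] := rfl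
      rw [← this, h]; simp)
  have hRc : R ≠ [] := by rintro rfl; simp at hR1
  obtain ⟨R', rfl⟩ : ∃ R', R = a' :: R' := by
    cases R with
    | nil => exact absurd rfl hRc
    | cons r R => simp at hR1; exact ⟨R, by rw [hR1.1]⟩
  simp only [List.cons_append, List.cons.injEq, true_and] at hR1
  have hR'ne : R' ≠ [] := by
    rintro rfl
    have l1 := congrArg List.length hR2
    have := hD.ok.even i j
    simp at l1; grind
  obtain ⟨R', rfl⟩ : ∃ R'', R' = b' :: R'' := by
    cases R' with
    | nil => exact absurd rfl hR'ne
    | cons r R => simp at hR1; exact ⟨R, by rw [hR1.1]⟩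
  have hU : UAt D i j (X ++ a :: b :: K1) c (K2 ++ a' :: b' :: R') := by
    refine ⟨by rw [hR2, e1]; simp, by simp; grind⟩
  have hc : D.cnt c ≠ 0 := by
    apply cnt_of_mem (i := i) (j := j); rw [h, e1]; simp
  obtain ⟨E, q, hs⟩ := seg_exists hD.pm hD.ok.le hm hma hc
  obtain ⟨σ, τ, Y1, Y2, -, -, hA⟩ := min_struct hcol hm hD hs ho hU
  refine ⟨_, _, 1, hA.res.ok, hA.res.pm, Or.inr ⟨0, 2, ?_⟩, Or.inr ⟨0, 1, ?_⟩⟩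
  · show Pr ((X ++ a :: b :: K1).reverse ++ _) a b
    rw [pr_append (by simp; grind), pr_reverse (by simp; grind)]
    exact Or.inl (Or.inl (evPos_mid hX))
  · show Pr (K2 ++ a' :: b' :: R') a' b'
    exact Or.inl (evPos_mid e3)

theorem caseA1 (hcol : ∀ x y, G.Adj x y → col y = !col x)
    (hm : ∀ v, m (m v) = v) (hma : ∀ v, G.Adj v (m v)) (hD : IsMin G m D n) {i j}
    {a b a' b' : V} (hab : m a = b) (hab' : m a' = b')
    (h1 : Typ D i j true a b) (h2 : Typ D i j false a' b') : Good G a b a' b' := by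
  have key : ∀ {a b a' b' : V}, m a = b → m a' = b' → EvPos (D.path i j) a b → EvPos (D.I i j) a' b' →
      Good G a b a' b' := by
    intro a b a' b' hab hab' h1 h2
    have hn := hD.ok.nodup i j
    obtain ⟨X, Y, hX, e1⟩ := evPos_split h1
    obtain ⟨X', Y', hX', e2⟩ := evPos_split h2
    have e2' : D.path i j = (D.u i :: X') ++ a' :: b' :: (Y' ++ [D.w j]) := by
      unfold KD.path; rw [e2]; simp
    have hl := path_even hD.ok i j
    have hE := e1.symm.trans e2'
    have hba : m b = a := by rw [← hab, hm]
    have hba' : m b' = a' := by rw [← hab', hm]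
    rw [List.append_eq_append_iff] at hE
    rcases hE with ⟨A, f1, f2⟩ | ⟨A, f1, f2⟩
    · have lA := congrArg List.length f1
      simp at lA
      match A, f1, f2, lA with
      | [], f1, f2, lA => exfalso; simp at lA; grind
      | [x], f1, f2, lA =>
        exfalso
        simp at f2
        have h3 : b' = a := by rw [← hab', ← f2.2.1, hba]
        rw [e1, f2.2.2, h3] at hn
        simp [List.nodup_append] at hn
      | x :: y :: K, f1, f2, lA =>
        simp at f2
        refine caseA1core hcol hm hma hD (i := i) (j := j) (X := X) (K := K) (Y := Y' ++ [D.w j]) ?_ hX ?_ hab hab'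
        · rw [e1, f2.2.2]
        · simp at lA; grind
    · have lA := congrArg List.length f1
      simp at lA
      match A, f1, f2, lA with
      | [], f1, f2, lA => exfalso; simp at lA; grind
      | [x], f1, f2, lA =>
        exfalso
        simp at f2
        have h3 : b = a' := by rw [← hab, ← f2.2.1, hba']
        rw [e2', f2.2.2, h3] at hn
        simp [List.nodup_append] at hn
      | x :: y :: K, f1, f2, lA =>
        simp at f2
        have l2 := congrArg List.length e1
        refine (caseA1core hcol hm hma (hD.swap hm) (i := j) (j := i) (X := Y.reverse) (K := K.reverse)
          (Y := (D.u i :: X').reverse) (a := b) (b := a) (a' := b') (b' := a') ?_ ?_ ?_ hba hba').symm1.comm.symm1.comm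
        · rw [KD.path_swap, e1, f1, f2.1, f2.2.1]; simp
        · rw [l2] at hl; simp at hl ⊢; grind
        · simp at lA ⊢; grind
  have hba : m b = a := by rw [← hab, hm]
  have hba' : m b' = a' := by rw [← hab', hm]
  rcases h1 with h1 | h1 <;> rcases h2 with h2 | h2
  · exact key hab hab' h1 h2
  · exact (key hab hba' h1 h2).comm.symm1.comm
  · exact (key hba hab' h1 h2).symm1
  · exact (key hba hba' h1 h2).symm1.comm.symm1.comm

theorem permA2 {r : Fin 3} (hr : r ≠ 0) : ∃ π : Equiv.Perm (Fin 3), π r = 1 ∧ π 0 ≠ 2 := by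
  revert hr; revert r; decide

theorem caseA2core (hcol : ∀ x y, G.Adj x y → col y = !col x)
    (hm : ∀ v, m (m v) = v) (hma : ∀ v, G.Adj v (m v)) (hD : IsMin G m D n) {i j j'} (hj : j ≠ j') {K Y : List V}
    {a b a' b' : V} (h : D.path i j' = D.u i :: (K ++ a' :: b' :: Y))
    (hK : Odd K.length) (hu : K.head? ≠ some (m (D.u i))) (hab' : m a' = b')
    (he : Typ D i j true a b) : Good G a b a' b' := by
  have hn := hD.ok.nodup i j'
  obtain ⟨K1, c, K2, e1, e2, e3, ho⟩ := walkout_out (A := []) hm hD.ok h hK hu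
    (by
      rw [hab']; intro hh
      have : b' ∈ K := List.mem_of_getLast? hh
      rw [h] at hn
      simp [List.nodup_append] at hn
      grind)
  have hW : WAt D i j' K1 c (K2 ++ a' :: b' :: Y) := by
    refine ⟨?_, e2⟩
    unfold KD.path at h
    simp only [List.cons.injEq, true_and] at h
    rw [h, e1]; simp
  have hU := hW.swap hD.ok
  have hc : D.cnt c ≠ 0 := by
    apply cnt_of_mem (i := i) (j := j'); rw [h, e1]; simp
  obtain ⟨E, q, hs⟩ := seg_exists hD.pm hD.ok.le hm hma hc
  obtain ⟨σ, τ, Y1, Y2, hσ, hτ, hA⟩ := min_struct hcol hm (hD.swap hm) hs.swap ho.swap hU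
  have hT := (he.swap hD.ok).perm (σ := σ) (τ := τ)
  have hr : σ.symm j ≠ 0 := by
    intro hh; apply hj; rw [← hσ, ← hh]; simp
  have hτ' : τ.symm i = 1 := by rw [← hτ]; simp
  rw [hτ'] at hT
  obtain ⟨π, hπ1, hπ2⟩ := permA2 hr
  refine ⟨_, _, π, hA.res.ok, hA.res.pm, Or.inr ⟨σ.symm j, 1, ?_⟩, Or.inr ⟨0, 2, ?_⟩⟩
  · rw [hπ1]
    generalize σ.symm j = r at *
    have hr' : r = 1 ∨ r = 2 := by clear hT hπ1; revert hr; revert r; decide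
    rcases hr' with rfl | rfl <;> exact hT
  · have hev := hU.2
    have : decide (π 0 = 2) = false := by simpa using hπ2
    rw [this]
    show Pr ((K2 ++ a' :: b' :: Y).reverse.reverse ++ _) a' b'
    rw [List.reverse_reverse, pr_append (by simp at hev ⊢; grind)]
    exact Or.inl (Or.inl (evPos_mid e3))

theorem tails_count (D : KD V) {i j j' : Fin 3} (h : j ≠ j') (x : V) :
    (D.I i j ++ [D.w j]).count x + (D.I i j' ++ [D.w j']).count x ≤ D.cnt x := by
  simp only [KD.cnt, Fin.sum_univ_three, List.count_append]
  fin_cases i <;> fin_cases j <;> fin_cases j' <;>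
    first
    | (exact absurd rfl h)
    | (simp only [Fin.zero_eta, Fin.mk_one, Fin.reduceFinMk]; omega)

theorem caseA2 (hcol : ∀ x y, G.Adj x y → col y = !col x)
    (hm : ∀ v, m (m v) = v) (hma : ∀ v, G.Adj v (m v)) (hD : IsMin G m D n) {i j j'} (hj : j ≠ j')
    {a b a' b' : V} (hab : m a = b) (hab' : m a' = b')
    (h1 : Typ D i j true a b) (h2 : Typ D i j' true a' b') : Good G a b a' b' := by
  -- key step
  have key : ∀ {j j' : Fin 3} {a b a' b' : V}, j ≠ j' → m a' = b' → Typ D i j true a b →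
      EvPos (D.path i j') a' b' → (D.I i j' ++ [D.w j']).head? ≠ some (m (D.u i)) → Good G a b a' b' := by
    intro j j' a b a' b' hj hab' h1 h2 hu
    obtain ⟨X, Y, hX, e⟩ := evPos_split h2
    cases X with
    | nil =>
      exfalso
      unfold KD.path at e
      simp only [List.nil_append, List.cons.injEq] at e
      rw [e.2, e.1, hab'] at hu
      simp at hu
    | cons x K =>
      have e' := e
      unfold KD.path at e
      simp only [List.cons_append, List.cons.injEq] at e
      have hK : Odd K.length := by simp at hX; grind
      refine caseA2core hcol hm hma hD hj (K := K) (Y := Y) ?_ hK ?_ hab' h1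
      · rw [e', e.1]; simp
      · cases K with
        | nil => simp at hK
        | cons k K => rw [e.2] at hu; simpa using hu
  have key' : ∀ {j j' : Fin 3} {a b a' b' : V}, j ≠ j' → m a' = b' → Typ D i j true a b →
      Typ D i j' true a' b' → (D.I i j' ++ [D.w j']).head? ≠ some (m (D.u i)) → Good G a b a' b' := by
    intro j j' a b a' b' hj hab' h1 h2 hu
    rcases h2 with h2 | h2
    · exact key hj hab' h1 h2 hu
    · exact (key hj (by rw [← hab', hm]) h1 h2 hu).comm.symm1.comm
  by_cases hu : (D.I i j' ++ [D.w j']).head? = some (m (D.u i))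
  · refine (key' hj.symm hab h2 h1 ?_).comm
    intro hh
    have m1 := List.count_pos_iff.2 (List.mem_of_head? hu)
    have m2 := List.count_pos_iff.2 (List.mem_of_head? hh)
    have := tails_count D (i := i) hj (m (D.u i))
    have := hD.ok.le (m (D.u i))
    omega
  · exact key' hj hab' h1 h2 hu

theorem perm_cases : ∀ (i j i' j' : Fin 3) (t t' : Bool),
    (∃ π : Equiv.Perm (Fin 3), decide (π i = j) = t ∧ decide (π i' = j') = t') ∨
    (i = i' ∧ j = j' ∧ t ≠ t') ∨ (t = true ∧ t' = true ∧ ((i = i' ∧ j ≠ j') ∨ (i ≠ i' ∧ j = j'))) := by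
  decide

theorem caseA (hcol : ∀ x y, G.Adj x y → col y = !col x)
    (hm : ∀ v, m (m v) = v) (hma : ∀ v, G.Adj v (m v)) (hD : IsMin G m D n)
    {a b a' b' : V} (hab : m a = b) (hab' : m a' = b')
    (h1 : EdgeD D a b) (h2 : EdgeD D a' b') : Good G a b a' b' := by
  obtain ⟨i, j, t, h1⟩ := h1
  obtain ⟨i', j', t', h2⟩ := h2
  rcases perm_cases i j i' j' t t' with ⟨π, e1, e2⟩ | ⟨rfl, rfl, ht⟩ | ⟨rfl, rfl, ⟨rfl, hj⟩ | ⟨hi, rfl⟩⟩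
  · exact ⟨D, n, π, hD.ok, hD.pm, Or.inr ⟨i, j, by rwa [e1]⟩, Or.inr ⟨i', j', by rwa [e2]⟩⟩
  · cases t <;> cases t'
    · exact absurd rfl ht
    · exact (caseA1 hcol hm hma hD hab' hab h2 h1).comm
    · exact caseA1 hcol hm hma hD hab hab' h1 h2
    · exact absurd rfl ht
  · exact caseA2 hcol hm hma hD hj hab hab' h1 h2
  · exact caseA2 hcol hm hma (hD.swap hm) hi hab hab' (h1.swap hD.ok) (h2.swap hD.ok)

end caseA
end CaseA

section CaseB
set_option linter.unusedSectionVars false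
variable {V : Type*} [DecidableEq V]
variable {G : SimpleGraph V} {D : KD V} {n m : V → V}

theorem infix2_append {a b c : V} : ∀ {A B : List V}, [a, b] <:+: A ++ c :: B →
    [a, b] <:+: A ++ [c] ∨ [a, b] <:+: c :: B
  | [], _, h => Or.inr h
  | x :: A, B, h => by
    rw [List.cons_append, List.infix_cons_iff] at h
    rcases h with h | h
    · left
      cases A with
      | nil =>
        simp only [List.nil_append, List.cons_prefix_cons, List.nil_prefix, and_true] at h
        obtain ⟨rfl, rfl⟩ := h
        exact List.infix_refl _
      | cons y A =>
        simp only [List.cons_append, List.cons_prefix_cons, List.nil_prefix, and_true] at h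
        obtain ⟨rfl, rfl⟩ := h
        exact ⟨[], A ++ [c], by simp⟩
    · rcases infix2_append h with h | h
      · left; exact h.trans (List.infix_append [x] (A ++ [c]) [] |>.trans (by simp))
      · right; exact h

/-- edge on a path, either direction -/
def Inf2 (l : List V) (a b : V) : Prop := [a, b] <:+: l ∨ [b, a] <:+: l

theorem Inf2.mono {l l' : List V} {a b : V} (h : Inf2 l a b) (hl : l <:+: l') : Inf2 l' a b :=
  h.imp (fun h => h.trans hl) (fun h => h.trans hl)

theorem Inf2.rev {l : List V} {a b : V} (h : Inf2 l a b) : Inf2 l.reverse a b := by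
  unfold Inf2; rw [infix_rev2, infix_rev2]; exact h.symm

theorem Inf2.append {a b c : V} {A B : List V} (h : Inf2 (A ++ c :: B) a b) :
    Inf2 (A ++ [c]) a b ∨ Inf2 (c :: B) a b := by
  rcases h with h | h
  · rcases infix2_append h with h | h
    · exact Or.inl (Or.inl h)
    · exact Or.inr (Or.inl h)
  · rcases infix2_append h with h | h
    · exact Or.inl (Or.inr h)
    · exact Or.inr (Or.inr h)

theorem EdgeD.inf2 {a b : V} (h : EdgeD D a b) : ∃ i j, Inf2 (D.path i j) a b := by
  obtain ⟨i, j, t, h⟩ := h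
  exact ⟨i, j, h.infix⟩

theorem Inf2.edgeD (hD : Ok G D) {i j} {a b : V} (h : Inf2 (D.path i j) a b) : EdgeD D a b := infix_edgeD hD h

variable {Z1 Z2 Y1 Y2 R E : List V} {p q : V}

theorem slide_path_same (D : KD V) {i j : Fin 3} (hi : i ≠ 0) (hj : j ≠ 0) :
    (D.slide Z1 p Z2 Y1 q Y2 R).path i j = D.path i j := by
  fin_cases i <;> fin_cases j <;> first | exact absurd rfl hi | exact absurd rfl hj | rfl

theorem slide_edge (hp : UAt D 0 1 Z1 p Z2) (hq : WAt D 1 0 Y1 q Y2) {i j : Fin 3} (hij : ¬ (i = 0 ∧ j = 0))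
    {a b : V} (h : Inf2 (D.path i j) a b) : ∃ i' j', Inf2 ((D.slide Z1 p Z2 Y1 q Y2 R).path i' j') a b := by
  obtain ⟨K, k1, k2⟩ := head_first hp.1
  obtain ⟨K', k1', k2'⟩ := tail_last hq.1
  have p01 : (D.slide Z1 p Z2 Y1 q Y2 R).path 0 1 = p :: (Z2 ++ [D.w 1]) := rfl
  have p02 : (D.slide Z1 p Z2 Y1 q Y2 R).path 0 2 = p :: ((Z1.reverse ++ D.I 0 2) ++ [D.w 2]) := rfl
  have p10 : (D.slide Z1 p Z2 Y1 q Y2 R).path 1 0 = D.u 1 :: (Y1 ++ [q]) := rfl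
  have p20 : (D.slide Z1 p Z2 Y1 q Y2 R).path 2 0 = D.u 2 :: ((D.I 2 0 ++ Y2.reverse) ++ [q]) := rfl
  by_cases hi : i = 0
  · subst hi
    have hj : j = 1 ∨ j = 2 := by
      clear h; revert hij; revert j; decide
    rcases hj with rfl | rfl
    · have e : D.path 0 1 = Z1 ++ p :: (Z2 ++ [D.w 1]) := by
        have : D.path 0 1 = (D.u 0 :: D.I 0 1) ++ [D.w 1] := rfl
        rw [this, hp.1]; simp
      rw [e] at h
      rcases h.append with h | h
      · refine ⟨0, 2, h.rev.mono ?_⟩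
        rw [p02]
        exact ⟨[], D.I 0 2 ++ [D.w 2], by simp⟩
      · exact ⟨0, 1, by rw [p01]; exact h⟩
    · refine ⟨0, 2, h.mono ?_⟩
      rw [p02]
      have : p :: (Z1.reverse ++ D.I 0 2 ++ [D.w 2]) = (Z1 ++ [p]).reverse ++ (D.I 0 2 ++ [D.w 2]) := by simp
      rw [this, k1]
      exact ⟨K.reverse, [], by simp [KD.path]⟩
  · by_cases hj : j = 0
    · subst hj
      have hi : i = 1 ∨ i = 2 := by
        clear h; revert hij; revert i; decide
      rcases hi with rfl | rfl
      · have e : D.path 1 0 = (D.u 1 :: Y1) ++ q :: Y2 := by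
          have : D.path 1 0 = D.u 1 :: (D.I 1 0 ++ [D.w 0]) := rfl
          rw [this, hq.1]; simp
        rw [e] at h
        rcases h.append with h | h
        · exact ⟨1, 0, by rw [p10]; exact h⟩
        · refine ⟨2, 0, h.rev.mono ?_⟩
          rw [p20]
          exact ⟨D.u 2 :: D.I 2 0, [], by simp⟩
      · refine ⟨2, 0, h.mono ?_⟩
        rw [p20]
        have : D.u 2 :: (D.I 2 0 ++ Y2.reverse ++ [q]) = D.u 2 :: (D.I 2 0 ++ (q :: Y2).reverse) := by simp
        rw [this, k1']
        exact ⟨[], K'.reverse, by simp [KD.path]⟩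
    · exact ⟨i, j, by rw [slide_path_same D hi hj]; exact h⟩

theorem zero_not_out (hm : ∀ v, m (m v) = v) (hD : Ok G D) {i j} (hz : ne m (D.path i j) = 0) {x : V} (hx : x ∈ D.path i j) :
    ¬ Out D m x := by
  intro ho
  obtain ⟨w, hw⟩ := exists_pr (path_even hD i j) hx
  rw [ne_eq_zero] at hz
  have hxw : m x = w := by
    rcases hw with hw | hw
    · exact hz _ _ hw
    · rw [← hz _ _ hw, hm]
  rw [← hxw] at hw
  rcases hw with hw | hw
  · exact (ho i j).1 (evPos_infix hw)
  · exact (ho i j).2 (evPos_infix hw)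

theorem IsSeg.m_mem (hm : ∀ v, m (m v) = v) (h : IsSeg G D n m p E q) {v : V} (hv : v ∈ p :: (E ++ [q])) :
    m v ∈ p :: (E ++ [q]) := by
  have he : Even (p :: (E ++ [q])).length := by have := h.even; simp; grind
  obtain ⟨w, hw⟩ := exists_pr he hv
  have : m v = w := by
    rcases hw with hw | hw
    · exact h.mpair _ _ hw
    · rw [← h.mpair _ _ hw, hm]
  rw [this]; exact (pr_mem hw).2

theorem IsSeg.n_mem (h : IsSeg G D n m p E q) {v : V} (hv : v ∈ E) : n v ∈ E := by
  obtain ⟨w, hw⟩ := exists_pr h.even hv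
  have : n v = w := by
    rcases hw with hw | hw
    · exact (h.npair _ _ hw).1
    · exact (h.npair _ _ hw).2
  rw [this]; exact (pr_mem hw).2

theorem IsSeg.cnt_E (h : IsSeg G D n m p E q) {v : V} (hv : v ∈ E) : D.cnt v = 0 := by
  have := h.out v
  have := List.count_pos_iff.2 hv
  omega

/-- two segments with different ends are disjoint -/
theorem IsSeg.disj (hm : ∀ v, m (m v) = v) (hn : OutPM G D n) (h : IsSeg G D n m p E q) {z q2 : V} {E2 : List V}
    (h2 : IsSeg G D n m z E2 q2) (hzp : z ≠ p) (hzq : z ≠ q) {x : V} (hx : x ∈ z :: (E2 ++ [q2])) :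
    x ∉ p :: (E ++ [q]) := by
  intro hx'
  have key := h2.closed (T := fun v => v ∈ p :: (E ++ [q]))
    (fun v => ⟨fun hv => h.m_mem hm hv, fun hv => by have := h.m_mem hm hv; rwa [hm] at this⟩)
    (fun v hv => by
      have hin : ∀ v, D.cnt v = 0 → v ∈ p :: (E ++ [q]) → n v ∈ p :: (E ++ [q]) := by
        intro v hv hh
        have : v ∈ E := by
          simp only [List.mem_cons, List.mem_append, List.not_mem_nil, or_false] at hh
          rcases hh with rfl | hh | rfl
          · exact absurd hv h.hp
          · exact hh
          · exact absurd hv h.hq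
        have := h.n_mem this
        simp [this]
      obtain ⟨o1, o2, -⟩ := hn v hv
      refine ⟨hin v hv, fun hh => ?_⟩
      have := hin _ o1 hh
      rwa [o2] at this) hx
  have hz := key.1 hx'
  simp only [List.mem_cons, List.mem_append, List.not_mem_nil, or_false] at hz
  rcases hz with hz | hz | hz
  · exact hzp hz
  · exact h2.hp (h.cnt_E hz)
  · exact hzq hz

section fint
variable [Fintype V] {col : V → Bool}

theorem Abs3.cnt (hm : ∀ v, m (m v) = v) (h : Abs3 G m D n Z1 p Z2 E Y1 q Y2) (x : V) :
    (D.slide Z1 p Z2 Y1 q Y2 E).cnt x + (D.I 0 0).count x = D.cnt x + E.count x := by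
  have hc : (D.I 0 0).IsChain G.Adj := by
    refine (h.min1.ok.chain 0 0).infix ⟨[D.u 0], [D.w 0], ?_⟩
    simp [KD.path]
  exact (slide_core h.min1.ok h.min1.pm hm h.uat.1 h.uat.2 h.wat.1 h.wat.2 h.seg.chain h.seg.even hc
    (h.min1.ok.even 0 0) h.seg.even h.seg.npair h.seg.out (fun x => by omega)).2.2.1 x

theorem Abs3.path00 (_h : Abs3 G m D n Z1 p Z2 E Y1 q Y2) :
    (D.slide Z1 p Z2 Y1 q Y2 E).path 0 0 = p :: (E ++ [q]) := rfl

theorem caseB (hcol : ∀ x y, G.Adj x y → col y = !col x)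
    (hm : ∀ v, m (m v) = v) (hma : ∀ v, G.Adj v (m v)) (hA : Abs3 G m D n Z1 p Z2 E Y1 q Y2)
    {a b a' b' : V} (hab : m a = b) (hab' : m a' = b')
    (he : Inf2 (D.path 0 0) a b) (he' : Inf2 (p :: (E ++ [q])) a' b') : Good G a b a' b' := by
  have hD := hA.min1
  have hp00 : p ∉ D.path 0 0 := fun h => zero_not_out hm hD.ok hA.zero h hA.out
  have hUp := hA.uat
  obtain ⟨K, hZ1⟩ : ∃ K, Z1 = D.u 0 :: K := by
    cases Z1 with
    | nil =>
      have := hUp.1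
      simp at this
      exact absurd (by rw [← this.1]; simp [KD.path]) hp00
    | cons z K =>
      have := hUp.1
      simp at this
      exact ⟨K, by rw [this.1]⟩
  have hI : D.I 0 1 = K ++ p :: Z2 := by
    have := hUp.1
    rw [hZ1] at this
    simpa using this
  have hKodd : Odd K.length := by
    have := hUp.2
    rw [hZ1] at this
    simp at this; grind
  have hpath : D.path 0 1 = [] ++ D.u 0 :: (K ++ p :: (Z2 ++ [D.w 1])) := by
    unfold KD.path; rw [hI]; simp
  obtain ⟨K1, z, K2, e1, e2, e3, hoz⟩ := walkout_out hm hD.ok hpath hKodd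
    (by
      intro hh
      -- `m u0` is the second vertex of `path 0 0`
      have hmem : m (D.u 0) ∈ D.I 0 0 ++ [D.w 0] := by
        have hz := hA.zero
        rw [ne_eq_zero] at hz
        unfold KD.path at hz
        cases hI0 : D.I 0 0 with
        | nil =>
          rw [hI0] at hz
          rw [hz (D.u 0) (D.w 0) (by simp)]; simp
        | cons y Y =>
          rw [hI0] at hz
          rw [hz (D.u 0) y (by simp [EvPos])]; simp
      have h1 : m (D.u 0) ∈ D.I 0 1 ++ [D.w 1] := by
        rw [hI]; have := List.mem_of_head? hh; simp [this]
      have := tails_count D (i := 0) (j := 0) (j' := 1) (by decide) (m (D.u 0))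
      have := hD.ok.le (m (D.u 0))
      have := List.count_pos_iff.2 h1
      have := List.count_pos_iff.2 hmem
      omega)
    (by
      intro hh
      obtain ⟨L, hL⟩ := List.getLast?_eq_some_iff.1 hh
      apply (hA.out 0 1).2
      rw [hpath, hL]
      exact ⟨D.u 0 :: L, Z2 ++ [D.w 1], by simp⟩)
  have hI1 : D.I 0 1 ++ [D.w 1] = K1 ++ z :: (K2 ++ p :: (Z2 ++ [D.w 1])) := by rw [hI, e1]; simp
  have hWz : WAt D 0 1 K1 z (K2 ++ p :: (Z2 ++ [D.w 1])) := ⟨hI1, e2⟩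
  have hzI : z ∈ D.I 0 1 := by rw [hI, e1]; simp
  have hpI : p ∈ D.I 0 1 := by rw [hI]; simp
  have hzc : D.cnt z ≠ 0 := cnt_of_mem (i := 0) (j := 1) (by simp [KD.path, hzI])
  have hnod := hD.ok.nodup 0 1
  have hzp : z ≠ p := by
    rintro rfl
    unfold KD.path at hnod
    rw [hI1] at hnod
    simp [List.nodup_append] at hnod
  have hzq : z ≠ q := by
    rintro rfl
    have h1 := I_path_count D (i := 0) (j := 1) (i' := 1) (j' := 0) (by decide) z
    have h2 := hD.ok.le z
    have h3 := List.count_pos_iff.2 hzI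
    have h4 : z ∈ D.path 1 0 := by
      unfold KD.path; rw [hA.wat.1]; simp
    have h5 := List.count_pos_iff.2 h4
    omega
  obtain ⟨E2, q2, hs2⟩ := seg_exists hD.pm hD.ok.le hm hma hzc
  have hdis := fun x => IsSeg.disj hm hD.pm hA.seg hs2 hzp hzq (x := x)
  obtain ⟨σ, τ, Y3, Y4, hσ, hτ, hB⟩ := min_struct hcol hm (hD.swap hm) hs2.swap hoz.swap (hWz.swap hD.ok)
  -- the new state
  have hBcnt := hB.cnt hm
  have hσ1 : σ.symm 0 ≠ 0 := by
    intro hh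
    have : σ 0 = 0 := ((Equiv.symm_apply_eq σ).1 hh).symm
    rw [hσ] at this; exact absurd this (by decide)
  have he2 : Inf2 ((D.swap.perm σ τ).path (σ.symm 0) 1) a b := by
    rw [KD.path_perm, hτ, Equiv.apply_symm_apply, KD.path_swap]; exact he.rev
  generalize hr : σ.symm 0 = r at *
  set D2 := D.swap.perm σ τ with hD2
  have hc2 : ∀ x, D2.cnt x = D.cnt x := fun x => by simp [hD2]
  set D3 := D2.slide (K2 ++ p :: (Z2 ++ [D.w 1])).reverse z K1.reverse Y3 q2 Y4 E2 with hD3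
  have he3 : Inf2 (D3.path r 1) a b := by
    rw [hD3, slide_path_same D2 hσ1 (by decide)]; exact he2
  have hI02 : D3.I 0 2 = (K2 ++ p :: (Z2 ++ [D.w 1])) ++ D2.I 0 2 := by
    show (K2 ++ p :: (Z2 ++ [D.w 1])).reverse.reverse ++ D2.I 0 2 = _
    rw [List.reverse_reverse]
  have hu0 : D3.u 0 = z := rfl
  have hWp : WAt D3 0 2 K2 p ((Z2 ++ [D.w 1]) ++ D2.I 0 2 ++ [D3.w 2]) := by
    refine ⟨?_, e3⟩
    rw [hI02]; simp
  have hmin3 := hB.min'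
  have hpI3 : p ∈ D3.I 0 2 := by rw [hI02]; simp
  have hpc3 : D3.cnt p ≠ 0 := cnt_of_mem (i := 0) (j := 2) (by simp [KD.path, hpI3])
  have hqo : Out D m q := hA.seg.out_right hm hA.out
  have hq2 : q ∉ D2.I 0 0 := fun h => zero_not_out hm hB.min1.ok hB.zero (x := q)
    (by simp [KD.path, h]) (hqo.swap.perm σ τ)
  have hEE : ∀ x ∈ E, x ∉ E2 := by
    intro x hx hx2
    exact hdis x (by simp [hx2]) (by simp [hx])
  have hseg3 : IsSeg G D3 (upd n (D2.I 0 0)) m p E q := by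
    refine ⟨hpc3, ?_, hA.seg.even, ?_, ?_, hA.seg.mpair, hA.seg.chain⟩
    · have h1 := hBcnt q
      have h2 := List.count_eq_zero.2 hq2
      have h3 := hA.seg.hq
      have h4 := hc2 q
      omega
    · intro x
      have h1 := hBcnt x
      have h2 := hc2 x
      by_cases hx : x ∈ E
      · have h3 := List.count_eq_zero.2 (hEE x hx)
        have h4 := hA.seg.out x
        omega
      · have h3 := List.count_eq_zero.2 hx
        have h4 : D3.cnt x ≤ 1 := hmin3.ok.le x
        omega
    · intro x y hxy
      have hk := hA.seg.npair x y hxy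
      have hmem := evPos_mem hxy
      have h1 := hB.res.eq x (by rw [hc2]; exact hA.seg.cnt_E hmem.1) (hEE x hmem.1)
      have h2 := hB.res.eq y (by rw [hc2]; exact hA.seg.cnt_E hmem.2) (hEE y hmem.2)
      rw [h1, h2]; exact hk
  have hpath3 : D3.path 0 2 = z :: (K2 ++ p :: ((Z2 ++ [D.w 1]) ++ (D2.I 0 2 ++ [D3.w 2]))) := by
    unfold KD.path; rw [hI02, hu0]; simp
  have hpath1 : D.path 0 1 = (D.u 0 :: K1) ++ (z :: (K2 ++ p :: (Z2 ++ [D.w 1]))) := by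
    unfold KD.path; rw [hI1]; simp
  have hnod3 := hmin3.ok.nodup 0 2
  rw [← hD3, hpath3] at hnod3
  have hout3 : Out D3 m p := by
    intro i' j'
    by_cases hij : (0 : Fin 3) = i' ∧ (2 : Fin 3) = j'
    · obtain ⟨rfl, rfl⟩ := hij
      constructor
      · intro hh
        rw [hpath3] at hh
        apply (hA.out 0 1).1
        obtain ⟨y, L, hy⟩ : ∃ y L, Z2 ++ [D.w 1] = y :: L := by
          cases Z2 with
          | nil => exact ⟨_, [], rfl⟩
          | cons y L => exact ⟨y, _, rfl⟩
        rw [hy] at hh hnod3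
        have := nodup_next (A := z :: K2) (c := p) (y := y) (B := L ++ (D2.I 0 2 ++ [D3.w 2]))
          (by simpa using hnod3) (by simpa using hh)
        rw [hpath1, hy, this]
        exact ⟨D.u 0 :: K1 ++ z :: K2, L, by simp⟩
      · intro hh
        rw [hpath3] at hh
        apply (hA.out 0 1).2
        obtain ⟨L, y, hy⟩ : ∃ L y, z :: K2 = L ++ [y] := by
          rcases List.eq_nil_or_concat' (z :: K2) with h | ⟨L, y, h⟩
          · simp at h
          · exact ⟨L, y, h⟩
        rw [← List.cons_append, hy] at hh hnod3
        have := nodup_prev (A := L) (c := p) (x := y) (B := (Z2 ++ [D.w 1]) ++ (D2.I 0 2 ++ [D3.w 2]))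
          (by simpa using hnod3) (by simpa using hh)
        rw [hpath1, ← List.cons_append, hy, this]
        exact ⟨D.u 0 :: K1 ++ L, Z2 ++ [D.w 1], by simp⟩
    · have h1 := I_path_count D3 hij p
      have h2 := hmin3.ok.le p
      have h4 := List.count_pos_iff.2 hpI3
      have h3 : p ∉ D3.path i' j' := List.count_eq_zero.1 (by rw [← hD3] at h2; omega)
      exact ⟨fun hh => h3 (infix_mem hh (by simp)), fun hh => h3 (infix_mem hh (by simp))⟩
  obtain ⟨σ', τ', Y5, Y6, hσ', hτ', hF⟩ := min_struct hcol hm (hmin3.swap hm) hseg3.swap hout3.swap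
    (hWp.swap hmin3.ok)
  have hσ1' : σ'.symm 1 ≠ 0 := by
    intro hh
    have : σ' 0 = 1 := by rw [← hh]; simp
    rw [hσ'] at this; exact absurd this (by decide)
  have he4 : Inf2 ((D3.swap.perm σ' τ').path (σ'.symm 1) (τ'.symm r)) a b := by
    rw [KD.path_perm, Equiv.apply_symm_apply, Equiv.apply_symm_apply, KD.path_swap]; exact he3.rev
  obtain ⟨i5, j5, he5⟩ := slide_edge (R := E) hF.uat hF.wat (fun h => hσ1' h.1) he4
  refine caseA hcol hm hma hF.min' hab hab' (he5.edgeD hF.min'.ok) ?_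
  refine Inf2.edgeD hF.min'.ok (i := 0) (j := 0) ?_
  rw [hF.path00]; exact he'

end fint
end CaseB

section AllGood
set_option linter.unusedSectionVars false
variable {V : Type*} [DecidableEq V]
variable {G : SimpleGraph V} {D : KD V} {n m : V → V}
variable [Fintype V] {col : V → Bool}

theorem perm_one : ∀ (i j : Fin 3) (t : Bool), ∃ π : Equiv.Perm (Fin 3), decide (π i = j) = t := by
  decide

theorem edge_seg (hcol : ∀ x y, G.Adj x y → col y = !col x)
    (hm : ∀ v, m (m v) = v) (hma : ∀ v, G.Adj v (m v)) (hD : IsMin G m D n)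
    {a b a' b' : V} (hab : m a = b) (hab' : m a' = b') (he : EdgeD D a b)
    {p q : V} {E : List V} (hs : IsSeg G D n m p E q) (ho : Out D m p)
    (he' : Inf2 (p :: (E ++ [q])) a' b') : Good G a b a' b' := by
  have key : ∀ {D : KD V}, IsMin G m D n → EdgeD D a b → IsSeg G D n m p E q → Out D m p →
      ∀ {i k Z1 Z2}, UAt D i k Z1 p Z2 → Good G a b a' b' := by
    intro D hD he hs ho i k Z1 Z2 hU
    obtain ⟨σ, τ, Y1, Y2, -, -, hA⟩ := min_struct hcol hm hD hs ho hU
    obtain ⟨i, j, hij⟩ := he.inf2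
    have h1 : Inf2 ((D.perm σ τ).path (σ.symm i) (τ.symm j)) a b := by
      rw [KD.path_perm, Equiv.apply_symm_apply, Equiv.apply_symm_apply]; exact hij
    by_cases h0 : σ.symm i = 0 ∧ τ.symm j = 0
    · rw [h0.1, h0.2] at h1
      exact caseB hcol hm hma hA hab hab' h1 he'
    · obtain ⟨i5, j5, he5⟩ := slide_edge (R := E) hA.uat hA.wat h0 h1
      refine caseA hcol hm hma hA.min' hab hab' (he5.edgeD hA.min'.ok) ?_
      refine Inf2.edgeD hA.min'.ok (i := 0) (j := 0) ?_
      rw [hA.path00]; exact he'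
  rcases loc hD.ok hs.hp with ⟨i, k, Z1, Z2, hU⟩ | ⟨l, j, Y1, Y2, hW⟩
  · exact key hD he hs ho hU
  · exact key (hD.swap hm) (he.swap hD.ok) hs.swap ho.swap (hW.swap hD.ok)

theorem IsSeg.inf2 (hm : ∀ v, m (m v) = v) {p q : V} {E : List V} (hs : IsSeg G D n m p E q) {v : V}
    (hv : v ∈ p :: (E ++ [q])) : Inf2 (p :: (E ++ [q])) v (m v) := by
  have he : Even (p :: (E ++ [q])).length := by have := hs.even; simp; grind
  obtain ⟨w, hw⟩ := exists_pr he hv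
  have : m v = w := by
    rcases hw with hw | hw
    · exact hs.mpair _ _ hw
    · rw [← hs.mpair _ _ hw, hm]
  rw [this]; exact hw.imp evPos_infix evPos_infix

theorem tri (hm : ∀ v, m (m v) = v) (hma : ∀ v, G.Adj v (m v)) (hD : IsMin G m D n) (a : V) :
    EdgeD D a (m a) ∨ (∃ p E q, IsSeg G D n m p E q ∧ Out D m p ∧ Inf2 (p :: (E ++ [q])) a (m a)) ∨
      (D.cnt a = 0 ∧ n a = m a) := by
  classical
  by_cases h1 : EdgeD D a (m a)
  · exact Or.inl h1
  right
  by_cases h2 : D.cnt a ≠ 0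
  · left
    obtain ⟨E, q, hs⟩ := seg_exists hD.pm hD.ok.le hm hma h2
    exact ⟨a, E, q, hs, out_of_not_edgeD hD.ok h1, hs.inf2 hm (by simp)⟩
  simp only [ne_eq, not_not] at h2
  let S : V → Prop := fun v => ∃ p E q, IsSeg G D n m p E q ∧ v ∈ p :: (E ++ [q])
  by_cases h3 : S a
  · left
    obtain ⟨p, E, q, hs, hv⟩ := h3
    refine ⟨p, E, q, hs, hs.out_of_ne ?_, hs.inf2 hm hv⟩
    rintro rfl
    simp at hv
    rcases hv with rfl | rfl
    · exact hs.hp h2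
    · exact hs.hq h2
  right
  refine ⟨h2, ?_⟩
  have hSc : ∀ v, ¬ S v → D.cnt v = 0 := by
    intro v hv
    by_contra hc
    obtain ⟨E, q, hs⟩ := seg_exists hD.pm hD.ok.le hm hma hc
    exact hv ⟨v, E, q, hs, by simp⟩
  have hSm : ∀ v, S v → S (m v) := by
    rintro v ⟨p, E, q, hs, hv⟩
    exact ⟨p, E, q, hs, hs.m_mem hm hv⟩
  have hSm' : ∀ v, ¬ S v → ¬ S (m v) := fun v hv hh => hv (by have := hSm _ hh; rwa [hm] at this)
  have hSn : ∀ v, D.cnt v = 0 → S v → S (n v) := by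
    rintro v hc ⟨p, E, q, hs, hv⟩
    refine ⟨p, E, q, hs, ?_⟩
    simp only [List.mem_cons, List.mem_append, List.not_mem_nil, or_false] at hv
    rcases hv with rfl | hv | rfl
    · exact absurd hc hs.hp
    · have := hs.n_mem hv; simp [this]
    · exact absurd hc hs.hq
  let n2 : V → V := fun v => if S v then n v else m v
  have hpm : OutPM G D n2 := by
    intro v hv
    obtain ⟨o1, o2, o3⟩ := hD.pm v hv
    by_cases hS : S v
    · have := hSn v hv hS
      simp only [n2, hS, this, if_true]
      exact ⟨o1, o2, o3⟩
    · have := hSm' v hS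
      simp only [n2, hS, this, if_false]
      exact ⟨hSc _ this, hm v, hma v⟩
  by_contra hne
  have hlt := hD.min D n2 hD.ok hpm
  have : (∑ v, if D.cnt v = 0 then (if n2 v = m v then 0 else 1) else 0) <
      ∑ v, if D.cnt v = 0 then (if n v = m v then 0 else 1) else 0 := by
    apply Finset.sum_lt_sum
    · intro v _
      by_cases hS : S v
      · simp [n2, hS]
      · simp [n2, hS]
    · refine ⟨a, Finset.mem_univ _, ?_⟩
      simp [n2, h3, h2, hne]
  unfold phi at hlt
  omega

theorem edge_good (hcol : ∀ x y, G.Adj x y → col y = !col x)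
    (hm : ∀ v, m (m v) = v) (hma : ∀ v, G.Adj v (m v)) (hD : IsMin G m D n)
    {a a' : V} (he : EdgeD D a (m a)) : Good G a (m a) a' (m a') := by
  rcases tri hm hma hD a' with h | ⟨p, E, q, hs, ho, h⟩ | h
  · exact caseA hcol hm hma hD rfl rfl he h
  · exact edge_seg hcol hm hma hD rfl rfl he hs ho h
  · obtain ⟨i, j, t, ht⟩ := he
    obtain ⟨π, hπ⟩ := perm_one i j t
    exact ⟨D, n, π, hD.ok, hD.pm, Or.inr ⟨i, j, by rwa [hπ]⟩, Or.inl h⟩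

theorem seg_good (hcol : ∀ x y, G.Adj x y → col y = !col x)
    (hm : ∀ v, m (m v) = v) (hma : ∀ v, G.Adj v (m v)) (hD : IsMin G m D n)
    {a a' p q : V} {E : List V} (hs : IsSeg G D n m p E q) (ho : Out D m p)
    (h : Inf2 (p :: (E ++ [q])) a (m a)) : Good G a (m a) a' (m a') := by
  obtain ⟨D', n', hR, hphi⟩ := absorb hcol hD.ok hD.pm hm hs ho
  have hM : IsMin G m D' n' := ⟨hR.ok, hR.pm, fun D'' n'' h1 h2 => hphi.trans (hD.min D'' n'' h1 h2)⟩
  refine edge_good hcol hm hma hM ?_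
  obtain ⟨i, j, hi | hi⟩ := hR.inf
  · exact (h.mono hi).edgeD hM.ok
  · exact (h.rev.mono hi).edgeD hM.ok

theorem min_good (hcol : ∀ x y, G.Adj x y → col y = !col x)
    (hm : ∀ v, m (m v) = v) (hma : ∀ v, G.Adj v (m v)) (hD : IsMin G m D n)
    (a a' : V) : Good G a (m a) a' (m a') := by
  rcases tri hm hma hD a with h | ⟨p, E, q, hs, ho, h⟩ | h
  · exact edge_good hcol hm hma hD h
  · exact seg_good hcol hm hma hD hs ho h
  · rcases tri hm hma hD a' with h' | ⟨p, E, q, hs, ho, h'⟩ | h'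
    · exact (edge_good hcol hm hma hD h').comm
    · exact (seg_good hcol hm hma hD hs ho h').comm
    · exact ⟨D, n, 1, hD.ok, hD.pm, Or.inl h, Or.inl h'⟩

theorem all_good (hcol : ∀ x y, G.Adj x y → col y = !col x)
    (hm : ∀ v, m (m v) = v) (hma : ∀ v, G.Adj v (m v)) (hD : Ok G D) (hn : OutPM G D n)
    (a a' : V) : Good G a (m a) a' (m a') := by
  classical
  have hex : ∃ k, ∃ D n, Ok G D ∧ OutPM G D n ∧ phi m D n = k := ⟨_, D, n, hD, hn, rfl⟩
  obtain ⟨D0, n0, h1, h2, h3⟩ := Nat.find_spec hex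
  refine min_good hcol hm hma (D := D0) (n := n0) ⟨h1, h2, fun D' n' h1' h2' => ?_⟩ a a'
  rw [h3]
  exact Nat.find_min' hex ⟨D', n', h1', h2', rfl⟩

end AllGood

section Finish
set_option linter.unusedSectionVars false
variable {V : Type*} [DecidableEq V]
variable {G : SimpleGraph V} {D : KD V} {n m : V → V}
variable [Fintype V] {col : V → Bool}

/-- the desired final configuration -/
def Done (G : SimpleGraph V) (a b a' b' : V) : Prop :=
  ∃ D n π, Ok G D ∧ OutPM G D n ∧ D.cnt a ≠ 0 ∧ D.cnt b ≠ 0 ∧ D.cnt a' ≠ 0 ∧ D.cnt b' ≠ 0 ∧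
    ((Mt D n π a b ∧ Mt D n π a' b') ∨ (Mt D n π a b' ∧ Mt D n π a' b))

theorem Done.comm {a b a' b' : V} (h : Done G a b a' b') : Done G a' b' a b := by
  obtain ⟨D, n, π, h1, h2, h3, h4, h5, h6, h7⟩ := h
  exact ⟨D, n, π, h1, h2, h5, h6, h3, h4, h7.imp (fun h => h.symm) (fun h => h.symm)⟩

theorem Typ.cnt_ne {i j t} {a b : V} (h : Typ D i j t a b) : D.cnt a ≠ 0 ∧ D.cnt b ≠ 0 := by
  rcases h.infix with h | h
  · exact ⟨cnt_of_mem (infix_mem h (by simp)), cnt_of_mem (infix_mem h (by simp))⟩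
  · exact ⟨cnt_of_mem (infix_mem h (by simp)), cnt_of_mem (infix_mem h (by simp))⟩

theorem infix_edge4 (hD : Ok G D) {i j} {a b c d : V} (h : [a, b, c, d] <:+: D.path i j) :
    ∃ t, Typ D i j t a b ∧ Typ D i j t c d := by
  obtain ⟨X, Y, h⟩ := h
  have h' : D.path i j = X ++ a :: b :: c :: d :: Y := by rw [← h]; simp
  rcases Nat.even_or_odd X.length with hX | hX
  · refine ⟨true, Or.inl ?_, Or.inl ?_⟩
    · show EvPos (D.path i j) a b
      rw [h']; exact evPos_mid hX
    · show EvPos (D.path i j) c d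
      have : D.path i j = (X ++ [a, b]) ++ c :: d :: Y := by rw [h']; simp
      rw [this]; exact evPos_mid (by simp; grind)
  · have hl := path_even hD i j
    cases X with
    | nil => simp at hX
    | cons x X =>
      unfold KD.path at h'
      simp only [List.cons_append, List.cons.injEq] at h'
      have h2 := h'.2
      have hX' : Even X.length := by simp at hX; grind
      rcases List.eq_nil_or_concat' Y with rfl | ⟨L, z, rfl⟩
      · exfalso
        have := congrArg List.length h2
        have := hD.even i j
        simp at *; grind
      · have : D.I i j ++ [D.w j] = (X ++ a :: b :: c :: d :: L) ++ [z] := by rw [h2]; simp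
        have hI := (List.append_inj' this rfl).1
        refine ⟨false, Or.inl ?_, Or.inl ?_⟩
        · show EvPos (D.I i j) a b
          rw [hI]; exact evPos_mid hX'
        · show EvPos (D.I i j) c d
          have : D.I i j = (X ++ [a, b]) ++ c :: d :: L := by rw [hI]; simp
          rw [this]; exact evPos_mid (by simp; grind)

theorem trick (hcol : ∀ x y, G.Adj x y → col y = !col x) (hD : Ok G D) (hn : OutPM G D n)
    {a b a' b' : V} (hnd : [a, b, a', b'].Nodup)
    (h2 : G.Adj b a') (h3 : G.Adj a' b') (h4 : G.Adj b' a)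
    (ha : D.cnt a ≠ 0) (hb : D.cnt b ≠ 0) (ha' : D.cnt a' = 0) (hn' : n a' = b') : Done G a b a' b' := by
  simp only [List.nodup_cons, List.mem_cons, List.not_mem_nil, or_false, not_or, not_false_eq_true,
    List.nodup_nil, and_true] at hnd
  obtain ⟨⟨d1, d2, d3⟩, ⟨d4, d5⟩, d6⟩ := hnd
  obtain ⟨o1, o2, -⟩ := hn a' ha'
  rw [hn'] at o1 o2
  let m : V → V := fun v => if v = a then b' else if v = b' then a else if v = a' then b else
    if v = b then a' else v
  have hm : ∀ v, m (m v) = v := by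
    intro v; simp only [m]; split_ifs <;> simp_all
  have hs : IsSeg G D n m a [b', a'] b := by
    refine ⟨ha, hb, by simp, ?_, ?_, ?_, ?_⟩
    · intro x
      have := hD.le x
      by_cases hx : x = b'
      · subst hx; simp [o1, d6]
      · by_cases hx' : x = a'
        · subst hx'; simp [ha', d6, Ne.symm d6]
        · simp [List.count_cons, Ne.symm hx, Ne.symm hx', this]
    · intro x y hxy
      simp [EvPos] at hxy
      obtain ⟨rfl, rfl⟩ := hxy
      exact ⟨o2, hn'⟩
    · intro x y hxy
      simp [EvPos] at hxy
      rcases hxy with ⟨rfl, rfl⟩ | ⟨rfl, rfl⟩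
      · simp [m]
      · simp [m, Ne.symm d2, d6]
    · simp [h4.symm, h3.symm, h2.symm]
  obtain ⟨D', n', hR, -⟩ := absorb hcol hD hn hm hs (hs.out_of_ne (by simp))
  obtain ⟨i, j, hij⟩ := hR.inf
  have : ∃ t, Typ D' i j t a b' ∧ Typ D' i j t a' b := by
    rcases hij with h | h
    · exact infix_edge4 hR.ok h
    · obtain ⟨t, h1, h2⟩ := infix_edge4 hR.ok (a := b) (b := a') (c := b') (d := a) (by simpa using h)
      exact ⟨t, h2.symm, h1.symm⟩
  obtain ⟨t, t1, t2⟩ := this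
  obtain ⟨π, hπ⟩ := perm_one i j t
  exact ⟨D', n', π, hR.ok, hR.pm, t1.cnt_ne.1, t2.cnt_ne.2, t2.cnt_ne.1, t1.cnt_ne.2,
    Or.inr ⟨Or.inr ⟨i, j, by rwa [hπ]⟩, Or.inr ⟨i, j, by rwa [hπ]⟩⟩⟩

/-- two disjoint edges extend to a perfect matching (as an involution) -/
def Ext (G : SimpleGraph V) : Prop := ∀ a b c d : V, G.Adj a b → G.Adj c d → a ≠ c → a ≠ d → b ≠ c → b ≠ d →
  ∃ m : V → V, (∀ v, m (m v) = v) ∧ (∀ v, G.Adj v (m v)) ∧ m a = b ∧ m c = d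

theorem even_of_inv {S : Finset V} {m : V → V} (hm : ∀ v, m (m v) = v) (hma : ∀ v, G.Adj v (m v))
    (hS : ∀ v ∈ S, m v ∈ S) : Even S.card := by
  have : ∑ x ∈ S, (1 : ZMod 2) = 0 :=
    Finset.sum_involution (fun a _ => m a) (fun _ _ => by decide) (fun a _ _ h => (hma a).ne h.symm)
      (fun a ha => hS a ha) (fun a _ => hm a)
  rw [Finset.sum_const, nsmul_eq_mul, mul_one] at this
  exact (ZMod.natCast_eq_zero_iff_even).1 this

/-- absorbing from `v` with `m` containing the edges `v w` and `a' b'` keeps `a' b'` free -/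
theorem grow (hcol : ∀ x y, G.Adj x y → col y = !col x) (hm : ∀ v, m (m v) = v) (hma : ∀ v, G.Adj v (m v))
    (hD : Ok G D) (hn : OutPM G D n) {v a' b' : V} (hv : D.cnt v ≠ 0) (ha' : D.cnt a' = 0) (hn' : n a' = b')
    (hma' : m a' = b') :
    ∃ D' n', Ok G D' ∧ OutPM G D' n' ∧ EdgeD D' v (m v) ∧ D'.cnt a' = 0 ∧ n' a' = b' := by
  by_cases he : EdgeD D v (m v)
  · exact ⟨D, n, hD, hn, he, ha', hn'⟩
  obtain ⟨o1, o2, -⟩ := hn a' ha'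
  rw [hn'] at o1 o2
  obtain ⟨E, q, hs⟩ := seg_exists hn hD.le hm hma hv
  obtain ⟨D', n', hR, -⟩ := absorb hcol hD hn hm hs (out_of_not_edgeD hD he)
  have hE : a' ∉ E := by
    intro hE
    have := hs.closed (T := fun x => x = a' ∨ x = b') (fun x => by
        constructor
        · rintro (rfl | rfl)
          · exact Or.inr hma'
          · left; rw [← hma', hm]
        · rintro (h | h)
          · right; rw [← hm x, h, hma']
          · left; rw [← hm x, h, ← hma', hm]) (fun x hx => by
        obtain ⟨-, p2, -⟩ := hn x hx
        constructor
        · rintro (rfl | rfl)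
          · exact Or.inr hn'
          · exact Or.inl o2
        · rintro (h | h)
          · right; rw [← p2, h, hn']
          · left; rw [← p2, h, o2]) (x := a') (by simp [hE])
    rcases this.1 (Or.inl rfl) with rfl | rfl
    · exact hv ha'
    · exact hv o1
  refine ⟨D', n', hR.ok, hR.pm, ?_, ?_, ?_⟩
  · obtain ⟨i, j, hi | hi⟩ := hR.inf
    · exact ((hs.inf2 hm (v := v) (by simp)).mono hi).edgeD hR.ok
    · exact ((hs.inf2 hm (v := v) (by simp)).rev.mono hi).edgeD hR.ok
  · have := hR.le a'
    have := List.count_eq_zero.2 hE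
    omega
  · rw [hR.eq a' ha' hE, hn']

theorem reach_out (hcol : ∀ x y, G.Adj x y → col y = !col x) (hext : Ext G)
    (hconn : ∀ x y, G.Reachable x y) (hD : Ok G D) (hn : OutPM G D n)
    {a b a' b' : V} (hnd : [a, b, a', b'].Nodup) (h1 : G.Adj a b)
    (h2 : G.Adj b a') (h3 : G.Adj a' b') (h4 : G.Adj b' a) (ha' : D.cnt a' = 0) (hn' : n a' = b') :
    ∃ D n, Ok G D ∧ OutPM G D n ∧ D.cnt a ≠ 0 ∧ D.cnt a' = 0 ∧ n a' = b' := by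
  classical
  by_contra hcon
  simp only [List.nodup_cons, List.mem_cons, List.not_mem_nil, or_false, not_or, not_false_eq_true,
    List.nodup_nil, and_true] at hnd
  obtain ⟨⟨d1, d2, d3⟩, ⟨d4, d5⟩, d6⟩ := hnd
  let P : V → Prop := fun v => ∃ D n, Ok G D ∧ OutPM G D n ∧ D.cnt v ≠ 0 ∧ D.cnt a' = 0 ∧ n a' = b'
  have hPa : ¬ P a := hcon
  have hPa' : ¬ P a' := by rintro ⟨D, n, -, -, h, h', -⟩; exact h h'
  have hPb' : ¬ P b' := by
    rintro ⟨D, n, -, hn, h, h', h''⟩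
    have := (hn a' h').1
    rw [h''] at this
    exact h this
  have hP0 : P (D.u 0) := ⟨D, n, hD, hn, cnt_of_mem (i := 0) (j := 0) (by simp [KD.path]), ha', hn'⟩
  have hcl : ∀ v w, P v → G.Adj v w → w ≠ a' → w ≠ b' → P w := by
    intro v w hv hvw w1 w2
    have v1 : v ≠ a' := by rintro rfl; exact hPa' hv
    have v2 : v ≠ b' := by rintro rfl; exact hPb' hv
    obtain ⟨m, hm, hma, m1, m2⟩ := hext v w a' b' hvw h3 v1 v2 w1 w2
    obtain ⟨D, n, q1, q2, q3, q4, q5⟩ := hv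
    obtain ⟨D', n', r1, r2, ⟨i, j, t, r3⟩, r4, r5⟩ := grow hcol hm hma q1 q2 q3 q4 q5 m2
    rw [m1] at r3
    exact ⟨D', n', r1, r2, r3.cnt_ne.2, r4, r5⟩
  have hPb : ¬ P b := fun h => hPa (hcl b a h h1.symm d2 d3)
  let S : Finset V := Finset.univ.filter P
  have hS : ∀ v, v ∈ S ↔ P v := fun v => by simp [S]
  have hev : Even S.card := by
    obtain ⟨m, hm, hma, m1, m2⟩ := hext a b a' b' h1 h3 d2 d3 d4 d5
    refine even_of_inv hm hma (fun v hv => ?_)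
    rw [hS] at hv ⊢
    refine hcl v _ hv (hma v) ?_ ?_
    · intro h
      have : v = b' := by rw [← hm v, h, m2]
      rw [this] at hv; exact hPb' hv
    · intro h
      have : v = a' := by rw [← hm v, h, ← m2, hm]
      rw [this] at hv; exact hPa' hv
  have hodd : ∀ x y y' z, P x → G.Adj x y → G.Adj y' z → ((y = a' ∧ y' = b') ∨ (y = b' ∧ y' = a')) → ¬ P z →
      z ≠ y → False := by
    intro x y y' z hx hxy hyz hyy hz hzy
    have hyn : ¬ P y ∧ ¬ P y' ∧ y ≠ y' := by
      rcases hyy with ⟨rfl, rfl⟩ | ⟨rfl, rfl⟩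
      · exact ⟨hPa', hPb', d6⟩
      · exact ⟨hPb', hPa', Ne.symm d6⟩
    obtain ⟨m, hm, hma, m1, m2⟩ := hext x y y' z hxy hyz (by rintro rfl; exact hyn.2.1 hx)
      (by rintro rfl; exact hz hx) hyn.2.2 (Ne.symm hzy)
    have : Even (S.erase x).card := by
      refine even_of_inv hm hma (fun v hv => ?_)
      rw [Finset.mem_erase, hS] at hv ⊢
      have k1 : m v ≠ y := by
        intro h; apply hv.1; rw [← hm v, h, ← m1, hm]
      have k2 : m v ≠ y' := by
        intro h; apply hz; rw [← m2, ← h, hm]; exact hv.2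
      refine ⟨?_, hcl v _ hv.2 (hma v) ?_ ?_⟩
      · intro h
        have : v = y := by rw [← m1, ← h, hm]
        rw [this] at hv; exact hyn.1 hv.2
      · rcases hyy with ⟨rfl, rfl⟩ | ⟨rfl, rfl⟩ <;> assumption
      · rcases hyy with ⟨rfl, rfl⟩ | ⟨rfl, rfl⟩ <;> assumption
    have hc := Finset.card_erase_add_one ((hS x).2 hx)
    grind
  have hcl2 : ∀ v w, P v → G.Adj v w → P w := by
    intro v w hv hvw
    refine hcl v w hv hvw ?_ ?_
    · rintro rfl
      exact hodd v w b' a hv hvw h4 (Or.inl ⟨rfl, rfl⟩) hPa d2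
    · rintro rfl
      exact hodd v w a' b hv hvw h2.symm (Or.inr ⟨rfl, rfl⟩) hPb d5
  obtain ⟨wk⟩ := hconn (D.u 0) a
  have : ∀ {x y : V} (_ : G.Walk x y), P x → P y := by
    intro x y wk
    induction wk with
    | nil => exact id
    | cons h _ ih => exact fun hx => ih (hcl2 _ _ hx h)
  exact hPa (this wk hP0)

theorem finish (hcol : ∀ x y, G.Adj x y → col y = !col x) (hext : Ext G)
    (hconn : ∀ x y, G.Reachable x y) (hD : Ok G D) (hn : OutPM G D n)
    {a b a' b' : V} (hnd : [a, b, a', b'].Nodup) (h1 : G.Adj a b)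
    (h2 : G.Adj b a') (h3 : G.Adj a' b') (h4 : G.Adj b' a) : Done G a b a' b' := by
  have hnd0 := hnd
  simp only [List.nodup_cons, List.mem_cons, List.not_mem_nil, or_false, not_or, not_false_eq_true,
    List.nodup_nil, and_true] at hnd
  obtain ⟨⟨d1, d2, d3⟩, ⟨d4, d5⟩, d6⟩ := hnd
  obtain ⟨m, hm, hma, m1, m2⟩ := hext a b a' b' h1 h3 d2 d3 d4 d5
  have hg := all_good hcol hm hma hD hn a a'
  rw [m1, m2] at hg
  obtain ⟨D, n, π, hD, hn, t1, t2⟩ := hg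
  have mtc : ∀ {a b : V}, Mt D n π a b → D.cnt a ≠ 0 → D.cnt b ≠ 0 := by
    intro a b h ha
    rcases h with h | ⟨i, j, h⟩
    · exact absurd h.1 ha
    · exact h.cnt_ne.2
  have mtn : ∀ {a b : V}, Mt D n π a b → D.cnt a = 0 → n a = b := by
    intro a b h ha
    rcases h with h | ⟨i, j, h⟩
    · exact h.2
    · exact absurd ha h.cnt_ne.1
  by_cases ha : D.cnt a = 0 <;> by_cases ha' : D.cnt a' = 0
  · obtain ⟨D, n, hD, hn, q1, q2, q3⟩ := reach_out hcol hext hconn hD hn hnd0 h1 h2 h3 h4 ha' (mtn t2 ha')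
    obtain ⟨D', n', r1, r2, ⟨i, j, t, r3⟩, r4, r5⟩ := grow hcol hm hma hD hn q1 q2 q3 m2
    rw [m1] at r3
    exact trick hcol r1 r2 hnd0 h2 h3 h4 r3.cnt_ne.1 r3.cnt_ne.2 r4 r5
  · refine (trick hcol hD hn (a := a') (b := b') (a' := a) (b' := b) ?_ h4 h1 h2 ha' (mtc t2 ha') ha (mtn t1 ha)).comm
    simp [d1, d6, Ne.symm d2, Ne.symm d3, Ne.symm d4, Ne.symm d5]
  · exact trick hcol hD hn hnd0 h2 h3 h4 ha (mtc t1 ha) ha' (mtn t2 ha')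
  · exact ⟨D, n, π, hD, hn, ha, mtc t1 ha, ha', mtc t2 ha', Or.inl ⟨t1, t2⟩⟩

end Finish

section Conv
set_option linter.unusedSectionVars false
variable {V : Type*} [DecidableEq V]
variable {G : SimpleGraph V} {D : KD V} {n m : V → V}

/-- the nine lists whose consecutive pairs give the matching of type `π` -/
def Lst (D : KD V) (π : Equiv.Perm (Fin 3)) (i j : Fin 3) : List V :=
  cond (decide (π i = j)) (D.path i j) (D.I i j)

theorem lst_sum (D : KD V) (π : Equiv.Perm (Fin 3)) (x : V) :
    ∑ i, ∑ j, (Lst D π i j).count x = D.cnt x := by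
  have h : ∀ i j, (Lst D π i j).count x = (D.I i j).count x +
      if π i = j then [D.u i].count x + [D.w j].count x else 0 := by
    intro i j
    unfold Lst
    by_cases h : π i = j
    · simp only [h, decide_true, cond_true, if_true, path_count]
      omega
    · simp [h]
  simp only [h, Finset.sum_add_distrib, Finset.sum_ite_eq, Finset.mem_univ, if_true]
  rw [Equiv.sum_comp π (fun j => [D.w j].count x)]
  unfold KD.cnt
  omega

theorem lst_even (hD : Ok G D) (π i j) : Even (Lst D π i j).length := by
  unfold Lst
  cases decide (π i = j)
  · exact hD.even i j
  · exact path_even hD i j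

theorem lst_uniq (hD : Ok G D) {π i j i' j'} {x : V} (h : x ∈ Lst D π i j) (h' : x ∈ Lst D π i' j') :
    i = i' ∧ j = j' := by
  by_contra hne
  have hs := lst_sum D π x
  have hle := hD.le x
  rw [← Finset.sum_product'] at hs
  have h1 := List.count_pos_iff.2 h
  have h2 := List.count_pos_iff.2 h'
  have := Finset.add_le_sum (s := (Finset.univ : Finset (Fin 3 × Fin 3)))
    (f := fun p => (Lst D π p.1 p.2).count x) (fun _ _ => Nat.zero_le _)
    (Finset.mem_univ (i, j)) (Finset.mem_univ (i', j')) (by simpa using hne)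
  simp only [Finset.univ_product_univ] at hs
  simp only at this
  omega

theorem lst_nodup (hD : Ok G D) (π i j) : (Lst D π i j).Nodup := by
  unfold Lst
  cases decide (π i = j)
  · exact (I_infix D i j).sublist.nodup (hD.nodup i j)
  · exact hD.nodup i j

theorem Mt.exists (hD : Ok G D) (π) (a : V) : ∃ b, Mt D n π a b := by
  by_cases h : D.cnt a = 0
  · exact ⟨n a, Or.inl ⟨h, rfl⟩⟩
  · rw [← lst_sum D π] at h
    obtain ⟨i, -, h⟩ := Finset.exists_ne_zero_of_sum_ne_zero h
    obtain ⟨j, -, h⟩ := Finset.exists_ne_zero_of_sum_ne_zero h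
    obtain ⟨b, hb⟩ := exists_pr (lst_even hD π i j) (List.count_pos_iff.1 (Nat.pos_of_ne_zero h))
    exact ⟨b, Or.inr ⟨i, j, hb⟩⟩

theorem Mt.uniq [Fintype V] (hD : Ok G D) {π} {a b c : V} (h : Mt D n π a b) (h' : Mt D n π a c) : b = c := by
  rcases h with ⟨h0, h⟩ | ⟨i, j, h⟩ <;> rcases h' with ⟨h0', h'⟩ | ⟨i', j', h'⟩
  · rw [← h, ← h']
  · exact absurd h0 h'.cnt_ne.1
  · exact absurd h0' h.cnt_ne.1
  · have e1 : Pr (Lst D π i j) a b := h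
    have e2 : Pr (Lst D π i' j') a c := h'
    obtain ⟨rfl, rfl⟩ := lst_uniq hD (pr_mem e1).1 (pr_mem e2).1
    rw [← mate_pr (lst_nodup hD π i j) e1, ← mate_pr (lst_nodup hD π i j) e2]

theorem Mt.adj (hD : Ok G D) (hn : OutPM G D n) {π} {a b : V} (h : Mt D n π a b) : G.Adj a b := by
  rcases h with ⟨h0, rfl⟩ | ⟨i, j, h⟩
  · exact (hn a h0).2.2
  · rcases h.infix with h | h
    · have := (hD.chain i j).infix h
      simpa using this
    · have := (hD.chain i j).infix h
      have : G.Adj b a := by simpa using this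
      exact this.symm

/-- The matching as an involution -/
theorem hat [Fintype V] (hD : Ok G D) (hn : OutPM G D n) (π) : ∃ f : V → V, (∀ v, f (f v) = v) ∧
    (∀ v, G.Adj v (f v)) ∧ (∀ a b, Mt D n π a b ↔ f a = b) := by
  choose f hf using Mt.exists (n := n) hD π
  have key : ∀ a b, Mt D n π a b ↔ f a = b := fun a b =>
    ⟨fun h => (hf a).uniq hD h, fun h => h ▸ hf a⟩
  exact ⟨f, fun v => (key _ _).1 ((hf v).symm hn), fun v => (hf v).adj hD hn, key⟩

/-- matching set of an involution -/
def MS (f : V → V) : Set (Sym2 V) := {e | ∃ v, e = s(v, f v)}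

theorem MS_mem {f : V → V} (hf : ∀ v, f (f v) = v) {e : Sym2 V} {v : V} (he : e ∈ MS f) (hv : v ∈ e) :
    e = s(v, f v) := by
  obtain ⟨w, rfl⟩ := he
  rcases Sym2.mem_iff.1 hv with rfl | rfl
  · rfl
  · rw [hf, Sym2.eq_swap]

theorem MS_pm {f : V → V} (hf : ∀ v, f (f v) = v) (ha : ∀ v, G.Adj v (f v)) : IsPM G (MS f) := by
  refine ⟨?_, fun _ _ _ _ => trivial, fun v _ => ⟨s(v, f v), ⟨⟨v, rfl⟩, by simp⟩, ?_⟩⟩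
  · rintro e ⟨v, rfl⟩; exact ha v
  · rintro e ⟨he, hv⟩; exact MS_mem hf he hv

theorem MS_exact {f : V → V} (hf : ∀ v, f (f v) = v) {Es : Set (Sym2 V)} {v : V}
    (h : s(v, f v) ∈ Es) : ∃! e, e ∈ MS f ∧ e ∈ Es ∧ v ∈ e :=
  ⟨s(v, f v), ⟨⟨v, rfl⟩, h, by simp⟩, fun _ he => MS_mem hf he.1 he.2.2⟩

/-- a perfect matching as an involution -/
theorem pm_inv {M : Set (Sym2 V)} (hM : IsPMOn G Set.univ M) : ∃ f : V → V, (∀ v, f (f v) = v) ∧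
    (∀ v, G.Adj v (f v)) ∧ ∀ v w, s(v, w) ∈ M ↔ f v = w := by
  have h : ∀ v, ∃ w, s(v, w) ∈ M := by
    intro v
    obtain ⟨e, ⟨he, hv⟩, -⟩ := hM.2.2 v trivial
    obtain ⟨w, rfl⟩ := Sym2.mem_iff_exists.1 hv
    exact ⟨w, he⟩
  choose f hf using h
  have key : ∀ v w, s(v, w) ∈ M → f v = w := by
    intro v w h
    obtain ⟨e, -, hu⟩ := hM.2.2 v trivial
    have e1 := hu _ ⟨h, by simp⟩
    have e2 := hu _ ⟨hf v, by simp⟩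
    exact Sym2.congr_right.1 (e2.trans e1.symm)
  exact ⟨f, fun v => key _ _ (by rw [Sym2.eq_swap]; exact hf v), fun v => hM.1 _ (hf v),
    fun v w => ⟨key v w, fun h => h ▸ hf v⟩⟩

theorem ext_of_brace (hb : IsBrace G) : Ext G := by
  intro a b c d hab hcd h1 h2 h3 h4
  obtain ⟨M, hM, hF⟩ := hb.2.2 {s(a, b), s(c, d)} (by
      rintro e (rfl | rfl)
      · exact hab
      · exact hcd) (by
      rintro e (rfl | rfl) f (rfl | rfl) hne x hx hx' <;>
        simp only [Sym2.mem_iff] at hx hx' <;> grind) (by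
      refine (Set.ncard_insert_le _ _).trans ?_
      rw [Set.ncard_singleton])
  obtain ⟨f, h1, h2, h3⟩ := pm_inv hM
  exact ⟨f, h1, h2, (h3 _ _).1 (hF (by simp)), (h3 _ _).1 (hF (by simp))⟩

theorem col_of_bip (h : IsBipartite G) : ∃ col : V → Bool, ∀ x y, G.Adj x y → col y = !col x := by
  classical
  obtain ⟨V1, V2, hd, hu, h⟩ := h
  refine ⟨fun v => decide (v ∈ V1), fun x y hxy => ?_⟩
  have h1 := h hxy
  have h2 : y ∈ V1 ↔ y ∉ V2 := by
    constructor
    · intro a b; exact Set.disjoint_left.1 hd a b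
    · intro a
      have : y ∈ V1 ∪ V2 := hu ▸ trivial
      exact this.resolve_right a
  by_cases hx : x ∈ V1 <;> simp_all

theorem edge_of_infix : ∀ {u v : V} (W : G.Walk u v) (X Y : List V) (a b : V),
    W.support = X ++ a :: b :: Y → s(a, b) ∈ W.edges
  | _, _, .nil, X, Y, a, b, h => by
    have := congrArg List.length h
    simp at this
    omega
  | _, _, .cons hadj W, [], Y, a, b, h => by
    simp only [Walk.support_cons, List.nil_append, List.cons.injEq] at h
    obtain ⟨rfl, h⟩ := h
    rw [← Walk.cons_tail_support] at h
    simp only [List.cons.injEq] at h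
    obtain ⟨rfl, h⟩ := h
    simp
  | _, _, .cons hadj W, x :: X, Y, a, b, h => by
    simp only [Walk.support_cons, List.cons_append, List.cons.injEq] at h
    simp only [Walk.edges_cons, List.mem_cons]
    exact Or.inr (edge_of_infix W X Y a b h.2)

theorem walk_of_list (l : List V) (hne : l ≠ []) (hc : l.IsChain G.Adj) {a b : V}
    (ha : l.head hne = a) (hb : l.getLast hne = b) : ∃ W : G.Walk a b, W.support = l := by
  subst ha hb
  exact ⟨Walk.ofSupport l hne hc, Walk.support_ofSupport hne hc⟩

theorem walk_of_path (hD : Ok G D) (i j) : ∃ W : G.Walk (D.u i) (D.w j), W.support = D.path i j :=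
  walk_of_list (D.path i j) (by simp [KD.path]) (hD.chain i j) (by simp [KD.path]) (by simp [KD.path])

theorem brU (D : KD V) {i j k : Fin 3} (h : k ≠ i) (x : V) :
    [D.u k].count x + (D.path i j).count x ≤ D.cnt x := by
  rw [path_count]
  unfold KD.cnt
  have h1 := Finset.add_le_sum (s := Finset.univ) (f := fun i => [D.u i].count x)
    (fun _ _ => Nat.zero_le _) (Finset.mem_univ k) (Finset.mem_univ i) h
  have h2 := Finset.single_le_sum (s := Finset.univ) (f := fun j => [D.w j].count x)
    (fun _ _ => Nat.zero_le _) (Finset.mem_univ j)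
  have h3 := Finset.single_le_sum (s := Finset.univ) (f := fun i => ∑ j, (D.I i j).count x)
    (fun _ _ => Nat.zero_le _) (Finset.mem_univ i)
  have h4 := Finset.single_le_sum (s := Finset.univ) (f := fun j => (D.I i j).count x)
    (fun _ _ => Nat.zero_le _) (Finset.mem_univ j)
  omega

theorem u_mem (hD : Ok G D) {i j k : Fin 3} (h : D.u k ∈ D.path i j) : k = i := by
  by_contra hne
  have h1 := brU D (j := j) hne (D.u k)
  have h2 := hD.le (D.u k)
  have h3 := List.count_pos_iff.2 h
  have h4 : [D.u k].count (D.u k) = 1 := by simp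
  omega

theorem w_mem (hD : Ok G D) {i j k : Fin 3} (h : D.w k ∈ D.path i j) : k = j := by
  have := u_mem (D := D.swap) hD.swap (i := j) (j := i) (k := k) (by
    rw [KD.path_swap, List.mem_reverse]; exact h)
  exact this

theorem u_ne_w (hD : Ok G D) (i j : Fin 3) : D.u i ≠ D.w j := by
  have := hD.nodup i j
  unfold KD.path at this
  intro h
  rw [h] at this
  simp at this

theorem path_meet (hD : Ok G D) {i j i' j' : Fin 3} (h : ¬ (i = i' ∧ j = j')) {x : V}
    (h1 : x ∈ D.path i j) (h2 : x ∈ D.path i' j') : x = D.u i ∨ x = D.w j := by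
  have hc := I_path_count D h x
  have h3 := List.count_pos_iff.2 h2
  have h4 := hD.le x
  have h5 : x ∉ D.I i j := by
    rw [← List.count_eq_zero]; omega
  simpa [KD.path, h5] using h1

theorem toBis (hD : Ok G D) : ∃ L : Bisubdivision K33 G,
    (∀ v, v ∈ L.verts ↔ D.cnt v ≠ 0) ∧
    (∀ i j a b, [a, b] <:+: D.path i j → s(a, b) ∈ L.edgeSet) := by
  choose W hW using walk_of_path hD
  have hlen : ∀ i j, Odd (W i j).length := by
    intro i j
    have h1 := (W i j).length_support
    rw [hW] at h1
    have h2 := hD.even i j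
    simp only [KD.path, List.length_cons, List.length_append, List.length_nil] at h1
    have : (W i j).length = (D.I i j).length + 1 := by omega
    rw [this]; exact h2.add_one
  have hP : ∀ i j, (W i j).IsPath := fun i j => by
    rw [Walk.isPath_def, hW]; exact hD.nodup i j
  let lk : ∀ ⦃x y : Fin 3 ⊕ Fin 3⦄, K33.Adj x y →
      G.Walk (Sum.elim D.u D.w x) (Sum.elim D.u D.w y) := fun x y => match x, y with
    | .inl i, .inr j => fun _ => W i j
    | .inr j, .inl i => fun _ => (W i j).reverse
    | .inl i, .inl j => fun h => by simp at h
    | .inr i, .inr j => fun h => by simp at h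
  have hsup : ∀ ⦃x y : Fin 3 ⊕ Fin 3⦄ (h : K33.Adj x y), ∃ i j, s(x, y) = s(.inl i, .inr j) ∧
      ∀ v, v ∈ (lk h).support ↔ v ∈ D.path i j := by
    intro x y h
    match x, y with
    | .inl i, .inr j => exact ⟨i, j, rfl, fun v => by rw [← hW i j]; exact Iff.rfl⟩
    | .inr j, .inl i => exact ⟨i, j, Sym2.eq_swap, fun v => by
        have e : v ∈ (W i j).reverse.support ↔ v ∈ D.path i j := by
          rw [Walk.support_reverse, List.mem_reverse, hW]
        exact e⟩
    | .inl i, .inl j => simp at h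
    | .inr i, .inr j => simp at h
  let L : Bisubdivision K33 G :=
    { bv := Sum.elim D.u D.w
      bv_inj := by
        rintro (i | i) (j | j) h
        · simp only [Sum.elim_inl] at h
          rw [u_mem hD (i := j) (j := 0) (k := i) (by rw [h]; simp [KD.path])]
        · exact absurd h (u_ne_w hD i j)
        · exact absurd h.symm (u_ne_w hD j i)
        · simp only [Sum.elim_inr] at h
          rw [w_mem hD (i := 0) (j := j) (k := i) (by rw [h]; simp [KD.path])]
      link := lk
      link_isPath := by
        intro x y h
        match x, y with
        | .inl i, .inr j => exact hP i j
        | .inr j, .inl i => exact (hP i j).reverse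
        | .inl i, .inl j => simp at h
        | .inr i, .inr j => simp at h
      link_odd := by
        intro x y h
        match x, y with
        | .inl i, .inr j => exact hlen i j
        | .inr j, .inl i => simpa [lk] using hlen i j
        | .inl i, .inl j => simp at h
        | .inr i, .inr j => simp at h
      link_symm := by
        intro x y h
        match x, y with
        | .inl i, .inr j => rfl
        | .inr j, .inl i => exact (Walk.reverse_reverse _).symm
        | .inl i, .inl j => simp at h
        | .inr i, .inr j => simp at h
      link_branch := by
        intro x y h z hz
        obtain ⟨i, j, he, hs⟩ := hsup h
        rw [hs] at hz
        suffices z ∈ s(x, y) from Sym2.mem_iff.1 this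
        rw [he]
        match z with
        | .inl k => rw [u_mem hD hz]; simp
        | .inr k => rw [w_mem hD hz]; simp
      link_meet := by
        intro x y x' y' h h' hne v hv hv'
        obtain ⟨i, j, he, hs⟩ := hsup h
        obtain ⟨i', j', he', hs'⟩ := hsup h'
        rw [hs] at hv
        rw [hs'] at hv'
        have hij : ¬ (i = i' ∧ j = j') := by
          rintro ⟨rfl, rfl⟩; exact hne (he.trans he'.symm)
        have m1 := path_meet hD hij hv hv'
        have m2 := path_meet hD (fun h => hij ⟨h.1.symm, h.2.symm⟩) hv' hv
        have aux : ∀ {x y : Fin 3 ⊕ Fin 3} {i j : Fin 3}, s(x, y) = s(.inl i, .inr j) →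
            (v = D.u i ∨ v = D.w j) → (v = Sum.elim D.u D.w x ∨ v = Sum.elim D.u D.w y) := by
          intro x y i j he m
          rcases Sym2.eq_iff.1 he with ⟨rfl, rfl⟩ | ⟨rfl, rfl⟩
          · exact m
          · exact m.symm
        exact ⟨aux he m1, aux he' m2⟩ }
  refine ⟨L, ?_, ?_⟩
  · intro v
    constructor
    · rintro ⟨x, y, h, hv⟩
      obtain ⟨i, j, -, hs⟩ := hsup h
      exact cnt_of_mem ((hs v).1 hv)
    · intro h
      obtain ⟨i, j, h⟩ := mem_of_cnt h
      refine ⟨.inl i, .inr j, by simp, ?_⟩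
      show v ∈ (W i j).support
      rw [hW]; exact h
  · rintro i j a b ⟨X, Y, h⟩
    refine ⟨.inl i, .inr j, by simp, ?_⟩
    show s(a, b) ∈ (W i j).edges
    exact edge_of_infix _ X Y a b (by rw [hW, ← h]; simp)

theorem support_split {a b : V} (W : G.Walk a b) (h : Odd W.length) :
    ∃ I : List V, W.support = a :: (I ++ [b]) ∧ Even I.length := by
  cases W with
  | nil => simp at h
  | cons hadj q =>
    have hq : q.support.dropLast ++ [b] = q.support := by
      have := List.dropLast_append_getLast q.support_ne_nil
      rwa [Walk.getLast_support] at this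
    refine ⟨q.support.dropLast, by rw [hq, Walk.support_cons], ?_⟩
    simp only [Walk.length_cons] at h
    simp only [List.length_dropLast, Walk.length_support, Nat.add_sub_cancel]
    rcases Nat.even_or_odd q.length with h1 | h1
    · exact h1
    · exact absurd h1.add_one (Nat.not_even_iff_odd.2 h)

theorem fromBis (L : Bisubdivision K33 G) {M : Set (Sym2 V)} (hM : IsPMOn G Set.univ M)
    (hL : L.MConformal M) : ∃ (D : KD V) (n : V → V), Ok G D ∧ OutPM G D n := by
  have hadj : ∀ i j : Fin 3, K33.Adj (.inl i) (.inr j) := by simp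
  choose I hI hev using fun i j => support_split (L.link (hadj i j)) (L.link_odd (hadj i j))
  let D : KD V := ⟨fun i => L.bv (.inl i), fun j => L.bv (.inr j), I⟩
  have hpath : ∀ i j, (L.link (hadj i j)).support = D.path i j := hI
  have hnd : ∀ i j, (D.path i j).Nodup := fun i j => by
    rw [← hpath]; exact (L.link_isPath (hadj i j)).support_nodup
  have hIm : ∀ {i j x}, x ∈ I i j → x ∈ D.path i j := fun {i j x} h => by
    show x ∈ _ :: (I i j ++ _); simp [h]
  have hIne : ∀ {i j x}, x ∈ I i j → x ≠ L.bv (.inl i) ∧ x ≠ L.bv (.inr j) := by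
    intro i j x h
    have := hnd i j
    change (L.bv (.inl i) :: (I i j ++ [L.bv (.inr j)])).Nodup at this
    constructor
    · rintro rfl
      simp [h] at this
    · rintro rfl
      simp [List.nodup_append] at this
      exact this.2.2 _ h rfl
  have hle : ∀ x, D.cnt x ≤ 1 := by
    intro x
    show (∑ i, [L.bv (.inl i)].count x) + (∑ j, [L.bv (.inr j)].count x) +
      ∑ i, ∑ j, (I i j).count x ≤ 1
    by_cases hz : ∃ z, x = L.bv z
    · obtain ⟨z, rfl⟩ := hz
      have h0 : ∀ i j, (I i j).count (L.bv z) = 0 := by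
        intro i j
        rw [List.count_eq_zero]
        intro h
        have h1 := hIm h
        rw [← hpath] at h1
        have h2 := hIne h
        rcases L.link_branch _ _ h1 with rfl | rfl
        · exact h2.1 rfl
        · exact h2.2 rfl
      simp only [h0, List.count_singleton', L.bv_inj.eq_iff]
      rcases z with z | z <;> simp
    · push Not at hz
      have h1 : ∀ z, [L.bv z].count x = 0 := by
        intro z
        rw [List.count_eq_zero]; simpa using hz z
      simp only [h1, Finset.sum_const_zero, zero_add]
      by_cases hx : ∃ i j, x ∈ I i j
      · obtain ⟨i, j, hx⟩ := hx
        have h2 : ∀ i' j', ¬ (i' = i ∧ j' = j) → (I i' j').count x = 0 := by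
          intro i' j' hne
          rw [List.count_eq_zero]
          intro hx'
          have a1 := hIm hx
          have a2 := hIm hx'
          rw [← hpath] at a1 a2
          have := (L.link_meet (hadj i j) (hadj i' j') (by
            intro h
            rcases Sym2.eq_iff.1 h with ⟨h1, h2⟩ | ⟨h1, h2⟩
            · exact hne ⟨(Sum.inl.inj h1).symm, (Sum.inr.inj h2).symm⟩
            · cases h1) x a1 a2).1
          rcases this with h | h
          · exact hz _ h
          · exact hz _ h
        rw [Finset.sum_eq_single i, Finset.sum_eq_single j]
        · refine List.nodup_iff_count_le_one.1 ?_ x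
          have := hnd i j
          exact (I_infix D i j).sublist.nodup this
        · intro j' _ hj; exact h2 i j' (fun h => hj h.2)
        · simp
        · intro i' _ hi
          exact Finset.sum_eq_zero (fun j' _ => h2 i' j' (fun h => hi h.1))
        · simp
      · push Not at hx
        have : ∀ i j, (I i j).count x = 0 := fun i j => List.count_eq_zero.2 (hx i j)
        simp [this]
  have hverts : ∀ v, v ∈ L.verts ↔ D.cnt v ≠ 0 := by
    intro v
    constructor
    · rintro ⟨x, y, h, hv⟩
      match x, y with
      | .inl i, .inr j => exact cnt_of_mem (hpath i j ▸ hv)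
      | .inr j, .inl i =>
        rw [L.link_symm (hadj i j), Walk.support_reverse, List.mem_reverse] at hv
        exact cnt_of_mem (hpath i j ▸ hv)
      | .inl i, .inl j => simp at h
      | .inr i, .inr j => simp at h
    · intro h
      obtain ⟨i, j, h⟩ := mem_of_cnt h
      exact ⟨.inl i, .inr j, hadj i j, hpath i j ▸ h⟩
  obtain ⟨f, hf, ha, hfM⟩ := pm_inv hM
  refine ⟨D, f, ⟨fun i j => ?_, hev, hle⟩, fun v hv => ⟨?_, hf v, ha v⟩⟩
  · rw [← hpath]; exact Walk.isChain_adj_support _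
  · by_contra hc
    obtain ⟨e, ⟨he, ⟨x, y, h, hes⟩, hve⟩, -⟩ := hL (f v) ((hverts _).2 hc)
    obtain ⟨w, rfl⟩ := Sym2.mem_iff_exists.1 hve
    have : v = w := by rw [← hf v]; exact (hfM _ _).1 he
    subst this
    exact (hverts v).1 ⟨x, y, h, Walk.snd_mem_support_of_mem_edges _ hes⟩ hv

theorem cycle4 {c : V} (C : G.Walk c c) (hC : C.IsCycle) (hlen : C.length = 4) :
    ∃ b a' b', C.support = [c, b, a', b', c] ∧ C.edges = [s(c, b), s(b, a'), s(a', b'), s(b', c)] ∧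
      [c, b, a', b'].Nodup ∧ G.Adj c b ∧ G.Adj b a' ∧ G.Adj a' b' ∧ G.Adj b' c := by
  match C, hlen with
  | .cons h1 (.cons h2 (.cons h3 (.cons h4 .nil))), _ =>
    refine ⟨_, _, _, rfl, rfl, ?_, h1, h2, h3, h4⟩
    have := hC.support_nodup
    simp only [Walk.support_cons, Walk.support_nil, List.tail_cons] at this
    simp at this ⊢
    tauto

theorem main4 [Fintype V] (B : SimpleGraph V)
    (hbip : IsBipartite B) (hbrace : IsBrace B) (hK : ContainsK33 B)
    {c : V} (C : B.Walk c c) (hC : C.IsCycle) (hlen : C.length = 4) :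
    ∃ M : Set (Sym2 V), IsPM B M ∧ MConformalCycle B M C ∧
      ∃ L : Bisubdivision K33 B, L.MConformal M ∧ {x | x ∈ C.support} ⊆ L.verts := by
  obtain ⟨L0, M0, hM0, hL0⟩ := hK
  obtain ⟨D0, n0, hD0, hn0⟩ := fromBis L0 hM0 hL0
  obtain ⟨col, hcol⟩ := col_of_bip hbip
  obtain ⟨b, a', b', hs, he, hnd, h1, h2, h3, h4⟩ := cycle4 C hC hlen
  obtain ⟨D, n, π, hD, hn, c1, c2, c3, c4, hm⟩ := finish hcol (ext_of_brace hbrace)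
    (fun x y => hbrace.2.1.2 x trivial y trivial) hD0 hn0 hnd h1 h2 h3 h4
  obtain ⟨f, hf, ha, hfM⟩ := hat hD hn π
  obtain ⟨L, hLv, hLe⟩ := toBis hD
  refine ⟨MS f, MS_pm hf ha, ?_, L, ?_, ?_⟩
  · intro x hx
    refine MS_exact (Es := {e | e ∈ C.edges}) hf ?_
    rw [hs] at hx
    show s(x, f x) ∈ C.edges
    rw [he]
    simp only [List.mem_cons, List.not_mem_nil, or_false] at hx
    simp only [hfM] at hm
    rcases hm with ⟨m1, m2⟩ | ⟨m1, m2⟩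
    · have m3 : f b = c := by rw [← m1, hf]
      have m4 : f b' = a' := by rw [← m2, hf]
      rcases hx with rfl | rfl | rfl | rfl | rfl <;> simp [*]
    · have m3 : f b' = c := by rw [← m1, hf]
      have m4 : f b = a' := by rw [← m2, hf]
      rcases hx with rfl | rfl | rfl | rfl | rfl <;> simp [*]
  · intro v hv
    refine MS_exact hf ?_
    rcases (hfM v (f v)).2 rfl with ⟨h0, -⟩ | ⟨i, j, h⟩
    · exact absurd h0 ((hLv v).1 hv)
    · rcases h.infix with h | h
      · exact hLe _ _ _ _ h
      · rw [Sym2.eq_swap]; exact hLe _ _ _ _ h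
  · intro x hx
    rw [hLv]
    simp only [Set.mem_ofPred_eq, hs, List.mem_cons, List.not_mem_nil, or_false] at hx
    rcases hx with rfl | rfl | rfl | rfl | rfl <;> assumption

end Conv

/-- in a brace containing `K₃,₃`, for every 4-cycle `C` there is a perfect
matching `M` for which `C` is `M`-conformal and an `M`-conformal bisubdivision `L` of
`K₃,₃` with `V(C) ⊆ V(L)`. -/
theorem statement_4 {V : Type*} [Fintype V] [DecidableEq V] (B : SimpleGraph V)
    (hbip : IsBipartite B) (hbrace : IsBrace B) (hK : ContainsK33 B)
    {c : V} (C : B.Walk c c) (hC : C.IsCycle) (hlen : C.length = 4) :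
    ∃ M : Set (Sym2 V), IsPM B M ∧ MConformalCycle B M C ∧
      ∃ L : Bisubdivision K33 B, L.MConformal M ∧ {x | x ∈ C.support} ⊆ L.verts := by
  exact main4 B hbip hbrace hK C hC hlen

end Paper
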